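/- Let Ω = (0,1)×(−1,1). For every u ∈ A ∩ SBV_∞(Ω;ℝ²) there exists a sequence (u_ε)_ε ⊂ W^{1,1}(Ω;ℝ²) with ∫_Ω u_ε dx = ∫_Ω u dx and u_ε ∈ A_ε for all ε, such that u_ε converges weakly* to u in BV(Ω;ℝ²). -/

import Mathlib

open MeasureTheory Set Filter Topology
open scoped ENNReal

noncomputable section

/-- We identify `ℝ²` with maps `Fin 2 → ℝ`; `x 0` is the `x₁` coordinate and
`x 1` the `x₂` coordinate. -/
abbrev V2 := Fin 2 → ℝ

/-- `2 × 2` real matrices. -/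
abbrev Mat2 := Matrix (Fin 2) (Fin 2) ℝ

/-- Proper rotations: `SO(2) = {R : R Rᵀ = 1, det R = 1}`. -/
def SO2 : Set Mat2 := {R | R * R.transpose = 1 ∧ R.det = 1}

def e1 : V2 := ![1, 0]
def e2 : V2 := ![0, 1]

/-- Euclidean norm on `ℝ²`. -/
def vnorm (v : V2) : ℝ := Real.sqrt (v 0 ^ 2 + v 1 ^ 2)

/-- Frobenius norm on `2 × 2` matrices. -/
def mnorm (M : Mat2) : ℝ := Real.sqrt (∑ i, ∑ j, M i j ^ 2)

/-- Euclidean inner product on `ℝ²`. -/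
def dot (v w : V2) : ℝ := ∑ i, v i * w i

/-- Tensor (outer) product `a ⊗ b = a bᵀ` of two vectors. -/
def outer (a b : V2) : Mat2 := Matrix.of fun i j => a i * b j

/-- Identification of `ℝ²` with the Euclidean space `EuclideanSpace ℝ (Fin 2)`. -/
def vToE (v : V2) : EuclideanSpace ℝ (Fin 2) := (EuclideanSpace.equiv (Fin 2) ℝ).symm v

/-- Identification of `2×2` matrices with `EuclideanSpace ℝ (Fin 2 × Fin 2)`
(so that the induced norm is the Frobenius norm). -/
def mToE (M : Mat2) : EuclideanSpace ℝ (Fin 2 × Fin 2) :=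
  (EuclideanSpace.equiv (Fin 2 × Fin 2) ℝ).symm fun p => M p.1 p.2

/-- A vector-valued function of one real variable has bounded variation on `s`
(with respect to the Euclidean norm). -/
def BVv (ψ : ℝ → V2) (s : Set ℝ) : Prop := BoundedVariationOn (fun t => vToE (ψ t)) s

/-- A matrix-valued function of one real variable has bounded variation on `s`
(with respect to the Frobenius norm). -/
def BVm (R : ℝ → Mat2) (s : Set ℝ) : Prop := BoundedVariationOn (fun t => mToE (R t)) s

/-- Componentwise (a.e. pointwise) derivative of a vector-valued function of one variable.
For a one-dimensional `BV` function, the classical derivative exists a.e. and coincides with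
the density of the absolutely continuous part of its distributional derivative
(the approximate derivative). -/
def vecDeriv (ψ : ℝ → V2) (t : ℝ) : V2 := fun i => deriv (fun s => ψ s i) t

/-- Componentwise derivative of a matrix-valued function of one variable. -/
def mDeriv (R : ℝ → Mat2) (t : ℝ) : Mat2 := Matrix.of fun i j => deriv (fun s => R s i j) t

/-- The rigid layers `ε Y_rig = {x : Int.fract (x₂/ε) ∈ [λ, 1)}` (1-periodic extension of
`[0,1) × [λ,1)`, scaled by `ε`). -/
def rigid2 (lam ε : ℝ) : Set V2 := {x | lam ≤ Int.fract (x 1 / ε)}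

/-- The one-dimensional rigid layers `ε I_rig`, where `I_rig` is the 1-periodic extension
of `[λ, 1)`. -/
def rigid1 (lam ε : ℝ) : Set ℝ := {t | lam ≤ Int.fract (t / ε)}

/-- `a_Ω = inf_{x ∈ Ω} x₂`. -/
def aOm (Ω : Set V2) : ℝ := sInf ((fun x : V2 => x 1) '' Ω)

/-- `b_Ω = sup_{x ∈ Ω} x₂`. -/
def bOm (Ω : Set V2) : ℝ := sSup ((fun x : V2 => x 1) '' Ω)

/-- `Ω` is `x₁`-connected: every horizontal slice is a (possibly empty) interval. -/
def X1Connected (Ω : Set V2) : Prop := ∀ t : ℝ, OrdConnected {s : ℝ | ![s, t] ∈ Ω}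

/-- A (nonempty) bounded Lipschitz domain: near every boundary point, after a rotation,
`Ω` is the region above the graph of a Lipschitz function. -/
def IsLipschitzDomain (Ω : Set V2) : Prop :=
  IsOpen Ω ∧ Ω.Nonempty ∧ Bornology.IsBounded Ω ∧
    ∀ x ∈ frontier Ω, ∃ Q ∈ SO2, ∃ L : NNReal, ∃ f : ℝ → ℝ, ∃ r : ℝ, 0 < r ∧
      LipschitzWith L f ∧ ∀ y ∈ Metric.ball x r, (y ∈ Ω ↔ f (Q.mulVec y 0) < Q.mulVec y 1)

/-- Partial derivative `∂_j φ` of a scalar test function. -/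
def pd (j : Fin 2) (φ : V2 → ℝ) (x : V2) : ℝ := fderiv ℝ φ x (Pi.single j 1)

/-- Componentwise integrability of a matrix-valued map. -/
def IntegrableOnM (g : V2 → Mat2) (Ω : Set V2) : Prop :=
  ∀ i j, IntegrableOn (fun x => g x i j) Ω volume

/-- `u ∈ W^{1,1}(Ω;ℝ²)` with weak gradient `gu`, expressed through integration by parts
against smooth compactly supported test functions. -/
structure IsSobolev11On (Ω : Set V2) (u : V2 → V2) (gu : V2 → Mat2) : Prop where
  int_u : IntegrableOn u Ω volume
  int_gu : IntegrableOnM gu Ω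
  ibp : ∀ φ : V2 → ℝ, ContDiff ℝ (⊤ : ℕ∞) φ → HasCompactSupport φ → tsupport φ ⊆ Ω →
    ∀ i j, ∫ x in Ω, u x i * pd j φ x = - ∫ x in Ω, φ x * gu x i j

/-- `u ∈ BV(Ω;ℝ²)`, with distributional derivative `Du = gu · L² + gs · σ`.
Here `gu` is the approximate differential (density of the absolutely continuous part),
`σ = |D^s u|` is the total variation measure of the singular part (a finite measure,
concentrated on `Ω` and singular with respect to Lebesgue measure), and `gs` is the
polar density of the singular part, of unit Frobenius norm `σ`-a.e. -/
structure HasBVDerivOn (Ω : Set V2) (u : V2 → V2) (gu : V2 → Mat2)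
    (σ : Measure V2) (gs : V2 → Mat2) : Prop where
  int_u : IntegrableOn u Ω volume
  int_gu : IntegrableOnM gu Ω
  fin : σ Set.univ ≠ ⊤
  conc : σ Ωᶜ = 0
  perp : σ ⟂ₘ (volume : Measure V2)
  meas_gs : ∀ i j, AEMeasurable (fun x => gs x i j) σ
  unit : ∀ᵐ x ∂σ, mnorm (gs x) = 1
  ibp : ∀ φ : V2 → ℝ, ContDiff ℝ (⊤ : ℕ∞) φ → HasCompactSupport φ → tsupport φ ⊆ Ω →
    ∀ i j, ∫ x in Ω, u x i * pd j φ x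
        = (- ∫ x in Ω, φ x * gu x i j) - ∫ x, φ x * gs x i j ∂σ

/-- `L¹(Ω;ℝ²)` convergence of a sequence. -/
def L1ConvOn (Ω : Set V2) (un : ℕ → V2 → V2) (u : V2 → V2) : Prop :=
  Tendsto (fun n => ∫ x in Ω, vnorm (un n x - u x)) atTop (𝓝 0)

/-- Weak* convergence of the measures `gn n · L²∟Ω` to `gu · L²∟Ω + gs · σ`
in `M(Ω; ℝ^{2×2})`, tested against continuous functions compactly supported in `Ω`. -/
def MeasConv (Ω : Set V2) (gn : ℕ → V2 → Mat2) (gu : V2 → Mat2)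
    (σ : Measure V2) (gs : V2 → Mat2) : Prop :=
  ∀ φ : V2 → ℝ, Continuous φ → HasCompactSupport φ → tsupport φ ⊆ Ω → ∀ i j,
    Tendsto (fun n => ∫ x in Ω, φ x * gn n x i j) atTop
      (𝓝 ((∫ x in Ω, φ x * gu x i j) + ∫ x, φ x * gs x i j ∂σ))

/-- Weak* convergence in `BV(Ω;ℝ²)` of a sequence of `W^{1,1}` maps to a `BV` limit:
`L¹` convergence together with weak* convergence of the derivative measures. -/
def WeakStarToBV (Ω : Set V2) (un : ℕ → V2 → V2) (u : V2 → V2) : Prop :=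
  ∃ gu σ gs, HasBVDerivOn Ω u gu σ gs ∧ L1ConvOn Ω un u ∧
    ∀ gn : ℕ → V2 → Mat2, (∀ n, IsSobolev11On Ω (un n) (gn n)) → MeasConv Ω gn gu σ gs

/-- `u ∈ A_ε`, witnessed by the data `R ∈ L^∞(Ω;SO(2))` and `γ ∈ L¹(Ω)`:
`u ∈ W^{1,1}(Ω;ℝ²)` with `∇u = R (I + γ e₁⊗e₂)` a.e. and `γ = 0` a.e. on `εY_rig ∩ Ω`. -/
structure MemAeps (Ω : Set V2) (lam ε : ℝ) (u : V2 → V2)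
    (R : V2 → Mat2) (γ : V2 → ℝ) : Prop where
  so2 : ∀ᵐ x ∂(volume.restrict Ω), R x ∈ SO2
  int_γ : IntegrableOn γ Ω volume
  sob : IsSobolev11On Ω u fun x => R x * (1 + γ x • outer e1 e2)
  rig : ∀ᵐ x ∂(volume.restrict (Ω ∩ rigid2 lam ε)), γ x = 0

/-- The elastoplastic energy `E_ε(u) = ∫_Ω |γ| dx` for `u ∈ A_ε`, `∞` otherwise,
as an `ℝ≥0∞`-valued functional (the decomposition data is essentially unique). -/
def Eeps (Ω : Set V2) (lam ε : ℝ) (u : V2 → V2) : ℝ≥0∞ :=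
  sInf {c | ∃ R γ, MemAeps Ω lam ε u R γ ∧ c = ∫⁻ x in Ω, ENNReal.ofReal |γ x|}

/-- `u ∈ A` relative to the vertical interval `(a, b)`:
`u ∈ BV(Ω;ℝ²)` with `u(x) = R(x₂)x + ψ(x₂)` a.e., `R ∈ BV(a,b;SO(2))`,
`ψ ∈ BV(a,b;ℝ²)` and `det ∇u = 1` a.e. in `Ω`. -/
def memAOn (Ω : Set V2) (a b : ℝ) (u : V2 → V2) : Prop :=
  ∃ gu σ gs, HasBVDerivOn Ω u gu σ gs ∧
    (∃ R : ℝ → Mat2, ∃ ψ : ℝ → V2, (∀ t ∈ Ioo a b, R t ∈ SO2) ∧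
      BVm R (Ioo a b) ∧ BVv ψ (Ioo a b) ∧
      ∀ᵐ x ∂(volume.restrict Ω), u x = (R (x 1)).mulVec x + ψ (x 1)) ∧
    ∀ᵐ x ∂(volume.restrict Ω), (gu x).det = 1

/-- `u ∈ A`. -/
def memA (Ω : Set V2) (u : V2 → V2) : Prop := memAOn Ω (aOm Ω) (bOm Ω) u

/-- `u ∈ A∥` relative to the vertical interval `(a,b)`:
`u(x) = Rx + ϑ(x₂) R e₁ + c` a.e. with a constant rotation `R ∈ SO(2)`,
`ϑ ∈ BV(a,b)` and `c ∈ ℝ²`. -/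
def memAparOn (Ω : Set V2) (a b : ℝ) (u : V2 → V2) : Prop :=
  ∃ R ∈ SO2, ∃ ϑ : ℝ → ℝ, ∃ c : V2, BoundedVariationOn ϑ (Ioo a b) ∧
    ∀ᵐ x ∂(volume.restrict Ω), u x = R.mulVec x + ϑ (x 1) • R.mulVec e1 + c

/-- `u ∈ A∥`. -/
def memApar (Ω : Set V2) (u : V2 → V2) : Prop := memAparOn Ω (aOm Ω) (bOm Ω) u

/-- The limit energy `E(u) = ∫_Ω |ψ'·Re₁| dx + |D^s u|(Ω)` for `u ∈ A`, `∞` otherwise. -/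
def Efun (Ω : Set V2) (u : V2 → V2) : ℝ≥0∞ :=
  sInf {c | ∃ gu σ gs, HasBVDerivOn Ω u gu σ gs ∧
    ∃ R : ℝ → Mat2, ∃ ψ : ℝ → V2,
      (∀ t ∈ Ioo (aOm Ω) (bOm Ω), R t ∈ SO2) ∧ BVm R (Ioo (aOm Ω) (bOm Ω)) ∧
      BVv ψ (Ioo (aOm Ω) (bOm Ω)) ∧
      (∀ᵐ x ∂(volume.restrict Ω), u x = (R (x 1)).mulVec x + ψ (x 1)) ∧
      (∀ᵐ x ∂(volume.restrict Ω), (gu x).det = 1) ∧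
      c = (∫⁻ x in Ω, ENNReal.ofReal |dot (vecDeriv ψ (x 1)) ((R (x 1)).mulVec e1)|)
          + σ Set.univ}

/-- The limit energy on `A∥`: `E(u) = ∫_Ω |ϑ'(x₂)| dx + |D^s u|(Ω)` for `u ∈ A∥`,
`∞` otherwise. -/
def EparFun (Ω : Set V2) (u : V2 → V2) : ℝ≥0∞ :=
  sInf {c | ∃ gu σ gs, HasBVDerivOn Ω u gu σ gs ∧
    ∃ R ∈ SO2, ∃ ϑ : ℝ → ℝ, ∃ c0 : V2, BoundedVariationOn ϑ (Ioo (aOm Ω) (bOm Ω)) ∧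
      (∀ᵐ x ∂(volume.restrict Ω), u x = R.mulVec x + ϑ (x 1) • R.mulVec e1 + c0) ∧
      c = (∫⁻ x in Ω, ENNReal.ofReal |deriv ϑ (x 1)|) + σ Set.univ}

/-- The regularized limit energy `E^δ(u) = ∫_Ω |ϑ'| dx + |D^s u|(Ω) + δ|Ω|` on `A∥`,
`∞` otherwise. -/
def EDelta (Ω : Set V2) (δ : ℝ) (u : V2 → V2) : ℝ≥0∞ :=
  EparFun Ω u + ENNReal.ofReal δ * volume Ω

/-- `‖v‖_{W^{1,p}(Ω;ℝ²)}^p = ∫_Ω |v|^p + ∫_Ω |Dv|^p` for a map `v` with weak Jacobian `G`. -/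
def Wp1 (p : ℝ) (Ω : Set V2) (v : V2 → V2) (G : V2 → Mat2) : ℝ≥0∞ :=
  (∫⁻ x in Ω, ENNReal.ofReal (vnorm (v x) ^ p)) + ∫⁻ x in Ω, ENNReal.ofReal (mnorm (G x) ^ p)

/-- The regularized energy
`E^δ_ε(u) = ∫_Ω |γ| dx + δ ‖∂₁ u‖_{W^{1,p}(Ω;ℝ²)}^p` for `u ∈ A_ε` with
`∂₁u = R e₁ ∈ W^{1,p}(Ω;ℝ²)`, and `∞` otherwise. -/
def EepsDelta (Ω : Set V2) (lam ε δ p : ℝ) (u : V2 → V2) : ℝ≥0∞ :=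
  sInf {c | ∃ R γ, MemAeps Ω lam ε u R γ ∧
    ∃ G : V2 → Mat2, IsSobolev11On Ω (fun x => (R x).mulVec e1) G ∧
      c = (∫⁻ x in Ω, ENNReal.ofReal |γ x|) +
          ENNReal.ofReal δ * Wp1 p Ω (fun x => (R x).mulVec e1) G}

/-- `x` is an approximate jump point of `u`, with one-sided approximate limits `a ≠ b`
relative to a unit normal `ν`. -/
def JumpPt (u : V2 → V2) (x : V2) : Prop :=
  ∃ a b ν : V2, a ≠ b ∧ vnorm ν = 1 ∧
    Tendsto (fun r : ℝ =>
        (∫⁻ z in {z | z ∈ Metric.ball x r ∧ 0 < dot (z - x) ν},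
            ENNReal.ofReal (vnorm (u z - a))) / volume (Metric.ball x r))
      (𝓝[>] 0) (𝓝 0) ∧
    Tendsto (fun r : ℝ =>
        (∫⁻ z in {z | z ∈ Metric.ball x r ∧ dot (z - x) ν < 0},
            ENNReal.ofReal (vnorm (u z - b))) / volume (Metric.ball x r))
      (𝓝[>] 0) (𝓝 0)

/-- The jump set `J_u` of `u` in `Ω`. -/
def jumpSet (Ω : Set V2) (u : V2 → V2) : Set V2 := {x ∈ Ω | JumpPt u x}

/-- `u ∈ SBV_∞(Ω;ℝ²)`: `u ∈ BV` with singular part concentrated on the jump set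
(no Cantor part), `∇u ∈ L^∞(Ω;ℝ^{2×2})` and `H¹(J_u) < ∞`. -/
def memSBVinf (Ω : Set V2) (u : V2 → V2) : Prop :=
  ∃ gu σ gs, HasBVDerivOn Ω u gu σ gs ∧
    σ {x | ¬ JumpPt u x} = 0 ∧
    (∃ M : ℝ, ∀ᵐ x ∂(volume.restrict Ω), mnorm (gu x) ≤ M) ∧
    Measure.hausdorffMeasure (1 : ℝ) (jumpSet Ω u) ≠ ⊤

/-- Piecewise constant functions on `(a,b)` with finitely many jumps
(the class `PC(a,b)`). -/
def PCOn {α : Type*} (a b : ℝ) (f : ℝ → α) : Prop :=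
  ∃ S : Finset ℝ, ∀ s₁ ∈ Ioo a b, ∀ s₂ ∈ Ioo a b, s₁ ≤ s₂ →
    (∀ r ∈ S, r ∉ Icc s₁ s₂) → f s₁ = f s₂

/-- Piecewise Lipschitz functions on `(a,b)` with finitely many jump points:
the class `SBV_∞(a,b;ℝ²)` of one-dimensional special functions of bounded variation
with bounded derivative and finitely many jumps. -/
def PLipOn (a b : ℝ) (f : ℝ → V2) : Prop :=
  ∃ S : Finset ℝ, ∃ L : ℝ, 0 ≤ L ∧ ∀ s₁ ∈ Ioo a b, ∀ s₂ ∈ Ioo a b, s₁ ≤ s₂ →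
    (∀ r ∈ S, r ∉ Icc s₁ s₂) → vnorm (f s₂ - f s₁) ≤ L * (s₂ - s₁)

/-- The rectangle `Ω = (0,1) × (−1,1)`. -/
def Rect : Set V2 := {x | x 0 ∈ Ioo (0:ℝ) 1 ∧ x 1 ∈ Ioo (-1:ℝ) 1}

/-- `f ∈ W^{1,1}(a,b)`: `f` has an integrable weak derivative on `(a,b)`
(absolutely continuous representative). -/
def IsW11On (f : ℝ → ℝ) (a b : ℝ) : Prop :=
  ∃ g : ℝ → ℝ, IntegrableOn g (Ioo a b) volume ∧
    ∀ s ∈ Ioo a b, ∀ t ∈ Ioo a b, f t - f s = ∫ r in s..t, g r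

/-! ### Part B: construction -/

/-- Classical partial derivatives. -/
def gv (v : V2 → V2) (x : V2) : Mat2 :=
  Matrix.of fun i j => lineDeriv ℝ (fun y => v y i) x (Pi.single j 1)

def crs (a b : V2) : ℝ := a 0 * b 1 - a 1 * b 0
def dt (a b : V2) : ℝ := a 0 * b 0 + a 1 * b 1
def nrm (a : V2) : V2 := ![-a 1, a 0]

def gam (v : V2 → V2) (x : V2) : ℝ := gv v x 0 0 * gv v x 0 1 + gv v x 1 0 * gv v x 1 1

def Good (lam ε : ℝ) (v : V2 → V2) (x : V2) : Prop :=
  gv v x 0 0 ^ 2 + gv v x 1 0 ^ 2 = 1 ∧ gv v x 0 0 * gv v x 1 1 - gv v x 1 0 * gv v x 0 1 = 1 ∧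
  (x ∈ rigid2 lam ε → gam v x = 0)

structure Reach (lam ε : ℝ) (Q : V2 → V2 → Prop) (T : ℝ) (a w : V2) (K : ℝ)
    (v : V2 → V2) : Prop where
  lip : ∃ C, LipschitzWith C v
  aff : ∀ x : V2, T ≤ x 1 → 0 ≤ x 0 → x 0 ≤ 1 → v x = x 0 • a + w
  good : ∀ᵐ x, x ∈ Rect → x 1 < T → Good lam ε v x
  cost : ∫⁻ x in Rect ∩ {x | x 1 < T}, ENNReal.ofReal |gam v x| ≤ ENNReal.ofReal K
  near : ∀ x ∈ Rect, x 1 < T → Q x (v x)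

lemma gv_congr {v v' : V2 → V2} {x : V2} (h : v =ᶠ[𝓝 x] v') : gv v x = gv v' x := by
  ext i j
  simp only [gv, Matrix.of_apply]
  apply Filter.EventuallyEq.lineDeriv_eq
  filter_upwards [h] with y hy
  rw [hy]

lemma gv_affine (p r c : V2) (x : V2) (i : Fin 2) :
    gv (fun y => y 0 • p + y 1 • r + c) x i 0 = p i ∧
    gv (fun y => y 0 • p + y 1 • r + c) x i 1 = r i := by
  have key : ∀ j : Fin 2, HasLineDerivAt ℝ (fun y : V2 => (y 0 • p + y 1 • r + c) i)
      ((Pi.single j 1 : V2) 0 * p i + (Pi.single j 1 : V2) 1 * r i) x (Pi.single j 1) := by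
    intro j
    have h0 : HasFDerivAt (fun y : V2 => (y 0 • p + y 1 • r + c) i)
      ((p i) • (ContinuousLinearMap.proj (R := ℝ) (φ := fun _ : Fin 2 => ℝ) 0) +
        (r i) • (ContinuousLinearMap.proj (R := ℝ) (φ := fun _ : Fin 2 => ℝ) 1)) x := by
      have := (((p i) • (ContinuousLinearMap.proj (R := ℝ) (φ := fun _ : Fin 2 => ℝ) 0) +
        (r i) • (ContinuousLinearMap.proj (R := ℝ) (φ := fun _ : Fin 2 => ℝ) 1)).hasFDerivAt (x := x)).add_const (c i)
      refine this.congr_of_eventuallyEq (Eventually.of_forall fun y => ?_)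
      simp; ring
    have := h0.hasLineDerivAt (Pi.single j 1)
    have e : ((Pi.single j 1 : V2) 0 * p i + (Pi.single j 1 : V2) 1 * r i) =
        ((p i) • (ContinuousLinearMap.proj (R := ℝ) (φ := fun _ : Fin 2 => ℝ) 0) +
        (r i) • (ContinuousLinearMap.proj (R := ℝ) (φ := fun _ : Fin 2 => ℝ) 1)) (Pi.single j 1) := by
      simp only [add_apply, smul_apply,
        ContinuousLinearMap.proj_apply, smul_eq_mul]
      ring
    rw [e]
    exact this
  constructor
  · have := (key 0).lineDeriv; simpa [gv] using this
  · have := (key 1).lineDeriv; simpa [gv] using this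

lemma rect_meas : MeasurableSet Rect := by
  unfold Rect
  exact ((measurable_pi_apply 0) measurableSet_Ioo).inter ((measurable_pi_apply 1) measurableSet_Ioo)

lemma rect_open : IsOpen Rect := by
  unfold Rect
  exact (isOpen_Ioo.preimage (continuous_apply 0)).inter (isOpen_Ioo.preimage (continuous_apply 1))

lemma null_line (p q r : ℝ) (h : p ≠ 0 ∨ q ≠ 0) : ∀ᵐ x : V2, p * x 0 + q * x 1 ≠ r := by
  let A : V2 →ₗ[ℝ] ℝ := p • LinearMap.proj 0 + q • LinearMap.proj 1
  let S : AffineSubspace ℝ V2 := (AffineSubspace.mk' r ⊥).comap A.toAffineMap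
  have hS : S ≠ ⊤ := by
    intro htop
    have m : ∀ x : V2, x ∈ S := fun x => by rw [htop]; trivial
    simp [S, A] at m
    have m0 := m 0
    have m1 := m ![1,0]
    have m2 := m ![0,1]
    simp [sub_eq_zero] at m0 m1 m2
    rcases h with h | h <;> apply h <;> linarith
  have := Measure.addHaar_affineSubspace (volume : Measure V2) S hS
  rw [ae_iff]
  refine measure_mono_null ?_ this
  intro x hx
  simp only [ne_eq, not_not, mem_ofPred_eq] at hx
  simp [S, A, sub_eq_zero, hx]

lemma vol_strip (T h : ℝ) (hh : 0 < h) :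
    volume (Rect ∩ {x : V2 | T < x 1 ∧ x 1 < T + h}) ≤ ENNReal.ofReal h := by
  have : Rect ∩ {x : V2 | T < x 1 ∧ x 1 < T + h} ⊆ Set.pi univ ![Ioo (0:ℝ) 1, Ioo T (T+h)] := by
    intro x hx
    simp only [Set.mem_pi, mem_univ, forall_const, Fin.forall_fin_two]
    exact ⟨hx.1.1, hx.2⟩
  refine (measure_mono this).trans ?_
  rw [volume_pi_pi]
  simp [Fin.prod_univ_two]

lemma lip_aux (T h : ℝ) (d q : V2) (v : V2 → V2) (hv : ∃ C, LipschitzWith C v) :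
    ∃ C, LipschitzWith C (fun x : V2 => v x + (max 0 (min 1 ((x 1 - T) / h))) • d +
      (max 0 (max 0 (min 1 ((x 1 - T) / h)) - x 0)) • q) := by
  obtain ⟨C, hC⟩ := hv
  have e0 : LipschitzWith 1 (fun x : V2 => x 0) := LipschitzWith.eval 0
  have e1 : LipschitzWith 1 (fun x : V2 => x 1) := LipschitzWith.eval 1
  have l1 : ∃ D, LipschitzWith D (fun x : V2 => (x 1 - T) / h) := by
    have := (ContinuousLinearMap.toSpanSingleton ℝ (h⁻¹)).lipschitz.comp
      (e1.sub (LipschitzWith.const T))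
    have e : (fun x : V2 => (x 1 - T) / h) =
        (ContinuousLinearMap.toSpanSingleton ℝ (h⁻¹)) ∘ fun x : V2 => x 1 - T := by
      funext x
      simp [div_eq_mul_inv]
    exact ⟨_, e ▸ this⟩
  obtain ⟨D, l1⟩ := l1
  have l2 := (l1.const_min 1).const_max 0
  have l3 := (l2.sub e0).const_max 0
  have l4 := (ContinuousLinearMap.toSpanSingleton ℝ d).lipschitz.comp l2
  have l5 := (ContinuousLinearMap.toSpanSingleton ℝ q).lipschitz.comp l3
  exact ⟨_, (hC.add l4).add l5⟩

theorem reach_step {lam ε : ℝ} {Q : V2 → V2 → Prop} {T : ℝ} {a w : V2} {K : ℝ} {v : V2 → V2}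
    (H : Reach lam ε Q T a w K v) (h : ℝ) (hh : 0 < h) (a' w' : V2) (κ : ℝ) (hK : 0 ≤ K)
    (ha : dt a a = 1) (ha' : dt a' a' = 1)
    (c1 : crs a (w' - w + a') = h) (c2 : crs a' (w' - w) = h)
    (k1 : |dt a (w' - w - a + a')| ≤ κ) (k2 : |dt a' (w' - w)| ≤ κ)
    (hrig : ∀ x ∈ Rect, T < x 1 → x 1 < T + h → x ∈ rigid2 lam ε →
      dt a (w' - w - a + a') = 0 ∧ dt a' (w' - w) = 0)
    (hQ : ∀ x ∈ Rect, T ≤ x 1 → x 1 < T + h →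
      Q x (x 0 • a + w + ((x 1 - T) / h) • (w' - w - a + a') +
        (max 0 ((x 1 - T) / h - x 0)) • (a - a'))) :
    ∃ v', Reach lam ε Q (T + h) a' w' (K + κ) v' := by
  set d := w' - w - a + a' with hd
  set q := a - a' with hq
  let v' : V2 → V2 := fun x => v x + (max 0 (min 1 ((x 1 - T) / h))) • d +
      (max 0 (max 0 (min 1 ((x 1 - T) / h)) - x 0)) • q
  have hlow : ∀ x : V2, 0 ≤ x 0 → x 1 ≤ T → v' x = v x := by
    intro x h0 h1
    have : (x 1 - T) / h ≤ 0 := div_nonpos_of_nonpos_of_nonneg (by linarith) hh.le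
    have : max 0 (min 1 ((x 1 - T) / h)) = 0 := by
      apply max_eq_left; exact (min_le_right _ _).trans this
    simp only [v', this]
    rw [max_eq_left (by linarith)]; simp
  have hmid : ∀ x : V2, 0 ≤ x 0 → x 0 ≤ 1 → T ≤ x 1 → x 1 ≤ T + h →
      v' x = x 0 • a + w + ((x 1 - T) / h) • d + (max 0 ((x 1 - T) / h - x 0)) • q := by
    intro x h0 h0' h1 h2
    have e1 : 0 ≤ (x 1 - T) / h := div_nonneg (by linarith) hh.le
    have e2 : (x 1 - T) / h ≤ 1 := by rw [div_le_one hh]; linarith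
    have : max 0 (min 1 ((x 1 - T) / h)) = (x 1 - T) / h := by
      rw [min_eq_right e2, max_eq_right e1]
    simp only [v', this]
    rw [H.aff x h1 h0 h0']
  have hcoord : ∀ i : Fin 2, Continuous (fun y : V2 => y i) := fun i => continuous_apply i
  -- gradient below
  have glow : ∀ x ∈ Rect, x 1 < T → gv v' x = gv v x := by
    intro x hx hT
    apply gv_congr
    filter_upwards [(hcoord 0).continuousAt.eventually (lt_mem_nhds hx.1.1),
      (hcoord 1).continuousAt.eventually (gt_mem_nhds hT)] with y h0 h1
    exact hlow y h0.le h1.le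
  have gmidA : ∀ x ∈ Rect, T < x 1 → x 1 < T + h → (x 1 - T) / h < x 0 →
      ∀ i, gv v' x i 0 = a i ∧ gv v' x i 1 = d i / h := by
    intro x hx hT hT' hs i
    have : gv v' x = gv (fun y => y 0 • a + y 1 • (h⁻¹ • d) + (w - (T / h) • d)) x := by
      apply gv_congr
      have cc : Continuous (fun y : V2 => (y 1 - T) / h - y 0) := by fun_prop
      filter_upwards [(hcoord 0).continuousAt.eventually (lt_mem_nhds hx.1.1),
        (hcoord 0).continuousAt.eventually (gt_mem_nhds hx.1.2),
        (hcoord 1).continuousAt.eventually (gt_mem_nhds hT'),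
        (hcoord 1).continuousAt.eventually (lt_mem_nhds hT),
        cc.continuousAt.eventually (gt_mem_nhds (sub_neg.2 hs))] with y h0 h1 h2 h3 h4
      rw [hmid y h0.le h1.le h3.le h2.le, max_eq_left h4.le]
      ext i
      simp
      field_simp
      ring
    rw [this]
    refine ⟨(gv_affine _ _ _ x i).1, ((gv_affine _ _ _ x i).2).trans ?_⟩
    simp; field_simp
  have gmidB : ∀ x ∈ Rect, T < x 1 → x 1 < T + h → x 0 < (x 1 - T) / h →
      ∀ i, gv v' x i 0 = a' i ∧ gv v' x i 1 = (w' - w) i / h := by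
    intro x hx hT hT' hs i
    have : gv v' x = gv (fun y => y 0 • a' + y 1 • (h⁻¹ • (w' - w)) +
        (w - (T / h) • (w' - w))) x := by
      apply gv_congr
      have cc : Continuous (fun y : V2 => (y 1 - T) / h - y 0) := by fun_prop
      filter_upwards [(hcoord 0).continuousAt.eventually (lt_mem_nhds hx.1.1),
        (hcoord 0).continuousAt.eventually (gt_mem_nhds hx.1.2),
        (hcoord 1).continuousAt.eventually (gt_mem_nhds hT'),
        (hcoord 1).continuousAt.eventually (lt_mem_nhds hT),
        cc.continuousAt.eventually (lt_mem_nhds (sub_pos.2 hs))] with y h0 h1 h2 h3 h4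
      rw [hmid y h0.le h1.le h3.le h2.le, max_eq_right h4.le]
      ext i
      simp [hd, hq]
      field_simp
      ring
    rw [this]
    refine ⟨(gv_affine _ _ _ x i).1, ((gv_affine _ _ _ x i).2).trans ?_⟩
    simp; field_simp
  have line1 := null_line 0 1 T (Or.inr one_ne_zero)
  have line2 := null_line h (-1) (-T) (Or.inl hh.ne')
  have c1' : a 0 * d 1 - a 1 * d 0 = h := by
    have : crs a (w' - w + a') = a 0 * d 1 - a 1 * d 0 := by simp [crs, hd]; ring
    rw [← this, c1]
  simp only [dt, crs] at ha ha' c1 c2 k1 k2 hrig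
  have strip : ∀ᵐ x : V2, x ∈ Rect → T ≤ x 1 → x 1 < T + h →
      T < x 1 ∧ Good lam ε v' x ∧ |gam v' x| ≤ κ / h := by
    filter_upwards [line1, line2] with x l1 l2 hx hT hT'
    have hT1 : T < x 1 := lt_of_le_of_ne hT (fun e => l1 (by rw [← e]; ring))
    have hne : (x 1 - T) / h ≠ x 0 := by
      intro e; apply l2; rw [← e]; field_simp; ring
    refine ⟨hT1, ?_⟩
    rcases lt_or_gt_of_ne hne with hs | hs
    · have g0 := gmidA x hx hT1 hT' hs 0
      have g1 := gmidA x hx hT1 hT' hs 1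
      have eg : gam v' x = (a 0 * d 0 + a 1 * d 1) / h := by
        rw [gam, g0.1, g0.2, g1.1, g1.2]; ring
      refine ⟨⟨?_, ?_, ?_⟩, ?_⟩
      · rw [g0.1, g1.1]; linarith
      · rw [g0.1, g0.2, g1.1, g1.2]; field_simp; linarith
      · intro hr; rw [eg, (hrig x hx hT1 hT' hr).1, zero_div]
      · rw [eg, abs_div, abs_of_pos hh]; gcongr
    · have g0 := gmidB x hx hT1 hT' hs 0
      have g1 := gmidB x hx hT1 hT' hs 1
      have eg : gam v' x = (a' 0 * (w' - w) 0 + a' 1 * (w' - w) 1) / h := by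
        rw [gam, g0.1, g0.2, g1.1, g1.2]; ring
      refine ⟨⟨?_, ?_, ?_⟩, ?_⟩
      · rw [g0.1, g1.1]; linarith
      · rw [g0.1, g0.2, g1.1, g1.2]; field_simp; linarith
      · intro hr; rw [eg, (hrig x hx hT1 hT' hr).2, zero_div]
      · rw [eg, abs_div, abs_of_pos hh]; gcongr
  refine ⟨v', lip_aux T h d q v H.lip, ?_, ?_, ?_, ?_⟩
  · intro x hT h0 h1
    have e2 : 1 ≤ (x 1 - T) / h := by rw [le_div_iff₀ hh]; linarith
    have : max 0 (min 1 ((x 1 - T) / h)) = 1 := by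
      rw [min_eq_left e2, max_eq_right zero_le_one]
    simp only [v', this]
    rw [H.aff x (by linarith) h0 h1, max_eq_right (by linarith)]
    ext i; simp [hd, hq]; ring
  · filter_upwards [H.good, strip] with x g s hx hT
    rcases lt_or_ge (x 1) T with h1 | h1
    · have := g hx h1
      simpa only [Good, gam, glow x hx h1] using this
    · exact (s hx h1 hT).2.1
  · have hκ : 0 ≤ κ := (abs_nonneg _).trans k1
    have sub : Rect ∩ {x : V2 | x 1 < T + h} ⊆ (Rect ∩ {x : V2 | x 1 < T}) ∪
        ((Rect ∩ {x : V2 | T < x 1 ∧ x 1 < T + h}) ∪ {x : V2 | ¬ (0 * x 0 + 1 * x 1 ≠ T)}) := by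
      intro x hx
      rcases lt_trichotomy (x 1) T with h1 | h1 | h1
      · exact Or.inl ⟨hx.1, h1⟩
      · right; right; simp [h1]
      · exact Or.inr (Or.inl ⟨hx.1, h1, hx.2⟩)
    refine (lintegral_mono_set sub).trans ((lintegral_union_le _ _ _).trans ?_)
    rw [ENNReal.ofReal_add hK hκ]
    refine add_le_add ?_ ((lintegral_union_le _ _ _).trans ?_)
    · refine le_trans (le_of_eq ?_) H.cost
      apply setLIntegral_congr_fun (rect_meas.inter ((measurable_pi_apply 1) measurableSet_Iio))
      intro x hx
      simp only [gam, glow x hx.1 hx.2]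
    · have z : volume {x : V2 | ¬ (0 * x 0 + 1 * x 1 ≠ T)} = 0 := line1
      rw [setLIntegral_measure_zero _ _ z, add_zero]
      have mm : MeasurableSet (Rect ∩ {x : V2 | T < x 1 ∧ x 1 < T + h}) :=
        rect_meas.inter ((measurable_pi_apply 1) measurableSet_Ioo)
      calc _ ≤ ∫⁻ x in Rect ∩ {x : V2 | T < x 1 ∧ x 1 < T + h}, ENNReal.ofReal (κ / h) := by
            apply setLIntegral_mono_ae measurable_const.aemeasurable
            filter_upwards [strip] with x s hx
            exact ENNReal.ofReal_le_ofReal (s hx.1 hx.2.1.le hx.2.2).2.2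
        _ ≤ ENNReal.ofReal (κ / h) * ENNReal.ofReal h := by
            rw [setLIntegral_const]; gcongr; exact vol_strip T h hh
        _ = ENNReal.ofReal κ := by
            rw [← ENNReal.ofReal_mul (by positivity)]; congr 1; field_simp
  · intro x hx hT
    rcases lt_or_ge (x 1) T with h1 | h1
    · rw [hlow x hx.1.1.le h1.le]; exact H.near x hx h1
    · rw [hmid x hx.1.1.le hx.1.2.le h1 hT.le]; exact hQ x hx h1 hT

lemma nrm_zero (a : V2) : nrm a 0 = - a 1 := rfl
lemma nrm_one (a : V2) : nrm a 1 = a 0 := rfl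

lemma unit_norm {a : V2} (h : dt a a = 1) : ‖a‖ ≤ 1 := by
  rw [pi_norm_le_iff_of_nonneg zero_le_one]
  intro i
  simp only [dt] at h
  rw [Real.norm_eq_abs, abs_le_one_iff_mul_self_le_one]
  fin_cases i <;> simp <;> nlinarith [mul_self_nonneg (a 0), mul_self_nonneg (a 1)]

lemma nrm_norm (a : V2) : ‖nrm a‖ ≤ ‖a‖ := by
  rw [pi_norm_le_iff_of_nonneg (norm_nonneg _)]
  intro i
  fin_cases i
  · simpa [nrm] using norm_le_pi_norm a 1
  · simpa [nrm] using norm_le_pi_norm a 0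

lemma dt_le {a : V2} (h : dt a a = 1) (b : V2) : |dt a b| ≤ 2 * ‖b‖ := by
  have h1 := unit_norm h
  have a0 := (norm_le_pi_norm a 0).trans h1
  have a1 := (norm_le_pi_norm a 1).trans h1
  have b0 := norm_le_pi_norm b 0
  have b1 := norm_le_pi_norm b 1
  simp only [Real.norm_eq_abs] at a0 a1 b0 b1
  unfold dt
  refine (abs_add_le _ _).trans ?_
  rw [abs_mul, abs_mul]
  nlinarith [abs_nonneg (a 0), abs_nonneg (a 1), abs_nonneg (b 0), abs_nonneg (b 1)]

lemma crs_le {a : V2} (h : dt a a = 1) (b : V2) : |crs a b| ≤ 2 * ‖b‖ := by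
  have h' : dt (nrm a) (nrm a) = 1 := by simp [dt, nrm] at *; linarith
  have := dt_le h' b
  have e : crs a b = dt (nrm a) b := by simp [crs, dt, nrm]; ring
  rwa [e]

lemma dt_nrm {a : V2} (h : dt a a = 1) : dt (nrm a) (nrm a) = 1 := by
  simp [dt, nrm] at *; linarith

/-- step with crude bounds -/
lemma reach_step' {lam ε : ℝ} {Q : V2 → V2 → Prop} {T : ℝ} {a w : V2} {K : ℝ} {v : V2 → V2}
    (H : Reach lam ε Q T a w K v) (h : ℝ) (hh : 0 < h) (a' w' : V2) (B : ℝ) (hK : 0 ≤ K)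
    (ha : dt a a = 1) (ha' : dt a' a' = 1) (hw : ‖w‖ ≤ B) (hw' : ‖w'‖ ≤ B)
    (c1 : crs a (w' - w + a') = h) (c2 : crs a' (w' - w) = h)
    (hrig : ∀ x ∈ Rect, T < x 1 → x 1 < T + h → x ∉ rigid2 lam ε)
    (hQ : ∀ x ∈ Rect, T ≤ x 1 → x 1 < T + h → ∀ y, ‖y‖ ≤ 3 * B + 5 → Q x y) :
    ∃ v', Reach lam ε Q (T + h) a' w' (K + (4 * B + 4)) v' := by
  have na := unit_norm ha
  have na' := unit_norm ha'
  have n1 : ‖w' - w - a + a'‖ ≤ 2 * B + 2 := by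
    have := norm_add_le (w' - w - a) a'
    have := norm_sub_le (w' - w) a
    have := norm_sub_le w' w
    linarith
  have n2 : ‖w' - w‖ ≤ 2 * B := by
    have := norm_sub_le w' w
    linarith
  refine reach_step H h hh a' w' _ hK ha ha' c1 c2 ?_ ?_ ?_ ?_
  · have := dt_le ha (w' - w - a + a'); linarith
  · have := dt_le ha' (w' - w); linarith
  · intro x hx h1 h2 h3; exact absurd h3 (hrig x hx h1 h2)
  · intro x hx h1 h2
    apply hQ x hx h1 h2
    have e1 : 0 ≤ (x 1 - T) / h := div_nonneg (by linarith) hh.le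
    have e2 : (x 1 - T) / h ≤ 1 := by rw [div_le_one hh]; linarith
    set s := (x 1 - T) / h
    have x0 := hx.1.1
    have x1 := hx.1.2
    have m1 : ‖x 0 • a‖ ≤ 1 := by
      rw [norm_smul, Real.norm_eq_abs, abs_of_pos x0]; nlinarith [norm_nonneg a]
    have m2 : ‖s • (w' - w - a + a')‖ ≤ 2 * B + 2 := by
      rw [norm_smul, Real.norm_eq_abs, abs_of_nonneg e1]; nlinarith [norm_nonneg (w' - w - a + a')]
    have m3 : ‖(max 0 (s - x 0)) • (a - a')‖ ≤ 2 := by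
      have p1 : 0 ≤ max 0 (s - x 0) := le_max_left _ _
      have p2 : max 0 (s - x 0) ≤ 1 := max_le zero_le_one (by linarith)
      rw [norm_smul, Real.norm_eq_abs, abs_of_nonneg p1]
      have := norm_sub_le a a'
      nlinarith [norm_nonneg (a - a')]
    have t1 := norm_add_le (x 0 • a + w + s • (w' - w - a + a')) ((max 0 (s - x 0)) • (a - a'))
    have t2 := norm_add_le (x 0 • a + w) (s • (w' - w - a + a'))
    have t3 := norm_add_le (x 0 • a) w
    linarith

/-- the target of a rotation step -/
lemma rot_alg {a a' : V2} (ha : dt a a = 1) (ha' : dt a' a' = 1) (hp : 0 ≤ dt a a') (h : ℝ) (hh : 0 < h) :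
    ∃ z : V2, ‖z‖ ≤ 2 * h + 1 ∧ crs a (z + a') = h ∧ crs a' z = h := by
  have hcd : crs a a' ^ 2 + dt a a' ^ 2 = 1 := by
    have : crs a a' ^ 2 + dt a a' ^ 2 = dt a a * dt a' a' := by simp [crs, dt]; ring
    rw [this, ha, ha']; norm_num
  set τ := - crs a a' / (1 + dt a a') with hτ
  have hτ1 : τ * (1 + dt a a') = - crs a a' := by rw [hτ]; field_simp
  have hτ2 : |τ| ≤ 1 := by
    rw [hτ, abs_div, abs_neg, abs_of_pos (by linarith : 0 < 1 + dt a a'), div_le_one (by linarith)]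
    have : |crs a a'| ≤ 1 := by
      rw [abs_le_one_iff_mul_self_le_one]; nlinarith [sq_nonneg (dt a a')]
    linarith
  refine ⟨h • nrm a' - (h * τ + 1) • a', ?_, ?_, ?_⟩
  · have t1 := norm_sub_le (h • nrm a') ((h * τ + 1) • a')
    rw [norm_smul, norm_smul, Real.norm_eq_abs, Real.norm_eq_abs, abs_of_pos hh] at t1
    have := unit_norm ha'
    have := nrm_norm a'
    have t2 := abs_add_le (h * τ) 1
    rw [abs_mul, abs_of_pos hh, abs_one] at t2
    have t3 : |h * τ + 1| ≤ h + 1 := by nlinarith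
    have t4 : |h * τ + 1| * ‖a'‖ ≤ h + 1 := by nlinarith [abs_nonneg (h * τ + 1), norm_nonneg a']
    nlinarith [norm_nonneg (nrm a')]
  · have e : crs a (h • nrm a' - (h * τ + 1) • a' + a') = h * (dt a a' - τ * crs a a') := by
      simp [crs, dt, nrm_zero, nrm_one]; ring
    rw [e]
    have : (1 + dt a a') * (dt a a' - τ * crs a a') = 1 + dt a a' := by
      have : (1 + dt a a') * (dt a a' - τ * crs a a') = (1 + dt a a') * dt a a' - (τ * (1 + dt a a')) * crs a a' := by ring
      rw [this, hτ1]; nlinarith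
    have h2 : dt a a' - τ * crs a a' = 1 := by
      have := mul_left_cancel₀ (by linarith : (1 + dt a a') ≠ 0) (this.trans (mul_one _).symm)
      exact this
    rw [h2, mul_one]
  · have e : crs a' (h • nrm a' - (h * τ + 1) • a') = h * dt a' a' := by
      simp [crs, dt, nrm]; ring
    rw [e, ha', mul_one]

lemma reach_jump {lam ε : ℝ} {Q : V2 → V2 → Prop} {T : ℝ} {a w : V2} {K : ℝ} {v : V2 → V2}
    (H : Reach lam ε Q T a w K v) (L : ℝ) (hL : 0 < L) (a' w' : V2) (B : ℝ) (hK : 0 ≤ K)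
    (ha : dt a a = 1) (ha' : dt a' a' = 1) (hw : ‖w‖ ≤ B) (hw' : ‖w'‖ ≤ B) (B' : ℝ)
    (hB' : B' = 5 * B + 4 * L + 5)
    (hrig : ∀ x ∈ Rect, T < x 1 → x 1 < T + L → x ∉ rigid2 lam ε)
    (hQ : ∀ x ∈ Rect, T ≤ x 1 → x 1 < T + L → ∀ y, ‖y‖ ≤ 3 * B' + 5 → Q x y) :
    ∃ v', Reach lam ε Q (T + L) a' w' (K + 4 * (4 * B' + 4)) v' := by
  have hB : 0 ≤ B := (norm_nonneg _).trans hw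
  obtain ⟨h, rfl⟩ : ∃ h, L = 4 * h := ⟨L / 4, by ring⟩
  have hh : 0 < h := by linarith
  obtain ⟨σ, hσ, hσ'⟩ : ∃ σ : ℝ, σ * σ = 1 ∧ 0 ≤ dt (σ • nrm a) a' := by
    rcases le_total 0 (dt (nrm a) a') with h | h
    · exact ⟨1, by norm_num, by simpa using h⟩
    · refine ⟨-1, by norm_num, ?_⟩
      have : dt ((-1 : ℝ) • nrm a) a' = - dt (nrm a) a' := by simp [dt]; ring
      rw [this]; linarith
  have hσa : |σ| = 1 := by
    have : |σ| * |σ| = 1 := by rw [← abs_mul, hσ, abs_one]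
    nlinarith [abs_nonneg σ]
  set b := σ • nrm a with hb
  have hbb : dt b b = 1 := by
    have : dt b b = σ * σ * dt (nrm a) (nrm a) := by simp [dt, hb]; ring
    rw [this, hσ, dt_nrm ha, one_mul]
  have hab : dt a b = 0 := by simp [dt, hb, nrm]; ring
  have hba : crs b a = - σ := by
    have : crs b a = - σ * dt a a := by simp [crs, dt, hb, nrm]; ring
    rw [this, ha]; ring
  obtain ⟨z1, nz1, z1c, z1d⟩ := rot_alg ha hbb hab.ge h hh
  obtain ⟨z2, nz2, z2c, z2d⟩ := rot_alg hbb ha' hσ' h hh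
  set w3 := w' - z2 with hw3
  set w20 := w + h • nrm a + z1 with hw20
  set α := σ * (h - crs b (w3 - w20)) with hα
  set w1 := w + h • nrm a + α • a with hw1
  set w2 := w1 + z1 with hw2
  have nna : ‖h • nrm a‖ ≤ h := by
    rw [norm_smul, Real.norm_eq_abs, abs_of_pos hh]
    have := nrm_norm a; have := unit_norm ha
    nlinarith
  have n3 : ‖w3‖ ≤ B + 2 * h + 1 := by have := norm_sub_le w' z2; linarith
  have n20 : ‖w20‖ ≤ B + 3 * h + 1 := by
    have := norm_add_le (w + h • nrm a) z1
    have := norm_add_le w (h • nrm a)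
    linarith
  have nα : |α| ≤ 4 * B + 11 * h + 4 := by
    rw [hα, abs_mul, hσa, one_mul]
    have t1 := crs_le hbb (w3 - w20)
    have t2 := norm_sub_le w3 w20
    have t3 := abs_sub h (crs b (w3 - w20))
    rw [abs_of_pos hh] at t3
    linarith
  have nαa : ‖α • a‖ ≤ 4 * B + 11 * h + 4 := by
    rw [norm_smul, Real.norm_eq_abs]
    have := unit_norm ha
    nlinarith [abs_nonneg α]
  have n1 : ‖w1‖ ≤ 5 * B + 12 * h + 4 := by
    have := norm_add_le (w + h • nrm a) (α • a)
    have := norm_add_le w (h • nrm a)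
    linarith
  have n2 : ‖w2‖ ≤ 5 * B + 14 * h + 5 := by
    have := norm_add_le w1 z1
    linarith
  have hB'0 : 0 ≤ B' := by rw [hB']; linarith
  obtain ⟨v1, H1⟩ := reach_step' H h hh a w1 B' hK ha ha (by linarith) (by linarith)
    (by
      have : crs a (w1 - w + a) = h * dt a a := by simp [crs, dt, hw1, nrm_zero, nrm_one]; ring
      rw [this, ha, mul_one])
    (by
      have : crs a (w1 - w) = h * dt a a := by simp [crs, dt, hw1, nrm_zero, nrm_one]; ring
      rw [this, ha, mul_one])
    (fun x hx h1 h2 => hrig x hx (by linarith) (by linarith))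
    (fun x hx h1 h2 => hQ x hx (by linarith) (by linarith))
  obtain ⟨v2, H2⟩ := reach_step' H1 h hh b w2 B' (by linarith) ha hbb (by linarith) (by linarith)
    (by rw [hw2, add_sub_cancel_left, z1c])
    (by rw [hw2, add_sub_cancel_left, z1d])
    (fun x hx h1 h2 => hrig x hx (by linarith) (by linarith))
    (fun x hx h1 h2 => hQ x hx (by linarith) (by linarith))
  have key : crs b (w3 - w2) = h := by
    have : crs b (w3 - w2) = crs b (w3 - w20) - α * crs b a := by
      simp [crs, hw2, hw1, hw20]; ring
    rw [this, hba, hα]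
    have : crs b (w3 - w20) - σ * (h - crs b (w3 - w20)) * -σ =
      crs b (w3 - w20) + (σ * σ) * (h - crs b (w3 - w20)) := by ring
    rw [this, hσ]; ring
  obtain ⟨v3, H3⟩ := reach_step' H2 h hh b w3 B' (by linarith) hbb hbb (by linarith) (by linarith)
    (by
      have : crs b (w3 - w2 + b) = crs b (w3 - w2) := by simp [crs]; ring
      rw [this, key])
    key
    (fun x hx h1 h2 => hrig x hx (by linarith) (by linarith))
    (fun x hx h1 h2 => hQ x hx (by linarith) (by linarith))
  obtain ⟨v4, H4⟩ := reach_step' H3 h hh a' w' B' (by linarith) hbb ha' (by linarith) (by linarith)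
    (by rw [hw3, sub_sub_cancel, z2c])
    (by rw [hw3, sub_sub_cancel, z2d])
    (fun x hx h1 h2 => hrig x hx (by linarith) (by linarith))
    (fun x hx h1 h2 => hQ x hx (by linarith) (by linarith))
  refine ⟨v4, ?_⟩
  have e1 : T + 4 * h = T + h + h + h + h := by ring
  have e2 : K + 4 * (4 * B' + 4) = K + (4 * B' + 4) + (4 * B' + 4) + (4 * B' + 4) + (4 * B' + 4) := by ring
  rw [e1, e2]; exact H4

structure Dat (a ψ : ℝ → V2) (Φ : ℝ → ℝ) (M : ℝ) : Prop where
  mono : Monotone Φ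
  bdd : ∀ s t, Φ t - Φ s ≤ M
  psi : ∀ t, ‖ψ t‖ ≤ M
  unit : ∀ t, dt (a t) (a t) = 1
  dich : ∀ s t, s ≤ t → (a s = a t ∧ crs (a s) (ψ t - ψ s) = 0 ∧ ‖ψ t - ψ s‖ ≤ Φ t - Φ s) ∨
    1 ≤ Φ t - Φ s

def WW (a ψ : ℝ → V2) (t0 t : ℝ) : V2 := t • nrm (a t0) + ψ t0

def QQ (a ψ : ℝ → V2) (Φ : ℝ → ℝ) (C ε : ℝ) (x y : V2) : Prop :=
  ‖y - (x 0 • a (x 1) + x 1 • nrm (a (x 1)) + ψ (x 1))‖ ≤ C * (Φ (x 1 + 2 * ε) - Φ (x 1 - 2 * ε))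

lemma reach_mono {lam ε : ℝ} {Q : V2 → V2 → Prop} {T : ℝ} {a w : V2} {K : ℝ} {v : V2 → V2}
    (H : Reach lam ε Q T a w K v) {K' : ℝ} (h : K ≤ K') : Reach lam ε Q T a w K' v :=
  ⟨H.lip, H.aff, H.good, H.cost.trans (ENNReal.ofReal_le_ofReal h), H.near⟩

lemma WW_norm {a ψ : ℝ → V2} {Φ : ℝ → ℝ} {M : ℝ} (D : Dat a ψ Φ M) (t0 t : ℝ) :
    ‖WW a ψ t0 t‖ ≤ |t| + M := by
  unfold WW
  have h1 := norm_add_le (t • nrm (a t0)) (ψ t0)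
  have h2 := D.psi t0
  have h3 := (nrm_norm (a t0)).trans (unit_norm (D.unit t0))
  rw [norm_smul, Real.norm_eq_abs] at h1
  nlinarith [abs_nonneg t]

lemma base_norm {a ψ : ℝ → V2} {Φ : ℝ → ℝ} {M : ℝ} (D : Dat a ψ Φ M) (t : ℝ) (x : V2) (hx : x ∈ Rect) :
    ‖x 0 • a t + x 1 • nrm (a t) + ψ t‖ ≤ 2 + M := by
  have h1 := norm_add_le (x 0 • a t) (WW a ψ t (x 1))
  have h2 := WW_norm D t (x 1)
  have h3 := unit_norm (D.unit t)
  rw [norm_smul, Real.norm_eq_abs, abs_of_pos hx.1.1] at h1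
  have h4 : |x 1| ≤ 1 := abs_le.2 ⟨hx.2.1.le, hx.2.2.le⟩
  rw [add_assoc]
  have h5 := hx.1.2
  have h6 := hx.1.1
  have : x 0 * ‖a t‖ ≤ 1 := by nlinarith [norm_nonneg (a t)]
  unfold WW at h1 h2
  linarith

lemma QQ_big {a ψ : ℝ → V2} {Φ : ℝ → ℝ} {M C ε : ℝ} (D : Dat a ψ Φ M) (hC : 0 ≤ C) (x y : V2) (hx : x ∈ Rect)
    (h1 : 1 ≤ Φ (x 1 + 2 * ε) - Φ (x 1 - 2 * ε)) (hy : ‖y‖ + 2 + M ≤ C) : QQ a ψ Φ C ε x y := by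
  unfold QQ
  have := norm_sub_le y (x 0 • a (x 1) + x 1 • nrm (a (x 1)) + ψ (x 1))
  have := base_norm D (x 1) x hx
  nlinarith

/-- nearness for `x0 a(t0) + x1 nrm a(t0) + ψ(t0) + z` -/
lemma QQ_near {a ψ : ℝ → V2} {Φ : ℝ → ℝ} {M C ε : ℝ} (D : Dat a ψ Φ M) (x z : V2) (hx : x ∈ Rect) (t0 : ℝ)
    (ht : t0 ≤ x 1) (ht0 : x 1 - 2 * ε ≤ t0) (hε : 0 < ε) (hz : ‖z‖ ≤ Φ (x 1 + 2 * ε) - Φ (x 1 - 2 * ε))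
    (hC : 5 + 3 * M ≤ C) : QQ a ψ Φ C ε x (x 0 • a t0 + x 1 • nrm (a t0) + ψ t0 + z) := by
  have hM : 0 ≤ M := (norm_nonneg _).trans (D.psi 0)
  have m1 := D.mono ht0
  have m2 := D.mono (by linarith : x 1 ≤ x 1 + 2 * ε)
  rcases D.dich t0 (x 1) ht with ⟨h1, -, h3⟩ | h
  · unfold QQ
    rw [← h1]
    have e : x 0 • a t0 + x 1 • nrm (a t0) + ψ t0 + z - (x 0 • a t0 + x 1 • nrm (a t0) + ψ (x 1)) =
      z - (ψ (x 1) - ψ t0) := by abel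
    rw [e]
    have := norm_sub_le z (ψ (x 1) - ψ t0)
    have := norm_nonneg z
    nlinarith
  · apply QQ_big D (by linarith) x _ hx (by linarith)
    have := base_norm D t0 x hx
    have := norm_add_le (x 0 • a t0 + x 1 • nrm (a t0) + ψ t0) z
    have := D.bdd (x 1 - 2 * ε) (x 1 + 2 * ε)
    linarith

lemma soft_not_rigid {lam ε : ℝ} (hε : 0 < ε) (hl1 : lam < 1) (k : ℤ) (x : V2) (h1 : k * ε < x 1) (h2 : x 1 < k * ε + lam * ε) :
    x ∉ rigid2 lam ε := by
  unfold rigid2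
  simp only [mem_ofPred_eq, not_le]
  have e1 : (k : ℝ) < x 1 / ε := by rw [lt_div_iff₀ hε]; exact h1
  have e2 : x 1 / ε < k + lam := by rw [div_lt_iff₀ hε]; linarith
  have : ⌊x 1 / ε⌋ = k := by rw [Int.floor_eq_iff]; constructor <;> linarith
  unfold Int.fract
  rw [this]; linarith

lemma layer {lam ε E M C : ℝ} (hl : lam ∈ Ioo (0:ℝ) 1) (hε : 0 < ε) (hE : ε ≤ E)
    {a ψ : ℝ → V2} {Φ : ℝ → ℝ} (D : Dat a ψ Φ M) (hC : C = 16 * (5 * (2 + 3 * E + M) + 4 * E + 5) + 16)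
    (k : ℤ) (hk : |k * ε| ≤ 1 + 2 * E) {K : ℝ} {v : V2 → V2} (hK : 0 ≤ K)
    (H : Reach lam ε (QQ a ψ Φ C ε) (k * ε) (a ((k - 1) * ε)) (WW a ψ ((k - 1) * ε) (k * ε)) K v) :
    ∃ v', Reach lam ε (QQ a ψ Φ C ε) ((k + 1) * ε) (a (k * ε)) (WW a ψ (k * ε) ((k + 1) * ε))
      (K + C * (Φ (k * ε) - Φ ((k - 1) * ε))) v' := by
  obtain ⟨hl0, hl1⟩ := hl
  have hM : 0 ≤ M := (norm_nonneg _).trans (D.psi 0)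
  have hE0 : 0 < E := by linarith
  have hL : 0 < lam * ε := by positivity
  have hLE : lam * ε ≤ E := by nlinarith
  have hC0 : 5 + 3 * M ≤ C := by rw [hC]; linarith
  have hmono : Φ ((k - 1) * ε) ≤ Φ (k * ε) := D.mono (by nlinarith)
  have hstep : ∃ v1, Reach lam ε (QQ a ψ Φ C ε) (k * ε + lam * ε) (a (k * ε))
      (WW a ψ (k * ε) (k * ε + lam * ε)) (K + C * (Φ (k * ε) - Φ ((k - 1) * ε))) v1 := by
    rcases D.dich ((k - 1) * ε) (k * ε) (by nlinarith) with ⟨h1, h2, h3⟩ | h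
    · set δ := ψ (k * ε) - ψ ((k - 1) * ε) with hδ
      rw [h1] at H h2
      set A := a (k * ε) with hA
      have hAA : dt A A = 1 := D.unit _
      have ew : WW a ψ (k * ε) (k * ε + lam * ε) - WW a ψ ((k - 1) * ε) (k * ε) = (lam * ε) • nrm A + δ := by
        unfold WW
        rw [h1, ← hA, hδ, add_smul]; abel
      refine reach_step H (lam * ε) hL A _ _ hK hAA hAA ?_ ?_ ?_ ?_ ?_ ?_
      · rw [ew]
        have : crs A ((lam * ε) • nrm A + δ + A) = (lam * ε) * dt A A + crs A δ := by
          simp [crs, dt, nrm_zero, nrm_one]; ring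
        rw [this, hAA, h2]; ring
      · rw [ew]
        have : crs A ((lam * ε) • nrm A + δ) = (lam * ε) * dt A A + crs A δ := by
          simp [crs, dt, nrm_zero, nrm_one]; ring
        rw [this, hAA, h2]; ring
      · rw [ew]
        have : dt A ((lam * ε) • nrm A + δ - A + A) = dt A δ := by
          simp [dt, nrm_zero, nrm_one]; ring
        rw [this]
        have := dt_le hAA δ
        have := norm_nonneg δ
        nlinarith
      · rw [ew]
        have : dt A ((lam * ε) • nrm A + δ) = dt A δ := by
          simp [dt, nrm_zero, nrm_one]; ring
        rw [this]
        have := dt_le hAA δ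
        have := norm_nonneg δ
        nlinarith
      · intro x hx g1 g2 g3
        exact absurd g3 (soft_not_rigid hε hl1 k x g1 g2)
      · intro x hx g1 g2
        rw [ew]
        set s := (x 1 - k * ε) / (lam * ε) with hs
        have s0 : 0 ≤ s := div_nonneg (by linarith) hL.le
        have s1 : s ≤ 1 := by rw [hs, div_le_one hL]; linarith
        have hs' : s * (lam * ε) = x 1 - k * ε := by rw [hs]; field_simp
        have e : x 0 • A + WW a ψ ((k - 1) * ε) (k * ε) + s • ((lam * ε) • nrm A + δ - A + A) +
            max 0 (s - x 0) • (A - A) =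
            x 0 • a ((k - 1) * ε) + x 1 • nrm (a ((k - 1) * ε)) + ψ ((k - 1) * ε) + s • δ := by
          unfold WW
          rw [h1, sub_add_cancel, sub_self, smul_zero, smul_add, smul_smul, hs', sub_smul]
          abel
        rw [e]
        have m1 : Φ (x 1 - 2 * ε) ≤ Φ ((k - 1) * ε) := D.mono (by nlinarith)
        have m2 : Φ (k * ε) ≤ Φ (x 1 + 2 * ε) := D.mono (by nlinarith)
        refine QQ_near D x (s • δ) hx ((k - 1) * ε) (by nlinarith) (by nlinarith) hε ?_ hC0
        rw [norm_smul, Real.norm_eq_abs, abs_of_nonneg s0]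
        have := norm_nonneg δ
        nlinarith
    · have nb : ∀ t0 t : ℝ, |t| ≤ 1 + 3 * E → ‖WW a ψ t0 t‖ ≤ 2 + 3 * E + M := by
        intro t0 t ht
        have := WW_norm D t0 t
        linarith
      have tb : |k * ε + lam * ε| ≤ 1 + 3 * E := by
        have := abs_add_le (k * ε) (lam * ε)
        rw [abs_of_pos hL] at this
        linarith
      obtain ⟨v1, H1⟩ := reach_jump H (lam * ε) hL (a (k * ε)) (WW a ψ (k * ε) (k * ε + lam * ε))
        (2 + 3 * E + M) hK (D.unit _) (D.unit _) (nb _ _ (by linarith)) (nb _ _ tb) _ rfl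
        (fun x hx g1 g2 => soft_not_rigid hε hl1 k x g1 g2)
        (by
          intro x hx g1 g2 y hy
          have m1 : Φ (x 1 - 2 * ε) ≤ Φ ((k - 1) * ε) := D.mono (by nlinarith)
          have m2 : Φ (k * ε) ≤ Φ (x 1 + 2 * ε) := D.mono (by nlinarith)
          apply QQ_big D (by linarith) x y hx (by linarith)
          rw [hC]; linarith)
      refine ⟨v1, reach_mono H1 ?_⟩
      have : 4 * (4 * (5 * (2 + 3 * E + M) + 4 * (lam * ε) + 5) + 4) ≤ C := by rw [hC]; linarith
      nlinarith
  obtain ⟨v1, H1⟩ := hstep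
  set A := a (k * ε) with hA
  have hAA : dt A A = 1 := D.unit _
  have hR : 0 < (1 - lam) * ε := by apply mul_pos <;> linarith
  have ew : WW a ψ (k * ε) ((k + 1) * ε) - WW a ψ (k * ε) (k * ε + lam * ε) = ((1 - lam) * ε) • nrm A := by
    unfold WW
    rw [← hA, add_sub_add_right_eq_sub, ← sub_smul]; congr 1; ring
  have hD0 : dt A (nrm A) = 0 := by simp [dt, nrm_zero, nrm_one]; ring
  have hD1 : dt A (((1 - lam) * ε) • nrm A) = 0 := by
    have : dt A (((1 - lam) * ε) • nrm A) = ((1 - lam) * ε) * dt A (nrm A) := by simp [dt]; ring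
    rw [this, hD0, mul_zero]
  have hc1 : crs A (((1 - lam) * ε) • nrm A) = (1 - lam) * ε := by
    have : crs A (((1 - lam) * ε) • nrm A) = ((1 - lam) * ε) * dt A A := by
      simp [crs, dt, nrm_zero, nrm_one]; ring
    rw [this, hAA, mul_one]
  obtain ⟨v2, H2⟩ := reach_step H1 ((1 - lam) * ε) hR A (WW a ψ (k * ε) ((k + 1) * ε)) 0
    (by nlinarith) hAA hAA
    (by
      rw [ew]
      have : crs A (((1 - lam) * ε) • nrm A + A) = crs A (((1 - lam) * ε) • nrm A) := by simp [crs]; ring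
      rw [this, hc1])
    (by rw [ew, hc1])
    (by rw [ew, sub_add_cancel, hD1, abs_zero])
    (by rw [ew, hD1, abs_zero])
    (by intros; rw [ew, sub_add_cancel, hD1]; simp)
    (by
      intro x hx g1 g2
      rw [ew]
      set s := (x 1 - (k * ε + lam * ε)) / ((1 - lam) * ε) with hs
      have hs' : s * ((1 - lam) * ε) = x 1 - (k * ε + lam * ε) := by rw [hs, div_mul_cancel₀ _ hR.ne']
      have e : x 0 • A + WW a ψ (k * ε) (k * ε + lam * ε) + s • (((1 - lam) * ε) • nrm A - A + A) +
            max 0 (s - x 0) • (A - A) =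
            x 0 • a (k * ε) + x 1 • nrm (a (k * ε)) + ψ (k * ε) + 0 := by
          unfold WW
          rw [← hA, sub_add_cancel, sub_self, smul_zero, smul_smul, hs', sub_smul]
          abel
      rw [e]
      refine QQ_near D x 0 hx (k * ε) (by nlinarith) (by nlinarith) hε ?_ hC0
      rw [norm_zero, sub_nonneg]
      exact D.mono (by linarith))
  refine ⟨v2, ?_⟩
  have e1 : (k + 1) * ε = k * ε + lam * ε + (1 - lam) * ε := by ring
  rw [add_zero] at H2
  convert H2 using 1

theorem construct (lam : ℝ) (hl : lam ∈ Ioo (0:ℝ) 1) (E M : ℝ) (hM : 0 ≤ M) (hE0 : 0 ≤ E) :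
    ∃ C : ℝ, 0 ≤ C ∧ ∀ ε, 0 < ε → ε ≤ E → ∀ a ψ Φ, Dat a ψ Φ M →
      ∃ v : V2 → V2, (∃ C, LipschitzWith C v) ∧ (∀ᵐ x, x ∈ Rect → Good lam ε v x) ∧
        (∫⁻ x in Rect, ENNReal.ofReal |gam v x|) ≤ ENNReal.ofReal (C * M) ∧
        ∀ x ∈ Rect, QQ a ψ Φ C ε x (v x) := by
  refine ⟨16 * (5 * (2 + 3 * E + M) + 4 * E + 5) + 16, by positivity, ?_⟩
  intro ε hε hE a ψ Φ D
  set C := 16 * (5 * (2 + 3 * E + M) + 4 * E + 5) + 16 with hC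
  have hC0 : 0 ≤ C := by positivity
  set k0 : ℤ := ⌊-1 / ε⌋ with hk0
  have b1 : k0 * ε ≤ -1 := by
    have := Int.floor_le (-1 / ε)
    rwa [le_div_iff₀ hε] at this
  have b2 : -1 < (k0 + 1) * ε := by
    have := Int.lt_floor_add_one (-1 / ε)
    rwa [div_lt_iff₀ hε] at this
  have key : ∀ n : ℕ, (n : ℝ) * ε ≤ 2 + 2 * ε → ∃ v, Reach lam ε (QQ a ψ Φ C ε) ((k0 + n : ℤ) * ε)
      (a (((k0 + n : ℤ) - 1) * ε)) (WW a ψ (((k0 + n : ℤ) - 1) * ε) ((k0 + n : ℤ) * ε))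
      (C * (Φ (((k0 + n : ℤ) - 1) * ε) - Φ ((k0 - 1) * ε))) v := by
    intro n
    induction n with
    | zero =>
      intro _
      simp only [Nat.cast_zero, add_zero]
      set p := a ((k0 - 1) * ε)
      set w := WW a ψ ((k0 - 1) * ε) (k0 * ε)
      have ee : ∀ x : V2, x ∈ Rect → ¬ x 1 < k0 * ε := by
        intro x hx h; have := hx.2.1; linarith
      refine ⟨fun x => x 0 • p + w, ?_, fun x _ _ _ => rfl, ?_, ?_, ?_⟩
      · have := ((ContinuousLinearMap.smulRight (ContinuousLinearMap.proj (R := ℝ) (φ := fun _ : Fin 2 => ℝ) 0) p).lipschitz).add (LipschitzWith.const w)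
        exact ⟨_, this⟩
      · exact Eventually.of_forall fun x hx h => absurd h (ee x hx)
      · have : Rect ∩ {x : V2 | x 1 < k0 * ε} = ∅ := by
          ext x; simp only [mem_inter_iff, mem_ofPred_eq, mem_empty_iff_false, iff_false]
          exact fun h => ee x h.1 h.2
        rw [this]; simp
      · exact fun x hx h => absurd h (ee x hx)
    | succ n ih =>
      intro hn
      push_cast at hn
      obtain ⟨v, Hv⟩ := ih (by nlinarith)
      have hkk : |((k0 + n : ℤ) : ℝ) * ε| ≤ 1 + 2 * E := by
        push_cast
        rw [abs_le]
        have : (0:ℝ) ≤ n * ε := by positivity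
        constructor <;> nlinarith
      obtain ⟨v', H'⟩ := layer hl hε hE D hC (k0 + n : ℤ) hkk (by
        apply mul_nonneg hC0
        rw [sub_nonneg]
        apply D.mono
        apply mul_le_mul_of_nonneg_right _ hε.le
        push_cast
        have : (0:ℝ) ≤ n := by positivity
        linarith) Hv
      refine ⟨v', ?_⟩
      push_cast at H' ⊢
      have e1 : ((k0:ℝ) + (n + 1)) * ε = (k0 + n + 1) * ε := by ring
      have e2 : ((k0:ℝ) + (n + 1) - 1) = (k0 + n) := by ring
      rw [e1, e2]
      refine reach_mono H' (le_of_eq (by ring))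
  set N := ⌈2 / ε⌉₊ + 1 with hN
  have n1 : (2:ℝ) ≤ ⌈2 / ε⌉₊ * ε := by
    have := Nat.le_ceil (2 / ε)
    rwa [div_le_iff₀ hε] at this
  have n2 : (⌈2 / ε⌉₊ : ℝ) * ε ≤ 2 + ε := by
    have := (Nat.ceil_lt_add_one (by positivity : 0 ≤ 2 / ε)).le
    have h2 := mul_le_mul_of_nonneg_right this hε.le
    rw [add_mul, div_mul_cancel₀ _ hε.ne'] at h2
    linarith
  obtain ⟨v, H⟩ := key N (by rw [hN]; push_cast; linarith)
  have hT : ∀ x ∈ Rect, x 1 < (k0 + N : ℤ) * ε := by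
    intro x hx
    have := hx.2.2
    rw [hN]; push_cast; nlinarith
  refine ⟨v, H.lip, ?_, ?_, fun x hx => H.near x hx (hT x hx)⟩
  · filter_upwards [H.good] with x hx h1
    exact hx h1 (hT x h1)
  · have : Rect ∩ {x : V2 | x 1 < (k0 + N : ℤ) * ε} = Rect := by
      ext x; exact ⟨fun h => h.1, fun h => ⟨h, hT x h⟩⟩
    have h2 := H.cost
    rw [this] at h2
    refine h2.trans (ENNReal.ofReal_le_ofReal ?_)
    exact mul_le_mul_of_nonneg_left (D.bdd _ _) hC0

lemma pd_supp {φ : V2 → ℝ} (j : Fin 2) {x : V2} (hx : x ∉ tsupport φ) : pd j φ x = 0 := by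
  have : x ∉ tsupport (fderiv ℝ φ) := fun h => hx (tsupport_fderiv_subset ℝ h)
  have := image_eq_zero_of_notMem_tsupport this
  simp [pd, this]

lemma pd_cont {φ : V2 → ℝ} (hφ : ContDiff ℝ (⊤ : ℕ∞) φ) (j : Fin 2) : Continuous (pd j φ) := by
  unfold pd
  exact (hφ.continuous_fderiv (by simp)).clm_apply continuous_const

lemma pd_cs {φ : V2 → ℝ} (h : HasCompactSupport φ) (j : Fin 2) : HasCompactSupport (pd j φ) := by
  refine HasCompactSupport.intro h (fun x hx => pd_supp j hx)

lemma lip_ibp {f φ : V2 → ℝ} {C : NNReal} (hf : LipschitzWith C f) (hφ : ContDiff ℝ (⊤ : ℕ∞) φ)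
    (hc : HasCompactSupport φ) (j : Fin 2) :
    ∫ x, f x * pd j φ x = - ∫ x, φ x * lineDeriv ℝ f x (Pi.single j 1) := by
  obtain ⟨D, hD⟩ := hφ.lipschitzWith_of_hasCompactSupport hc (by simp)
  have := hf.integral_lineDeriv_mul_eq (μ := volume) hD hc (Pi.single j 1)
  have e1 : ∫ x, φ x * lineDeriv ℝ f x (Pi.single j 1) = ∫ x, lineDeriv ℝ f x (Pi.single j 1) * φ x := by
    congr 1; ext x; ring
  rw [e1, this, ← integral_neg]
  congr 1; ext x
  have hd : DifferentiableAt ℝ φ x := (hφ.differentiable (by simp)) x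
  rw [hd.lineDeriv_eq_fderiv, map_neg]
  simp [pd]; ring

lemma setInt_eq {Ω : Set V2} {φ : V2 → ℝ} (hs : tsupport φ ⊆ Ω) (g : V2 → ℝ) :
    ∫ x in Ω, φ x * g x = ∫ x, φ x * g x := by
  apply setIntegral_eq_integral_of_forall_compl_eq_zero
  intro x hx
  rw [image_eq_zero_of_notMem_tsupport (fun h => hx (hs h)), zero_mul]

lemma setInt_pd {Ω : Set V2} {φ : V2 → ℝ} (hs : tsupport φ ⊆ Ω) (g : V2 → ℝ) (j : Fin 2) :
    ∫ x in Ω, g x * pd j φ x = ∫ x, g x * pd j φ x := by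
  apply setIntegral_eq_integral_of_forall_compl_eq_zero
  intro x hx
  rw [pd_supp j (fun h => hx (hs h)), mul_zero]

lemma rect_vol : volume Rect = 2 := by
  have : Rect = Set.pi univ ![Ioo (0:ℝ) 1, Ioo (-1) 1] := by
    ext x
    simp only [Set.mem_pi, mem_univ, forall_const, Fin.forall_fin_two]
    rfl
  rw [this, volume_pi_pi]
  simp [Fin.prod_univ_two]
  norm_num

lemma rect_fin : volume Rect < ⊤ := by rw [rect_vol]; simp

instance rect_finm : IsFiniteMeasure (volume.restrict Rect) := ⟨by simpa using rect_fin⟩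

lemma rect_bdd : Bornology.IsBounded Rect := by
  apply (Metric.isBounded_Icc (![0,-1] : V2) ![1,1]).subset
  intro x hx
  constructor
  · intro i; fin_cases i
    · exact hx.1.1.le
    · exact hx.2.1.le
  · intro i; fin_cases i
    · exact hx.1.2.le
    · exact hx.2.2.le

lemma cont_intOn {E : Type*} [NormedAddCommGroup E] {f : V2 → E} (hf : Continuous f) : IntegrableOn f Rect := by
  apply (hf.continuousOn.integrableOn_compact (rect_bdd.isCompact_closure)).mono_set subset_closure

lemma comp_lip {v : V2 → V2} {C : NNReal} (hv : LipschitzWith C v) (i : Fin 2) :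
    LipschitzWith C (fun x => v x i) := by
  have := (LipschitzWith.eval (α := fun _ : Fin 2 => ℝ) i).comp hv
  rw [one_mul] at this
  exact this

lemma gv_bdd {v : V2 → V2} {C : NNReal} (hv : LipschitzWith C v) (x : V2) (i j : Fin 2) : |gv v x i j| ≤ C := by
  have := norm_lineDeriv_le_of_lipschitz ℝ (comp_lip hv i) (x₀ := x) (v := Pi.single j 1)
  have e : ‖(Pi.single j (1:ℝ) : V2)‖ = 1 := by rw [Pi.norm_single]; simp
  rw [e, mul_one] at this
  exact this

lemma gv_meas {v : V2 → V2} {C : NNReal} (hv : LipschitzWith C v) (i j : Fin 2) :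
    Measurable (fun x => gv v x i j) := by
  simp only [gv, Matrix.of_apply]
  exact measurable_lineDeriv (comp_lip hv i).continuous

lemma lip_sob {v : V2 → V2} {C : NNReal} (hv : LipschitzWith C v) : IsSobolev11On Rect v (gv v) := by
  refine ⟨cont_intOn hv.continuous, ?_, ?_⟩
  · intro i j
    apply Measure.integrableOn_of_bounded rect_fin.ne (gv_meas hv i j).aestronglyMeasurable (M := C)
    exact Eventually.of_forall fun x => by simpa using gv_bdd hv x i j
  · intro φ h1 h2 h3 i j
    rw [setInt_pd h3, setInt_eq h3]
    exact lip_ibp (comp_lip hv i) h1 h2 j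

lemma sob_congr {v : V2 → V2} {g g' : V2 → Mat2} (h : IsSobolev11On Rect v g)
    (e : ∀ᵐ x ∂(volume.restrict Rect), g x = g' x) : IsSobolev11On Rect v g' := by
  refine ⟨h.int_u, ?_, ?_⟩
  · intro i j
    refine (h.int_gu i j).congr ?_
    filter_upwards [e] with x hx
    rw [hx]
  · intro φ h1 h2 h3 i j
    rw [h.ibp φ h1 h2 h3 i j]
    congr 1
    apply integral_congr_ae
    filter_upwards [e] with x hx
    rw [hx]

lemma gv_add_const (v : V2 → V2) (c : V2) : gv (fun x => v x + c) = gv v := by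
  ext x i j
  simp only [gv, Matrix.of_apply, lineDeriv, Pi.add_apply]
  exact deriv_add_const _

def Rv (v : V2 → V2) (x : V2) : Mat2 := !![gv v x 0 0, - gv v x 1 0; gv v x 1 0, gv v x 0 0]

lemma memAeps_of {lam ε : ℝ} {v : V2 → V2} {C : NNReal} (hv : LipschitzWith C v)
    (hg : ∀ᵐ x, x ∈ Rect → Good lam ε v x) (c : V2) :
    MemAeps Rect lam ε (fun x => v x + c) (Rv v) (gam v) := by
  have hg' := (ae_restrict_iff' rect_meas).2 hg
  refine ⟨?_, ?_, ?_, ?_⟩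
  · filter_upwards [hg'] with x hx
    obtain ⟨h1, h2, h3⟩ := hx
    constructor
    · ext i j
      fin_cases i <;> fin_cases j <;> simp [Rv, Matrix.mul_apply, Fin.sum_univ_two] <;> linarith
    · simp [Rv, Matrix.det_fin_two]; linarith
  · apply Measure.integrableOn_of_bounded rect_fin.ne (M := C * C + C * C)
    · exact (((gv_meas hv 0 0).mul (gv_meas hv 0 1)).add ((gv_meas hv 1 0).mul (gv_meas hv 1 1))).aestronglyMeasurable
    · refine Eventually.of_forall fun x => ?_
      unfold gam
      refine (abs_add_le _ _).trans ?_
      rw [abs_mul, abs_mul]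
      have b := gv_bdd hv x
      gcongr <;> apply b
  · have hl : LipschitzWith C (fun x => v x + c) := by
      simpa using hv.add (LipschitzWith.const c)
    refine sob_congr (lip_sob hl) ?_
    rw [gv_add_const]
    filter_upwards [hg'] with x hx
    obtain ⟨h1, h2, h3⟩ := hx
    ext i j
    fin_cases i <;> fin_cases j <;>
      simp [Rv, Matrix.mul_apply, Fin.sum_univ_two, outer, e1, e2, gam]
    · linear_combination (-gv v x 0 1) * h1 - gv v x 1 0 * h2
    · linear_combination (-gv v x 1 1) * h1 + gv v x 0 0 * h2
  · have hm : MeasurableSet (rigid2 lam ε) := by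
      unfold rigid2
      exact measurableSet_le measurable_const (measurable_fract.comp ((measurable_pi_apply 1).div_const _))
    rw [ae_restrict_iff' (rect_meas.inter hm)]
    filter_upwards [hg] with x hx h
    exact (hx h.1).2.2 h.2

lemma smooth_approx {Ω : Set V2} (hΩ : IsOpen Ω) {φ : V2 → ℝ} (h1 : Continuous φ) (h2 : HasCompactSupport φ)
    (h3 : tsupport φ ⊆ Ω) {δ : ℝ} (hδ : 0 < δ) :
    ∃ g : V2 → ℝ, ContDiff ℝ (⊤ : ℕ∞) g ∧ HasCompactSupport g ∧ tsupport g ⊆ Ω ∧ ∀ x, |φ x - g x| ≤ δ := by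
  obtain ⟨r, hr, hrs⟩ := IsCompact.exists_cthickening_subset_open h2 hΩ h3
  obtain ⟨r2, hr2, hr2s⟩ := Metric.uniformContinuous_iff.1 (h2.uniformContinuous_of_continuous h1) δ hδ
  obtain ⟨g, g1, g2⟩ := h1.exists_contDiff_dist_le_of_forall_mem_ball_dist_le (lt_min hr hr2)
  have supp : ∀ x, x ∉ Metric.cthickening r (tsupport φ) → g x = 0 := by
    intro x hx
    have hx0 : ∀ y ∈ Metric.ball x (min r r2), φ y = 0 := by
      intro y hy
      by_contra hne
      have hy' : y ∈ tsupport φ := subset_tsupport _ hne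
      apply hx
      apply Metric.mem_cthickening_of_dist_le x y r _ hy'
      rw [dist_comm]
      exact (Metric.mem_ball.1 hy).le.trans (min_le_left _ _)
    have hxx := hx0 x (Metric.mem_ball_self (lt_min hr hr2))
    have := g2 x 0 (fun y hy => by rw [hx0 y hy, hxx]; simp)
    rw [hxx, dist_zero_right] at this
    simpa using this
  have hK : IsCompact (Metric.cthickening r (tsupport φ)) := h2.isCompact.cthickening
  refine ⟨g, g1, HasCompactSupport.intro hK supp, ?_, ?_⟩
  · refine (closure_minimal ?_ Metric.isClosed_cthickening).trans hrs
    intro x hx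
    by_contra h
    exact hx (supp x h)
  · intro x
    have := g2 x δ (fun y hy => (hr2s ((Metric.mem_ball.1 hy).trans_le (min_le_right _ _))).le)
    rw [dist_comm] at this
    exact this

lemma int_close {μ : Measure V2} {f φ g : V2 → ℝ} (hf : Integrable f μ) {δ : ℝ}
    (h1 : Continuous φ) (h2 : HasCompactSupport φ) (h1' : Continuous g) (h2' : HasCompactSupport g)
    (h : ∀ x, |φ x - g x| ≤ δ) : |(∫ x, φ x * f x ∂μ) - ∫ x, g x * f x ∂μ| ≤ δ * ∫ x, |f x| ∂μ := by
  obtain ⟨c, hc⟩ := h2.exists_bound_of_continuous h1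
  obtain ⟨c', hc'⟩ := h2'.exists_bound_of_continuous h1'
  rw [← integral_sub (hf.bdd_mul h1.aestronglyMeasurable (Eventually.of_forall hc))
    (hf.bdd_mul h1'.aestronglyMeasurable (Eventually.of_forall hc')), ← integral_const_mul]
  rw [← Real.norm_eq_abs]
  refine norm_integral_le_of_norm_le (hf.abs.const_mul δ) (Eventually.of_forall fun x => ?_)
  rw [← sub_mul, norm_mul]
  exact mul_le_mul_of_nonneg_right (h x) (abs_nonneg _)

lemma sob_uniq {v : V2 → V2} {g g' : V2 → Mat2} (h : IsSobolev11On Rect v g) (h' : IsSobolev11On Rect v g') (i j : Fin 2) :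
    ∀ᵐ x ∂(volume.restrict Rect), g x i j = g' x i j := by
  rw [ae_restrict_iff' rect_meas]
  have := rect_open.ae_eq_zero_of_integral_contDiff_smul_eq_zero (μ := volume) (f := fun x => g x i j - g' x i j)
    (((h.int_gu i j).sub (h'.int_gu i j)).locallyIntegrableOn) (by
      intro φ h1 h2 h3
      have e1 := h.ibp φ h1 h2 h3 i j
      have e2 := h'.ibp φ h1 h2 h3 i j
      obtain ⟨c, hc⟩ := h2.exists_bound_of_continuous h1.continuous
      simp only [smul_eq_mul]
      rw [← setInt_eq h3]
      simp_rw [mul_sub]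
      rw [integral_sub ((h.int_gu i j).bdd_mul h1.continuous.aestronglyMeasurable (Eventually.of_forall hc))
        ((h'.int_gu i j).bdd_mul h1.continuous.aestronglyMeasurable (Eventually.of_forall hc))]
      linarith)
  filter_upwards [this] with x hx h
  exact sub_eq_zero.1 (hx h)

lemma gs_int {u : V2 → V2} {gu : V2 → Mat2} {σ : Measure V2} {gs : V2 → Mat2} (H : HasBVDerivOn Rect u gu σ gs)
    (i j : Fin 2) : Integrable (fun x => gs x i j) σ := by
  have : IsFiniteMeasure σ := ⟨lt_top_iff_ne_top.2 H.fin⟩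
  refine Integrable.of_bound (H.meas_gs i j).aestronglyMeasurable 1 ?_
  filter_upwards [H.unit] with x hx
  unfold mnorm at hx
  rw [Real.sqrt_eq_one] at hx
  have h1 : gs x i j ^ 2 ≤ 1 := by
    rw [← hx]
    refine (Finset.single_le_sum (f := fun j => gs x i j ^ 2) (fun j _ => sq_nonneg _) (Finset.mem_univ j)).trans ?_
    exact Finset.single_le_sum (f := fun i => ∑ j, gs x i j ^ 2) (fun i _ => Finset.sum_nonneg fun j _ => sq_nonneg _) (Finset.mem_univ i)
  rw [Real.norm_eq_abs]
  exact (sq_le_one_iff_abs_le_one _).1 h1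

lemma vnorm_cont : Continuous vnorm := by
  unfold vnorm
  fun_prop

lemma vnorm_le (v : V2) : vnorm v ≤ 2 * ‖v‖ := by
  unfold vnorm
  apply Real.sqrt_le_iff.2 ⟨by positivity, ?_⟩
  have h0 := norm_le_pi_norm v 0
  have h1 := norm_le_pi_norm v 1
  simp only [Real.norm_eq_abs] at h0 h1
  have := sq_le_sq' (neg_le_of_abs_le h0) (le_of_abs_le h0)
  have := sq_le_sq' (neg_le_of_abs_le h1) (le_of_abs_le h1)
  nlinarith

lemma vnorm_nonneg (v : V2) : 0 ≤ vnorm v := Real.sqrt_nonneg _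

theorem weak_conv {u : V2 → V2} {gu : V2 → Mat2} {σ : Measure V2} {gs : V2 → Mat2} (H : HasBVDerivOn Rect u gu σ gs)
    (un : ℕ → V2 → V2) (hc : ∀ n, Continuous (un n)) (B : ℝ) (hB : ∀ n, ∀ x ∈ Rect, ‖un n x‖ ≤ B)
    (hlim : ∀ᵐ x ∂(volume.restrict Rect), Tendsto (fun n => un n x) atTop (𝓝 (u x)))
    (g0 : ℕ → V2 → Mat2) (hg0 : ∀ n, IsSobolev11On Rect (un n) (g0 n)) (B' : ℝ)
    (hB' : ∀ n i j, ∫ x in Rect, |g0 n x i j| ≤ B') : WeakStarToBV Rect un u := by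
  refine ⟨gu, σ, gs, H, ?_, ?_⟩
  · unfold L1ConvOn
    have hbu : ∀ᵐ x ∂(volume.restrict Rect), ‖u x‖ ≤ B := by
      filter_upwards [hlim, ae_restrict_mem rect_meas] with x hx hr
      exact le_of_tendsto hx.norm (Eventually.of_forall fun n => hB n x hr)
    have := tendsto_integral_of_dominated_convergence (μ := volume.restrict Rect)
      (F := fun n x => vnorm (un n x - u x)) (f := fun x => 0) (fun _ => 4 * B)
      (fun n => vnorm_cont.comp_aestronglyMeasurable ((hc n).aestronglyMeasurable.sub H.int_u.aestronglyMeasurable))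
      (integrable_const _)
      (by
        intro n
        filter_upwards [hbu, ae_restrict_mem rect_meas] with x hx hr
        rw [Real.norm_eq_abs, abs_of_nonneg (vnorm_nonneg _)]
        have := vnorm_le (un n x - u x)
        have := norm_sub_le (un n x) (u x)
        have := hB n x hr
        linarith)
      (by
        filter_upwards [hlim] with x hx
        have h1 : Tendsto (fun n => un n x - u x) atTop (𝓝 0) := by
          simpa using hx.sub_const (u x)
        have h2 := (vnorm_cont.tendsto 0).comp h1
        have h0 : vnorm 0 = 0 := by simp [vnorm]
        rw [h0] at h2
        exact h2)
    simpa using this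
  · intro gn hgn φ h1 h2 h3 i j
    have hgB : ∀ n, ∫ x in Rect, |gn n x i j| ≤ B' := by
      intro n
      refine le_trans (le_of_eq ?_) (hB' n i j)
      apply integral_congr_ae
      filter_upwards [sob_uniq (hgn n) (hg0 n) i j] with x hx
      rw [hx]
    -- smooth test functions
    have smooth : ∀ g : V2 → ℝ, ContDiff ℝ (⊤ : ℕ∞) g → HasCompactSupport g → tsupport g ⊆ Rect →
        Tendsto (fun n => ∫ x in Rect, g x * gn n x i j) atTop
          (𝓝 ((∫ x in Rect, g x * gu x i j) + ∫ x, g x * gs x i j ∂σ)) := by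
      intro g g1 g2 g3
      have e : ∀ n, ∫ x in Rect, g x * gn n x i j = - ∫ x in Rect, un n x i * pd j g x := by
        intro n; rw [(hgn n).ibp g g1 g2 g3 i j, neg_neg]
      have e' : (∫ x in Rect, g x * gu x i j) + ∫ x, g x * gs x i j ∂σ = - ∫ x in Rect, u x i * pd j g x := by
        rw [H.ibp g g1 g2 g3 i j]; ring
      simp_rw [e]
      rw [e']
      apply Tendsto.neg
      obtain ⟨c, hcc⟩ := (pd_cs g2 j).exists_bound_of_continuous (pd_cont g1 j)
      refine tendsto_integral_of_dominated_convergence (fun _ => B * c) ?_ (integrable_const _) ?_ ?_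
      · intro n
        exact (((continuous_apply i).comp (hc n)).mul (pd_cont g1 j)).aestronglyMeasurable
      · intro n
        filter_upwards [ae_restrict_mem rect_meas] with x hr
        rw [norm_mul]
        have b1 := (norm_le_pi_norm (un n x) i).trans (hB n x hr)
        have b2 := hcc x
        exact mul_le_mul b1 b2 (norm_nonneg _) ((norm_nonneg _).trans b1)
      · filter_upwards [hlim] with x hx
        exact ((tendsto_pi_nhds.1 hx) i).mul_const _
    have hB'0 : 0 ≤ B' := (integral_nonneg fun x => abs_nonneg _).trans (hgB 0)
    set S1 := ∫ x in Rect, |gu x i j| with hS1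
    set S2 := ∫ x, |gs x i j| ∂σ with hS2
    have hS10 : 0 ≤ S1 := integral_nonneg fun x => abs_nonneg _
    have hS20 : 0 ≤ S2 := integral_nonneg fun x => abs_nonneg _
    rw [Metric.tendsto_atTop]
    intro η hη
    set δ := η / (2 * (B' + S1 + S2 + 1)) with hδ
    have hδ0 : 0 < δ := by positivity
    have hδ1 : δ * (B' + S1 + S2 + 1) = η / 2 := by rw [hδ]; field_simp
    obtain ⟨g, g1, g2, g3, g4⟩ := smooth_approx rect_open h1 h2 h3 hδ0
    obtain ⟨N, hN⟩ := (Metric.tendsto_atTop.1 (smooth g g1 g2 g3)) (η / 2) (by positivity)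
    refine ⟨N, fun n hn => ?_⟩
    have t1 := int_close (μ := volume.restrict Rect) ((hgn n).int_gu i j) h1 h2 g1.continuous g2 g4
    have t2 := int_close (μ := volume.restrict Rect) (H.int_gu i j) h1 h2 g1.continuous g2 g4
    have t3 := int_close (gs_int H i j) h1 h2 g1.continuous g2 g4
    have t4 := hN n hn
    rw [← hS1] at t2
    rw [← hS2] at t3
    rw [Real.dist_eq] at t4 ⊢
    have t5 := mul_le_mul_of_nonneg_left (hgB n) hδ0.le
    rw [abs_lt] at t4 ⊢
    rw [abs_le] at t1 t2 t3
    constructor <;> nlinarith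

structure DatOn (a ψ : ℝ → V2) (Φ : ℝ → ℝ) (M : ℝ) : Prop where
  mono : Monotone Φ
  bdd : ∀ s ∈ Ioo (-1:ℝ) 1, ∀ t ∈ Ioo (-1:ℝ) 1, Φ t - Φ s ≤ M
  psi : ∀ t ∈ Ioo (-1:ℝ) 1, ‖ψ t‖ ≤ M
  unit : ∀ t ∈ Ioo (-1:ℝ) 1, dt (a t) (a t) = 1
  dich : ∀ s ∈ Ioo (-1:ℝ) 1, ∀ t ∈ Ioo (-1:ℝ) 1, s ≤ t →
    (a s = a t ∧ crs (a s) (ψ t - ψ s) = 0 ∧ ‖ψ t - ψ s‖ ≤ Φ t - Φ s) ∨ 1 ≤ Φ t - Φ s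

def clamp (η t : ℝ) : ℝ := max (-1 + η) (min t (1 - η))

lemma clamp_mem {η : ℝ} (h0 : 0 < η) (h1 : η < 1) (t : ℝ) : clamp η t ∈ Ioo (-1:ℝ) 1 := by
  unfold clamp
  constructor
  · exact lt_max_of_lt_left (by linarith)
  · exact max_lt (by linarith) ((min_le_right _ _).trans_lt (by linarith))

lemma clamp_mono (η : ℝ) : Monotone (clamp η) := fun s t h => by
  unfold clamp
  exact max_le_max le_rfl (min_le_min h le_rfl)

lemma dat_clamp {a ψ : ℝ → V2} {Φ : ℝ → ℝ} {M η : ℝ} (D : DatOn a ψ Φ M) (h0 : 0 < η) (h1 : η < 1) :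
    Dat (fun t => a (clamp η t)) (fun t => ψ (clamp η t)) (fun t => Φ (clamp η t)) M :=
  ⟨fun _ _ h => D.mono (clamp_mono η h), fun _ _ => D.bdd _ (clamp_mem h0 h1 _) _ (clamp_mem h0 h1 _),
    fun _ => D.psi _ (clamp_mem h0 h1 _), fun _ => D.unit _ (clamp_mem h0 h1 _),
    fun _ _ h => D.dich _ (clamp_mem h0 h1 _) _ (clamp_mem h0 h1 _) (clamp_mono η h)⟩

lemma gv_int_bound {lam ε : ℝ} {v : V2 → V2} {C : NNReal} (hv : LipschitzWith C v)
    (hg : ∀ᵐ x, x ∈ Rect → Good lam ε v x) {K : ℝ} (hK : 0 ≤ K)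
    (hcost : (∫⁻ x in Rect, ENNReal.ofReal |gam v x|) ≤ ENNReal.ofReal K) (i j : Fin 2) :
    ∫ x in Rect, |gv v x i j| ≤ 2 + K := by
  have hIntg := (memAeps_of hv hg 0).int_γ
  have hg' := (ae_restrict_iff' rect_meas).2 hg
  have b1 : ∫ x in Rect, |gv v x i j| ≤ ∫ x in Rect, (1 + |gam v x|) := by
    apply integral_mono_ae ((lip_sob hv).int_gu i j).abs ((integrable_const _).add hIntg.abs)
    filter_upwards [hg'] with x hx
    obtain ⟨h1, h2, -⟩ := hx
    have a0 : |gv v x 0 0| ≤ 1 := by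
      rw [← sq_le_one_iff_abs_le_one]; nlinarith [sq_nonneg (gv v x 1 0)]
    have a1 : |gv v x 1 0| ≤ 1 := by
      rw [← sq_le_one_iff_abs_le_one]; nlinarith [sq_nonneg (gv v x 0 0)]
    have c0 : gv v x 0 1 = gam v x * gv v x 0 0 - gv v x 1 0 := by
      unfold gam; linear_combination (-gv v x 0 1) * h1 - gv v x 1 0 * h2
    have c1 : gv v x 1 1 = gam v x * gv v x 1 0 + gv v x 0 0 := by
      unfold gam; linear_combination (-gv v x 1 1) * h1 + gv v x 0 0 * h2
    have n := abs_nonneg (gam v x)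
    have d0 : |gv v x 0 1| ≤ 1 + |gam v x| := by
      rw [c0]
      refine (abs_sub _ _).trans ?_
      rw [abs_mul]; nlinarith
    have d1 : |gv v x 1 1| ≤ 1 + |gam v x| := by
      rw [c1]
      refine (abs_add_le _ _).trans ?_
      rw [abs_mul]; nlinarith
    fin_cases i <;> fin_cases j <;> simp <;> linarith
  have b2 : ∫ x in Rect, |gam v x| ≤ K := by
    rw [integral_eq_lintegral_of_nonneg_ae (Eventually.of_forall fun x => abs_nonneg _) hIntg.abs.aestronglyMeasurable]
    exact ENNReal.toReal_le_of_le_ofReal hK hcost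
  rw [integral_add (integrable_const _) hIntg.abs] at b1
  have : ∫ x in Rect, (1:ℝ) = 2 := by
    simp [Measure.real, rect_vol]
  linarith

theorem final_of_dat (lam : ℝ) (hlam : lam ∈ Ioo (0:ℝ) 1)
    (ε : ℕ → ℝ) (hεpos : ∀ n, 0 < ε n) (hε0 : Tendsto ε atTop (𝓝 0))
    (u : V2 → V2) {gu : V2 → Mat2} {σ : Measure V2} {gs : V2 → Mat2} (H : HasBVDerivOn Rect u gu σ gs)
    {a ψ : ℝ → V2} {Φ : ℝ → ℝ} {M : ℝ} (D : DatOn a ψ Φ M)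
    (hu : ∀ᵐ x ∂(volume.restrict Rect), u x = x 0 • a (x 1) + x 1 • nrm (a (x 1)) + ψ (x 1)) :
    ∃ un : ℕ → V2 → V2, ∃ Rn : ℕ → V2 → Mat2, ∃ γn : ℕ → V2 → ℝ,
      (∀ n, MemAeps Rect lam (ε n) (un n) (Rn n) (γn n)) ∧
      (∀ n, (∫ x in Rect, un n x) = ∫ x in Rect, u x) ∧
      WeakStarToBV Rect un u := by
  have hM : 0 ≤ M := (norm_nonneg _).trans (D.psi 0 (by norm_num))
  obtain ⟨E, hE⟩ := hε0.bddAbove_range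
  have hE' : ∀ n, ε n ≤ E := fun n => hE ⟨n, rfl⟩
  have hE0 : 0 ≤ E := (hεpos 0).le.trans (hE' 0)
  obtain ⟨C, hC0, hC⟩ := construct lam hlam E M hM hE0
  set η : ℕ → ℝ := fun n => ε n / (1 + ε n) with hη
  have hη0 : ∀ n, 0 < η n := fun n => by have := hεpos n; positivity
  have hη1 : ∀ n, η n < 1 := fun n => by
    have := hεpos n; simp only [hη]; rw [div_lt_one (by positivity)]; linarith
  have hηt : Tendsto η atTop (𝓝 0) := by
    have := hε0.div (hε0.const_add 1) (by norm_num)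
    rw [zero_div] at this
    exact this
  have hDn := fun n => dat_clamp D (hη0 n) (hη1 n)
  choose v hvl hvg hvc hvq using fun n => hC (ε n) (hεpos n) (hE' n) _ _ _ (hDn n)
  choose Cl hCl using hvl
  have hvb : ∀ n, ∀ x ∈ Rect, ‖v n x‖ ≤ C * M + 2 + M := by
    intro n x hx
    have h1 := hvq n x hx
    unfold QQ at h1
    have h2 := (hDn n).bdd (x 1 - 2 * ε n) (x 1 + 2 * ε n)
    have h3 := base_norm (hDn n) (x 1) x hx
    have h4 := norm_le_norm_add_norm_sub' (v n x) (x 0 • a (clamp (η n) (x 1)) + x 1 • nrm (a (clamp (η n) (x 1))) + ψ (clamp (η n) (x 1)))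
    have h5 := mul_le_mul_of_nonneg_left h2 hC0
    linarith
  have hcont : ∀ᵐ x : V2, ContinuousAt Φ (x 1) := by
    have hcount := D.mono.countable_not_continuousAt
    have : ∀ᵐ x : V2, ∀ t ∈ {t | ¬ ContinuousAt Φ t}, x 1 ≠ t := by
      rw [ae_ball_iff hcount]
      intro t _
      have := null_line 0 1 t (Or.inr one_ne_zero)
      filter_upwards [this] with x hx
      simpa using hx
    filter_upwards [this] with x hx
    by_contra h
    exact hx _ h rfl
  have hvlim : ∀ᵐ x ∂(volume.restrict Rect), Tendsto (fun n => v n x) atTop (𝓝 (u x)) := by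
    filter_upwards [ae_restrict_of_ae hcont, hu, ae_restrict_mem rect_meas] with x hx hux hr
    have hcl : ∀ c : ℝ, Tendsto (fun n => clamp (η n) (x 1 + c * ε n)) atTop (𝓝 (x 1)) := by
      intro c
      unfold clamp
      have t1 : Tendsto (fun n => x 1 + c * ε n) atTop (𝓝 (x 1)) := by
        simpa using (hε0.const_mul c).const_add (x 1)
      have t2 : Tendsto (fun n => 1 - η n) atTop (𝓝 1) := by simpa using hηt.const_sub 1
      have t3 : Tendsto (fun n => -1 + η n) atTop (𝓝 (-1)) := by simpa using hηt.const_add (-1)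
      have := t3.max (t1.min t2)
      rwa [min_eq_left hr.2.2.le, max_eq_right hr.2.1.le] at this
    have hev : ∀ᶠ n in atTop, clamp (η n) (x 1) = x 1 := by
      have e1 := hηt.eventually_lt_const (by linarith [hr.2.1] : 0 < x 1 + 1)
      have e2 := hηt.eventually_lt_const (by linarith [hr.2.2] : 0 < 1 - x 1)
      filter_upwards [e1, e2] with n h1 h2
      unfold clamp
      rw [min_eq_left (by linarith), max_eq_right (by linarith)]
    have hz : Tendsto (fun n => C * (Φ (clamp (η n) (x 1 + 2 * ε n)) - Φ (clamp (η n) (x 1 - 2 * ε n)))) atTop (𝓝 0) := by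
      have h1 := hx.tendsto.comp (hcl 2)
      have h2 := hx.tendsto.comp (hcl (-2))
      have := (h1.sub h2).const_mul C
      simp only [sub_self, mul_zero] at this
      refine this.congr (fun n => ?_)
      simp only [Function.comp]
      congr 4; ring_nf
    rw [tendsto_iff_norm_sub_tendsto_zero]
    refine squeeze_zero' (Eventually.of_forall fun n => norm_nonneg _) ?_ hz
    filter_upwards [hev] with n hn
    have := hvq n x hr
    unfold QQ at this
    beta_reduce at this
    rw [hn, ← hux] at this
    exact this
  have hvi : Tendsto (fun n => ∫ x in Rect, v n x) atTop (𝓝 (∫ x in Rect, u x)) := by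
    refine tendsto_integral_of_dominated_convergence (fun _ => C * M + 2 + M) ?_ (integrable_const _) ?_ hvlim
    · exact fun n => (hCl n).continuous.aestronglyMeasurable
    · intro n
      filter_upwards [ae_restrict_mem rect_meas] with x hr using hvb n x hr
  set c : ℕ → V2 := fun n => (1/2 : ℝ) • ((∫ x in Rect, u x) - ∫ x in Rect, v n x) with hc
  have hct : Tendsto c atTop (𝓝 0) := by
    have := (hvi.const_sub (∫ x in Rect, u x)).const_smul (1/2 : ℝ)
    rw [sub_self, smul_zero] at this
    exact this
  obtain ⟨Bc, hBc⟩ := hct.norm.bddAbove_range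
  have hBc' : ∀ n, ‖c n‖ ≤ Bc := fun n => hBc ⟨n, rfl⟩
  have hlip : ∀ n, LipschitzWith (Cl n) (fun x => v n x + c n) := fun n => by
    simpa using (hCl n).add (LipschitzWith.const (c n))
  refine ⟨fun n x => v n x + c n, fun n => Rv (v n), fun n => gam (v n),
    fun n => memAeps_of (hCl n) (hvg n) (c n), ?_, ?_⟩
  · intro n
    rw [integral_add (cont_intOn (hCl n).continuous) (integrable_const _)]
    have : ∫ x in Rect, c n = (2:ℝ) • c n := by
      simp [Measure.real, rect_vol]
    rw [this, hc]
    simp only [smul_smul]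
    norm_num
  · refine weak_conv H _ (fun n => (hlip n).continuous) (C * M + 2 + M + Bc) ?_ ?_ (fun n => gv (fun x => v n x + c n))
      (fun n => lip_sob (hlip n)) (2 + C * M) ?_
    · intro n x hx
      have := norm_add_le (v n x) (c n)
      have := hvb n x hx
      have := hBc' n
      linarith
    · filter_upwards [hvlim] with x hx
      simpa using hx.add hct
    · intro n i j
      rw [gv_add_const]
      exact gv_int_bound (hCl n) (hvg n) (by positivity) (hvc n) i j

/-! ### Part A: structure of the limit map -/

/-- Regularity of one-dimensional functions of bounded variation. -/
structure Reg {E : Type*} [NormedAddCommGroup E] (f : ℝ → E) : Prop where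
  meas : AEStronglyMeasurable f (volume.restrict (Ioo (-1:ℝ) 1))
  bdd : ∃ C, ∀ t ∈ Ioo (-1:ℝ) 1, ‖f t‖ ≤ C
  left : ∀ t ∈ Ioo (-1:ℝ) 1, ∃ l, Tendsto f (𝓝[<] t) (𝓝 l)
  right : ∀ t ∈ Ioo (-1:ℝ) 1, ∃ l, Tendsto f (𝓝[>] t) (𝓝 l)
  cont : ∀ᵐ t ∂(volume.restrict (Ioo (-1:ℝ) 1)), ContinuousAt f t

lemma reg_of_bv {n : Type*} [Fintype n] {f : ℝ → n → ℝ} (h : BoundedVariationOn f (Ioo (-1:ℝ) 1)) : Reg f where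
  meas := by
    rw [aestronglyMeasurable_iff_aemeasurable, aemeasurable_pi_iff]
    intro i
    have hi : BoundedVariationOn (fun t => f t i) (Ioo (-1:ℝ) 1) := by
      have := (LipschitzWith.eval (α := fun _ : n => ℝ) i).comp_boundedVariationOn h
      exact this
    obtain ⟨p, q, hp, hq, hpq⟩ := hi.locallyBoundedVariationOn.exists_monotoneOn_sub_monotoneOn
    rw [hpq]
    exact (aemeasurable_restrict_of_monotoneOn measurableSet_Ioo hp).sub
      (aemeasurable_restrict_of_monotoneOn measurableSet_Ioo hq)
  bdd := by
    refine ⟨‖f 0‖ + (eVariationOn f (Ioo (-1:ℝ) 1)).toReal, fun t ht => ?_⟩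
    have := h.dist_le ht (by norm_num : (0:ℝ) ∈ Ioo (-1:ℝ) 1)
    rw [dist_eq_norm] at this
    have h2 := norm_sub_norm_le (f t) (f 0)
    linarith
  left := by
    intro t ht
    obtain ⟨l, hl⟩ := h.exists_tendsto_left t
    refine ⟨l, hl.mono_left ?_⟩
    refine le_of_eq ?_
    rw [inter_comm]
    exact (nhdsWithin_inter_of_mem' (mem_nhdsWithin_of_mem_nhds (Ioo_mem_nhds ht.1 ht.2))).symm
  right := by
    intro t ht
    obtain ⟨l, hl⟩ := h.exists_tendsto_right t
    refine ⟨l, hl.mono_left ?_⟩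
    refine le_of_eq ?_
    rw [inter_comm]
    exact (nhdsWithin_inter_of_mem' (mem_nhdsWithin_of_mem_nhds (Ioo_mem_nhds ht.1 ht.2))).symm
  cont := by
    rw [ae_restrict_iff' measurableSet_Ioo]
    filter_upwards [h.locallyBoundedVariationOn.ae_differentiableWithinAt_of_mem] with t ht hm
    exact ((ht hm).differentiableAt (Ioo_mem_nhds hm.1 hm.2)).continuousAt

lemma Reg.comp {E F : Type*} [NormedAddCommGroup E] [NormedAddCommGroup F] [ProperSpace E] {f : ℝ → E} (h : Reg f)
    {g : E → F} (hg : Continuous g) : Reg (fun t => g (f t)) where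
  meas := hg.comp_aestronglyMeasurable h.meas
  bdd := by
    obtain ⟨C, hC⟩ := h.bdd
    obtain ⟨K, hK⟩ := (isCompact_closedBall (0:E) C).exists_bound_of_continuousOn hg.continuousOn
    exact ⟨K, fun t ht => hK _ (by simpa using hC t ht)⟩
  left := fun t ht => by
    obtain ⟨l, hl⟩ := h.left t ht
    exact ⟨g l, (hg.tendsto l).comp hl⟩
  right := fun t ht => by
    obtain ⟨l, hl⟩ := h.right t ht
    exact ⟨g l, (hg.tendsto l).comp hl⟩
  cont := by
    filter_upwards [h.cont] with t ht
    exact hg.continuousAt.comp ht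

lemma Reg.prod {E F : Type*} [NormedAddCommGroup E] [NormedAddCommGroup F] {f : ℝ → E} {g : ℝ → F} (h : Reg f) (h' : Reg g) : Reg (fun t => (f t, g t)) where
  meas := h.meas.prodMk h'.meas
  bdd := by
    obtain ⟨C, hC⟩ := h.bdd
    obtain ⟨K, hK⟩ := h'.bdd
    refine ⟨max C K, fun t ht => ?_⟩
    exact max_le_max (hC t ht) (hK t ht)
  left := fun t ht => by
    obtain ⟨l, hl⟩ := h.left t ht
    obtain ⟨l', hl'⟩ := h'.left t ht
    exact ⟨_, hl.prodMk_nhds hl'⟩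
  right := fun t ht => by
    obtain ⟨l, hl⟩ := h.right t ht
    obtain ⟨l', hl'⟩ := h'.right t ht
    exact ⟨_, hl.prodMk_nhds hl'⟩
  cont := by
    filter_upwards [h.cont, h'.cont] with t ht ht'
    exact ht.prodMk ht'

lemma reg_id : Reg (fun t : ℝ => t) where
  meas := by fun_prop
  bdd := ⟨1, fun t ht => by rw [Real.norm_eq_abs, abs_le]; exact ⟨ht.1.le, ht.2.le⟩⟩
  left := fun t _ => ⟨t, tendsto_nhdsWithin_of_tendsto_nhds tendsto_id⟩
  right := fun t _ => ⟨t, tendsto_nhdsWithin_of_tendsto_nhds tendsto_id⟩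
  cont := Eventually.of_forall fun t => continuousAt_id

lemma reg_psi {ψ : ℝ → V2} (h : BVv ψ (Ioo (-1:ℝ) 1)) : Reg ψ := by
  apply reg_of_bv
  have := (PiLp.lipschitzWith_ofLp 2 (fun _ : Fin 2 => ℝ)).comp_boundedVariationOn h
  exact this

lemma reg_R {R : ℝ → Mat2} (h : BVm R (Ioo (-1:ℝ) 1)) : Reg (fun t => fun p : Fin 2 × Fin 2 => R t p.1 p.2) := by
  apply reg_of_bv
  have := (PiLp.lipschitzWith_ofLp 2 (fun _ : Fin 2 × Fin 2 => ℝ)).comp_boundedVariationOn h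
  exact this

lemma nrm_cont : Continuous nrm := by
  apply continuous_pi
  intro i
  fin_cases i
  · simpa [nrm] using (by fun_prop : Continuous fun a : V2 => - a 1)
  · simpa [nrm] using (by fun_prop : Continuous fun a : V2 => a 0)

lemma dt_cont : Continuous fun a : V2 => dt a a := by unfold dt; fun_prop

/-- Reduction of membership in `A` to a one-dimensional representation. -/
lemma reduce {u : V2 → V2} {R : ℝ → Mat2} {ψ : ℝ → V2} (hR : ∀ t ∈ Ioo (-1:ℝ) 1, R t ∈ SO2)
    (h1 : BVm R (Ioo (-1:ℝ) 1)) (h2 : BVv ψ (Ioo (-1:ℝ) 1))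
    (hu : ∀ᵐ x ∂(volume.restrict Rect), u x = (R (x 1)).mulVec x + ψ (x 1)) :
    ∃ a w : ℝ → V2, Reg a ∧ Reg w ∧ (∀ t ∈ Ioo (-1:ℝ) 1, dt (a t) (a t) = 1) ∧
      ∀ᵐ x ∂(volume.restrict Rect), u x = x 0 • a (x 1) + w (x 1) := by
  have hrR := reg_R h1
  have hrψ := reg_psi h2
  have ha : Reg (fun t => (fun i => R t i 0 : V2)) :=
    hrR.comp (g := fun f : Fin 2 × Fin 2 → ℝ => fun i => f (i, 0)) (by fun_prop)
  have hcol : ∀ t ∈ Ioo (-1:ℝ) 1, R t 0 0 ^ 2 + R t 1 0 ^ 2 = 1 ∧ R t 0 1 = - R t 1 0 ∧ R t 1 1 = R t 0 0 := by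
    intro t ht
    obtain ⟨e1, e2⟩ := hR t ht
    have q00 := congrFun (congrFun e1 0) 0
    have q01 := congrFun (congrFun e1 0) 1
    have q11 := congrFun (congrFun e1 1) 1
    simp [Matrix.mul_apply, Fin.sum_univ_two] at q00 q01 q11
    rw [Matrix.det_fin_two] at e2
    set A := R t 0 0
    set B := R t 0 1
    set C := R t 1 0
    set D := R t 1 1
    have k1 : (A - D) ^ 2 + (B + C) ^ 2 = 0 := by nlinarith
    have k2 : A - D = 0 := by nlinarith [sq_nonneg (A-D), sq_nonneg (B+C)]
    have k3 : B + C = 0 := by nlinarith [sq_nonneg (A-D), sq_nonneg (B+C)]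
    refine ⟨by nlinarith, by linarith, by linarith⟩
  refine ⟨fun t => (fun i => R t i 0 : V2), fun t => t • nrm (fun i => R t i 0) + ψ t, ha, ?_, ?_, ?_⟩
  · exact ((reg_id.prod (ha.prod hrψ)).comp (g := fun p : ℝ × V2 × V2 => p.1 • nrm p.2.1 + p.2.2)
      ((continuous_fst.smul (nrm_cont.comp (continuous_fst.comp continuous_snd))).add (continuous_snd.comp continuous_snd)))
  · intro t ht
    have := (hcol t ht).1
    simp only [dt]; linarith
  · filter_upwards [hu, ae_restrict_mem rect_meas] with x hx hr
    rw [hx]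
    obtain ⟨-, c1, c2⟩ := hcol _ hr.2
    ext i
    fin_cases i
    · simp [Matrix.mulVec, dotProduct, Fin.sum_univ_two, nrm_zero, c1]; ring
    · simp [Matrix.mulVec, dotProduct, Fin.sum_univ_two, nrm_one, c2]; ring


lemma le_vnorm (v : V2) : ‖v‖ ≤ vnorm v := by
  rw [pi_norm_le_iff_of_nonneg (vnorm_nonneg v)]
  intro i
  rw [Real.norm_eq_abs]
  apply Real.abs_le_sqrt
  fin_cases i
  · simp; positivity
  · simp; positivity

lemma near_lim {u : V2 → V2} {a w : ℝ → V2} (hu : ∀ᵐ x ∂(volume.restrict Rect), u x = x 0 • a (x 1) + w (x 1))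
    {x : V2} (hx : x ∈ Rect) {S : Set ℝ} {α β : V2} (h1 : Tendsto a (𝓝[S] (x 1)) (𝓝 α)) (h2 : Tendsto w (𝓝[S] (x 1)) (𝓝 β))
    {δ : ℝ} (hδ : 0 < δ) : ∀ᶠ r in 𝓝[>] (0:ℝ), ∀ᵐ z : V2, z ∈ Metric.ball x r → z 1 ∈ S → ‖u z - (x 0 • α + β)‖ ≤ δ := by
  have hp : Tendsto (fun z : V2 => z 1) (𝓝[{z : V2 | z 1 ∈ S}] x) (𝓝[S] (x 1)) :=
    tendsto_nhdsWithin_iff.2 ⟨tendsto_nhdsWithin_of_tendsto_nhds ((continuous_apply 1).tendsto x),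
      eventually_mem_nhdsWithin⟩
  have h0 : Tendsto (fun z : V2 => z 0) (𝓝[{z : V2 | z 1 ∈ S}] x) (𝓝 (x 0)) :=
    tendsto_nhdsWithin_of_tendsto_nhds ((continuous_apply 0).tendsto x)
  have ht := (h0.smul (h1.comp hp)).add (h2.comp hp)
  have hb := ht (Metric.closedBall_mem_nhds _ hδ)
  obtain ⟨r0, hr0, hr⟩ := Metric.mem_nhdsWithin_iff.1 hb
  obtain ⟨r1, hr1, hr'⟩ := Metric.isOpen_iff.1 rect_open x hx
  filter_upwards [Ioo_mem_nhdsGT (lt_min hr0 hr1)] with r hrr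
  rw [ae_restrict_iff' rect_meas] at hu
  filter_upwards [hu] with z hz hzb hzS
  rw [hz (hr' (Metric.ball_subset_ball (hrr.2.le.trans (min_le_right _ _)) hzb))]
  have := hr ⟨Metric.ball_subset_ball (hrr.2.le.trans (min_le_left _ _)) hzb, hzS⟩
  simpa [dist_eq_norm] using this

lemma ratio_zero {u : V2 → V2} {x L : V2} {H : ℝ → Set V2} (hH : ∀ r, MeasurableSet (H r)) (hs : ∀ r, H r ⊆ Metric.ball x r)
    (h : ∀ δ : ℝ, 0 < δ → ∀ᶠ r in 𝓝[>] (0:ℝ), ∀ᵐ z : V2, z ∈ H r → ‖u z - L‖ ≤ δ) :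
    Tendsto (fun r : ℝ => (∫⁻ z in H r, ENNReal.ofReal (vnorm (u z - L))) / volume (Metric.ball x r)) (𝓝[>] 0) (𝓝 0) := by
  rw [ENNReal.tendsto_nhds_zero]
  intro e he
  obtain ⟨δ, hδ, hδe⟩ : ∃ δ : ℝ, 0 < δ ∧ ENNReal.ofReal (2 * δ) ≤ e := by
    rcases eq_or_ne e ⊤ with rfl | hne
    · exact ⟨1, one_pos, le_top⟩
    · refine ⟨e.toReal / 2, half_pos (ENNReal.toReal_pos he.ne' hne), ?_⟩
      rw [mul_div_cancel₀ _ two_ne_zero, ENNReal.ofReal_toReal hne]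
  filter_upwards [h δ hδ, self_mem_nhdsWithin] with r hr hr0
  apply ENNReal.div_le_of_le_mul
  calc ∫⁻ z in H r, ENNReal.ofReal (vnorm (u z - L)) ≤ ∫⁻ z in H r, ENNReal.ofReal (2 * δ) := by
        apply lintegral_mono_ae
        rw [ae_restrict_iff' (hH r)]
        filter_upwards [hr] with z hz hm
        apply ENNReal.ofReal_le_ofReal
        have := vnorm_le (u z - L)
        have := hz hm
        linarith
    _ = ENNReal.ofReal (2 * δ) * volume (H r) := by rw [setLIntegral_const]
    _ ≤ e * volume (Metric.ball x r) := mul_le_mul' hδe (measure_mono (hs r))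

set_option maxHeartbeats 1000000 in
lemma jlim_eq {u : V2 → V2} {x L b ν : V2} (hν : vnorm ν = 1)
    (h : ∀ δ : ℝ, 0 < δ → ∀ᶠ r in 𝓝[>] (0:ℝ), ∀ᵐ z : V2, z ∈ Metric.ball x r → ‖u z - L‖ ≤ δ)
    (ht : Tendsto (fun r : ℝ => (∫⁻ z in {z | z ∈ Metric.ball x r ∧ 0 < dot (z - x) ν}, ENNReal.ofReal (vnorm (u z - b))) / volume (Metric.ball x r)) (𝓝[>] 0) (𝓝 0)) : b = L := by
  by_contra hne
  have hc : 0 < ‖L - b‖ := norm_pos_iff.2 (sub_ne_zero.2 (Ne.symm hne))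
  set c := ‖L - b‖ / 2 with hcd
  have hcp : 0 < c := half_pos hc
  have hν2 : ν 0 ^ 2 + ν 1 ^ 2 = 1 := by
    unfold vnorm at hν
    have := Real.sq_sqrt (by positivity : (0:ℝ) ≤ ν 0 ^ 2 + ν 1 ^ 2)
    rw [hν] at this; linarith
  have hνn : ‖ν‖ ≤ 1 := hν ▸ le_vnorm ν
  have hpos : (0:ℝ≥0∞) < ENNReal.ofReal (c / 32) := by simp; positivity
  have hev := (ENNReal.tendsto_nhds_zero.1 ht) _ hpos
  have hall := hev.and ((h c hcp).and self_mem_nhdsWithin)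
  obtain ⟨r, hr1, hr2, hr3⟩ := hall.exists
  have hsub : Metric.ball (x + (r/2) • ν) (r/4) ⊆ {z | z ∈ Metric.ball x r ∧ 0 < dot (z - x) ν} := by
    intro z hz
    rw [Metric.mem_ball, dist_eq_norm] at hz
    have h0 := (norm_le_pi_norm (z - (x + (r/2) • ν)) 0).trans_lt hz
    have h1 := (norm_le_pi_norm (z - (x + (r/2) • ν)) 1).trans_lt hz
    simp only [Pi.sub_apply, Pi.add_apply, Pi.smul_apply, smul_eq_mul, Real.norm_eq_abs] at h0 h1
    refine ⟨?_, ?_⟩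
    · rw [Metric.mem_ball, dist_eq_norm]
      have e : z - x = (z - (x + (r/2) • ν)) + (r/2) • ν := by abel
      rw [e]
      have := norm_add_le (z - (x + (r/2) • ν)) ((r/2) • ν)
      rw [norm_smul, Real.norm_eq_abs, abs_of_pos (half_pos hr3)] at this
      nlinarith
    · simp only [dot, Fin.sum_univ_two, Pi.sub_apply]
      rw [abs_lt] at h0 h1
      set y0 := z 0 - (x 0 + r / 2 * ν 0)
      set y1 := z 1 - (x 1 + r / 2 * ν 1)
      have e : (z 0 - x 0) * ν 0 + (z 1 - x 1) * ν 1 = r / 2 * (ν 0 ^ 2 + ν 1 ^ 2) + (y0 * ν 0 + y1 * ν 1) := by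
        simp only [y0, y1]; ring
      rw [e, hν2]
      have k : (y0 * ν 0 + y1 * ν 1) ^ 2 ≤ y0 ^ 2 + y1 ^ 2 := by
        nlinarith [sq_nonneg (y0 * ν 1 - y1 * ν 0)]
      have k0 : y0 ^ 2 ≤ (r/4)^2 := by nlinarith
      have k1 : y1 ^ 2 ≤ (r/4)^2 := by nlinarith
      by_contra hneg
      push Not at hneg
      have : (r/2)^2 ≤ (y0 * ν 0 + y1 * ν 1) ^ 2 := by nlinarith
      nlinarith
  have hlow : ENNReal.ofReal c * volume (Metric.ball (x + (r/2) • ν) (r/4)) ≤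
      ∫⁻ z in {z | z ∈ Metric.ball x r ∧ 0 < dot (z - x) ν}, ENNReal.ofReal (vnorm (u z - b)) := by
    calc _ = ∫⁻ z in Metric.ball (x + (r/2) • ν) (r/4), ENNReal.ofReal c := by rw [setLIntegral_const]
      _ ≤ ∫⁻ z in Metric.ball (x + (r/2) • ν) (r/4), ENNReal.ofReal (vnorm (u z - b)) := by
        apply lintegral_mono_ae
        rw [ae_restrict_iff' measurableSet_ball]
        filter_upwards [hr2] with z hz hm
        apply ENNReal.ofReal_le_ofReal
        have k1 := hz (hsub hm).1
        have k2 := le_vnorm (u z - b)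
        have k3 : ‖L - b‖ ≤ ‖u z - L‖ + ‖u z - b‖ := by
          have := norm_sub_le (u z - b) (u z - L)
          have e : u z - b - (u z - L) = L - b := by abel
          rw [e] at this; linarith
        linarith
      _ ≤ _ := lintegral_mono_set hsub
  have hup : (∫⁻ z in {z | z ∈ Metric.ball x r ∧ 0 < dot (z - x) ν}, ENNReal.ofReal (vnorm (u z - b))) ≤ ENNReal.ofReal (c / 32) * volume (Metric.ball x r) := by
    have v0 : volume (Metric.ball x r) ≠ 0 := by
      rw [Real.volume_pi_ball _ hr3]; simp; positivity
    have v1 : volume (Metric.ball x r) ≠ ⊤ := by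
      rw [Real.volume_pi_ball _ hr3]; exact ENNReal.ofReal_ne_top
    exact (ENNReal.div_le_iff_le_mul (Or.inl v0) (Or.inl v1)).1 hr1
  have := hlow.trans hup
  rw [Real.volume_pi_ball _ (by positivity), Real.volume_pi_ball _ hr3, ← ENNReal.ofReal_mul hcp.le, ← ENNReal.ofReal_mul (by positivity),
    ENNReal.ofReal_le_ofReal_iff (by positivity)] at this
  simp only [Fintype.card_fin] at this
  have : 0 < c * r ^ 2 := by positivity
  nlinarith

/-- One-sided limits packaged. -/
structure Lims (a : ℝ → V2) (al ar : ℝ → V2) : Prop where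
  left : ∀ t ∈ Ioo (-1:ℝ) 1, Tendsto a (𝓝[<] t) (𝓝 (al t))
  right : ∀ t ∈ Ioo (-1:ℝ) 1, Tendsto a (𝓝[>] t) (𝓝 (ar t))

lemma Reg.lims {a : ℝ → V2} (h : Reg a) : ∃ al ar, Lims a al ar := by
  choose! l hl using h.left
  choose! r hr using h.right
  exact ⟨l, r, hl, hr⟩

lemma Lims.ae {a al ar : ℝ → V2} (h : Lims a al ar) (hr : Reg a) : ∀ᵐ t ∂(volume.restrict (Ioo (-1:ℝ) 1)), ar t = a t := by
  filter_upwards [hr.cont, ae_restrict_mem measurableSet_Ioo] with t ht hm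
  exact tendsto_nhds_unique (h.right t hm) (ht.tendsto.mono_left nhdsWithin_le_nhds)

lemma Lims.two {a al ar : ℝ → V2} (h : Lims a al ar) {t : ℝ} (ht : t ∈ Ioo (-1:ℝ) 1) (e : al t = ar t) : Tendsto a (𝓝[≠] t) (𝓝 (ar t)) := by
  rw [← Iio_union_Ioi, nhdsWithin_union]
  exact Tendsto.sup (e ▸ h.left t ht) (h.right t ht)

def DD (al ar wl wr : ℝ → V2) : Set ℝ := {t | t ∈ Ioo (-1:ℝ) 1 ∧ (al t ≠ ar t ∨ wl t ≠ wr t)}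

lemma not_jump {u : V2 → V2} {a w al ar wl wr : ℝ → V2} (ha : Lims a al ar) (hw : Lims w wl wr)
    (hu : ∀ᵐ x ∂(volume.restrict Rect), u x = x 0 • a (x 1) + w (x 1))
    {x : V2} (hx : x ∈ Rect) (hd : x 1 ∉ DD al ar wl wr) : ¬ JumpPt u x := by
  rintro ⟨p, q, ν, hpq, hν, t1, t2⟩
  have hd' : al (x 1) = ar (x 1) ∧ wl (x 1) = wr (x 1) := by
    by_contra hc
    exact hd ⟨hx.2, by tauto⟩
  have key : ∀ δ : ℝ, 0 < δ → ∀ᶠ r in 𝓝[>] (0:ℝ), ∀ᵐ z : V2, z ∈ Metric.ball x r → ‖u z - (x 0 • ar (x 1) + wr (x 1))‖ ≤ δ := by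
    intro δ hδ
    filter_upwards [near_lim hu hx (ha.two hx.2 hd'.1) (hw.two hx.2 hd'.2) hδ] with r hr
    filter_upwards [hr, null_line 0 1 (x 1) (Or.inr one_ne_zero)] with z hz hn hb
    refine hz hb ?_
    simpa using hn
  apply hpq
  rw [jlim_eq hν key t1]
  symm
  refine jlim_eq (ν := -ν) (by simpa [vnorm] using hν) key ?_
  have hs : ∀ z : V2, (0 < dot (z - x) (-ν)) = (dot (z - x) ν < 0) := by
    intro z
    simp only [dot, Fin.sum_univ_two, Pi.neg_apply, eq_iff_iff]
    constructor <;> intro h <;> linarith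
  simpa only [hs] using t2

lemma is_jump {u : V2 → V2} {a w al ar wl wr : ℝ → V2} (ha : Lims a al ar) (hw : Lims w wl wr)
    (hu : ∀ᵐ x ∂(volume.restrict Rect), u x = x 0 • a (x 1) + w (x 1))
    {x : V2} (hx : x ∈ Rect) (hd : x 0 • ar (x 1) + wr (x 1) ≠ x 0 • al (x 1) + wl (x 1)) : JumpPt u x := by
  have hm : ∀ r, MeasurableSet {z : V2 | z ∈ Metric.ball x r ∧ 0 < dot (z - x) e2} := by
    intro r
    have h1 : MeasurableSet {z : V2 | 0 < dot (z - x) e2} :=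
      measurableSet_lt measurable_const (by unfold dot; fun_prop)
    exact measurableSet_ball.inter h1
  have hm' : ∀ r, MeasurableSet {z : V2 | z ∈ Metric.ball x r ∧ dot (z - x) e2 < 0} := by
    intro r
    have h1 : MeasurableSet {z : V2 | dot (z - x) e2 < 0} :=
      measurableSet_lt (by unfold dot; fun_prop) measurable_const
    exact measurableSet_ball.inter h1
  refine ⟨_, _, e2, hd, by simp [vnorm, e2], ratio_zero hm (fun r z hz => hz.1) ?_, ratio_zero hm' (fun r z hz => hz.1) ?_⟩
  · intro δ hδ
    filter_upwards [near_lim hu hx (ha.right _ hx.2) (hw.right _ hx.2) hδ] with r hr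
    filter_upwards [hr] with z hz hb
    refine hz hb.1 ?_
    have := hb.2
    simpa [dot, e2] using this
  · intro δ hδ
    filter_upwards [near_lim hu hx (ha.left _ hx.2) (hw.left _ hx.2) hδ] with r hr
    filter_upwards [hr] with z hz hb
    refine hz hb.1 ?_
    have := hb.2
    simpa [dot, e2] using this

lemma dd_finite {u : V2 → V2} {a w al ar wl wr : ℝ → V2} (ha : Lims a al ar) (hw : Lims w wl wr)
    (hu : ∀ᵐ x ∂(volume.restrict Rect), u x = x 0 • a (x 1) + w (x 1))
    (hJ : Measure.hausdorffMeasure (1 : ℝ) (jumpSet Rect u) ≠ ⊤) : (DD al ar wl wr).Finite := by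
  have hex : ∀ t ∈ DD al ar wl wr, ∃ c : ℝ, ∀ s, s ≠ c → s • ar t + wr t ≠ s • al t + wl t := by
    intro t ht
    by_contra hcon
    push Not at hcon
    obtain ⟨s1, -, h1⟩ := hcon 0
    obtain ⟨s2, h12, h2⟩ := hcon s1
    have e : (s2 - s1) • (ar t - al t) = 0 := by
      have : (s2 - s1) • (ar t - al t) = (s2 • ar t + wr t - (s2 • al t + wl t)) - (s1 • ar t + wr t - (s1 • al t + wl t)) := by module
      rw [this, h1, h2]; simp
    have e2 : ar t = al t := by
      rcases smul_eq_zero.1 e with h | h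
      · exact absurd (sub_eq_zero.1 h) h12
      · exact sub_eq_zero.1 h
    rw [e2] at h1
    have e3 := add_left_cancel h1
    rcases ht.2 with h | h
    · exact h e2.symm
    · exact h e3.symm
  choose! c hc using hex
  set S : ℝ → Set V2 := fun t => {x | x 0 ∈ Ioo (0:ℝ) 1 \ {c t} ∧ x 1 = t} with hS
  have hSm : ∀ t, MeasurableSet (S t) := fun t =>
    ((measurableSet_Ioo.diff (measurableSet_singleton _)).preimage (measurable_pi_apply 0)).inter
      ((measurableSet_singleton t).preimage (measurable_pi_apply 1))
  have hS1 : ∀ t, 1 ≤ Measure.hausdorffMeasure (1:ℝ) (S t) := by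
    intro t
    have h1 := (LipschitzWith.eval (α := fun _ : Fin 2 => ℝ) 0).hausdorffMeasure_image_le (zero_le_one : (0:ℝ) ≤ 1) (S t)
    have h2 : Function.eval 0 '' S t = Ioo (0:ℝ) 1 \ {c t} := by
      ext s
      constructor
      · rintro ⟨x, hx, rfl⟩; exact hx.1
      · intro hs
        exact ⟨![s, t], ⟨by simpa using hs, by simp⟩, by simp⟩
    rw [h2, hausdorffMeasure_real, measure_sdiff_null (by simp), Real.volume_Ioo] at h1
    simpa using h1
  by_contra hinf
  rw [← Set.Infinite] at hinf
  obtain ⟨n, hn⟩ := ENNReal.exists_nat_gt hJ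
  obtain ⟨F, hF, hFc⟩ := hinf.exists_subset_card_eq n
  have hsub : (⋃ t ∈ F, S t) ⊆ jumpSet Rect u := by
    intro x hx
    simp only [mem_iUnion] at hx
    obtain ⟨t, htF, hx0, hx1⟩ := hx
    have htD := hF htF
    have hr : x ∈ Rect := ⟨hx0.1, by rw [hx1]; exact htD.1⟩
    refine ⟨hr, is_jump ha hw hu hr ?_⟩
    rw [hx1]
    exact hc t htD _ hx0.2
  have h3 := measure_mono (μ := Measure.hausdorffMeasure (1:ℝ)) hsub
  rw [measure_biUnion_finset ?_ (fun t _ => hSm t)] at h3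
  · have h4 : (n : ℝ≥0∞) ≤ ∑ t ∈ F, Measure.hausdorffMeasure (1:ℝ) (S t) := by
      calc (n : ℝ≥0∞) = ∑ t ∈ F, 1 := by simp [hFc]
        _ ≤ _ := Finset.sum_le_sum fun t _ => hS1 t
    exact absurd (h4.trans h3) (not_le.2 hn)
  · intro s _ t _ hst
    refine Set.disjoint_left.2 fun x hx hx' => hst ?_
    exact hx.2.symm.trans hx'.2


/-- Smooth step from `0` (left of `s`) to `1` (right of `s + h`). -/
def stp (s h x : ℝ) : ℝ := Real.smoothTransition ((x - s) / h)

lemma stp_smooth (s h : ℝ) : ContDiff ℝ (⊤ : ℕ∞) (stp s h) := by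
  unfold stp
  exact Real.smoothTransition.contDiff.comp (by fun_prop)

lemma stp_mono {s h : ℝ} (hh : 0 < h) : Monotone (stp s h) := by
  intro x y hxy
  unfold stp
  apply Real.smoothTransition.monotone
  gcongr

lemma stp_nonneg (s h x : ℝ) : 0 ≤ stp s h x := Real.smoothTransition.nonneg _
lemma stp_le (s h x : ℝ) : stp s h x ≤ 1 := Real.smoothTransition.le_one _

lemma stp_zero {s h x : ℝ} (hh : 0 < h) (hx : x ≤ s) : stp s h x = 0 :=
  Real.smoothTransition.zero_of_nonpos (div_nonpos_of_nonpos_of_nonneg (by linarith) hh.le)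

lemma stp_one {s h x : ℝ} (hh : 0 < h) (hx : s + h ≤ x) : stp s h x = 1 :=
  Real.smoothTransition.one_of_one_le ((one_le_div hh).2 (by linarith))

lemma stp_deriv_zero {s h x : ℝ} (hh : 0 < h) (hx : x ∉ Ioo s (s + h)) : deriv (stp s h) x = 0 := by
  by_cases h1 : x ≤ s
  · apply IsLocalMin.deriv_eq_zero
    exact Eventually.of_forall fun y => by rw [stp_zero hh h1]; exact stp_nonneg _ _ _
  · apply IsLocalMax.deriv_eq_zero
    refine Eventually.of_forall fun y => ?_
    rw [stp_one hh (x := x)]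
    · exact stp_le _ _ _
    · by_contra h2
      exact hx ⟨by linarith, by linarith⟩

lemma stp_deriv_nonneg {s h : ℝ} (hh : 0 < h) (x : ℝ) : 0 ≤ deriv (stp s h) x := (stp_mono hh).deriv_nonneg

lemma stp_deriv_cont (s h : ℝ) : Continuous (deriv (stp s h)) := (stp_smooth s h).continuous_deriv (by simp)

lemma stp_deriv_int {s h : ℝ} (hh : 0 < h) : ∫ x, deriv (stp s h) x = 1 := by
  rw [← setIntegral_eq_integral_of_forall_compl_eq_zero (s := Ioc s (s + h))]
  · rw [← intervalIntegral.integral_of_le (by linarith), intervalIntegral.integral_deriv_eq_sub]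
    · rw [stp_one hh le_rfl, stp_zero hh le_rfl]; simp
    · intro x _
      exact ((stp_smooth s h).differentiable (by simp)).differentiableAt
    · exact (stp_deriv_cont s h).intervalIntegrable _ _
  · intro x hx
    exact stp_deriv_zero hh fun h' => hx ⟨h'.1, h'.2.le⟩

lemma mul_intble {f g : ℝ → ℝ} (hf : Reg f) (hg : Continuous g) (hc : HasCompactSupport g) (h0 : ∀ x, x ∉ Ioo (-1:ℝ) 1 → g x = 0) :
    Integrable (fun x => f x * g x) := by
  rw [← integrableOn_iff_integrable_of_support_subset (s := Ioo (-1:ℝ) 1)]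
  · obtain ⟨C, hC⟩ := hf.bdd
    refine Integrable.bdd_mul (hg.integrable_of_hasCompactSupport hc).integrableOn hf.meas (c := C) ?_
    filter_upwards [ae_restrict_mem measurableSet_Ioo] with x hx using hC x hx
  · intro x hx
    by_contra h
    exact hx (by simp [h0 x h])

lemma stp_deriv_cs {s h : ℝ} (hh : 0 < h) : HasCompactSupport (deriv (stp s h)) := by
  refine HasCompactSupport.intro (isCompact_Icc (a := s) (b := s + h)) fun x hx => ?_
  exact stp_deriv_zero hh fun h' => hx ⟨h'.1.le, h'.2.le⟩

lemma kern {f : ℝ → ℝ} (hf : Reg f) {s h l δ : ℝ} (hh : 0 < h) (hs : -1 < s) (hs' : s + h < 1)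
    (hl : ∀ x ∈ Ioo s (s + h), |f x - l| ≤ δ) : |(∫ x, f x * deriv (stp s h) x) - l| ≤ δ := by
  have i1 : Integrable (fun x => f x * deriv (stp s h) x) :=
    mul_intble hf (stp_deriv_cont s h) (stp_deriv_cs hh) fun x hx =>
      stp_deriv_zero hh fun h' => hx ⟨by linarith [h'.1], by linarith [h'.2]⟩
  have i2 : Integrable (deriv (stp s h)) := (stp_deriv_cont s h).integrable_of_hasCompactSupport (stp_deriv_cs hh)
  have e : (∫ x, f x * deriv (stp s h) x) - l = ∫ x, (f x * deriv (stp s h) x - l * deriv (stp s h) x) := by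
    rw [integral_sub i1 (i2.const_mul l), integral_const_mul, stp_deriv_int hh, mul_one]
  rw [e, ← Real.norm_eq_abs]
  calc _ ≤ ∫ x, δ * deriv (stp s h) x := by
        refine norm_integral_le_of_norm_le (i2.const_mul δ) (Eventually.of_forall fun x => ?_)
        rw [Real.norm_eq_abs, ← sub_mul, abs_mul, abs_of_nonneg (stp_deriv_nonneg hh x)]
        by_cases hx : x ∈ Ioo s (s + h)
        · exact mul_le_mul_of_nonneg_right (hl x hx) (stp_deriv_nonneg hh x)
        · simp [stp_deriv_zero hh hx]
    _ = δ := by rw [integral_const_mul, stp_deriv_int hh, mul_one]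

lemma lip1d {f : ℝ → ℝ} (hf : Reg f) {p q C : ℝ} (hp : -1 ≤ p) (hq : q ≤ 1) (hC : 0 ≤ C)
    (H : ∀ β : ℝ → ℝ, ContDiff ℝ (⊤ : ℕ∞) β → HasCompactSupport β → tsupport β ⊆ Ioo p q →
      |∫ x, f x * deriv β x| ≤ C * ∫ x, |β x|)
    {s t fs ft : ℝ} (hs : p < s) (hst : s ≤ t) (ht : t < q) (h1 : Tendsto f (𝓝[>] s) (𝓝 fs)) (h2 : Tendsto f (𝓝[>] t) (𝓝 ft)) :
    |ft - fs| ≤ C * (t - s) := by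
  apply le_of_forall_pos_le_add
  intro e he
  set δ := e / (C + 2) with hδ
  have hδp : 0 < δ := by positivity
  have ev1 := h1 (Metric.closedBall_mem_nhds _ hδp)
  have ev2 := h2 (Metric.closedBall_mem_nhds _ hδp)
  obtain ⟨x1, hx1, hx1'⟩ := mem_nhdsGT_iff_exists_Ioo_subset.1 ev1
  obtain ⟨x2, hx2, hx2'⟩ := mem_nhdsGT_iff_exists_Ioo_subset.1 ev2
  rw [mem_Ioi] at hx1 hx2
  obtain ⟨h, hh0, hh⟩ := exists_between (show 0 < min (min (x1 - s) (x2 - t)) (min δ (q - t)) from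
    lt_min (lt_min (by linarith) (by linarith)) (lt_min hδp (by linarith)))
  simp only [lt_min_iff] at hh
  obtain ⟨⟨g1, g2⟩, g3, g4⟩ := hh
  have k1 := kern hf (l := fs) (δ := δ) hh0 (by linarith) (by linarith) (s := s) (fun x hx => by
    have := hx1' ⟨hx.1, by linarith [hx.2]⟩
    simpa [Real.dist_eq] using this)
  have k2 := kern hf (l := ft) (δ := δ) hh0 (by linarith) (by linarith) (s := t) (fun x hx => by
    have := hx2' ⟨hx.1, by linarith [hx.2]⟩
    simpa [Real.dist_eq] using this)
  have hz : ∀ x, x ∉ Icc s (t + h) → stp s h x - stp t h x = 0 := by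
    intro x hx
    by_cases hxs : x ≤ s
    · rw [stp_zero hh0 hxs, stp_zero hh0 (hxs.trans hst), sub_zero]
    · have : t + h < x := by
        by_contra hc
        exact hx ⟨by linarith, by linarith⟩
      rw [stp_one hh0 (by linarith), stp_one hh0 this.le, sub_self]
  have hcs : HasCompactSupport (fun x => stp s h x - stp t h x) :=
    HasCompactSupport.intro isCompact_Icc hz
  have hts : tsupport (fun x => stp s h x - stp t h x) ⊆ Icc s (t + h) := by
    apply closure_minimal _ isClosed_Icc
    intro x hx
    by_contra hc
    exact hx (hz x hc)
  have m := H (fun x => stp s h x - stp t h x) ((stp_smooth s h).sub (stp_smooth t h)) hcs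
    (hts.trans fun x hx => ⟨by linarith [hx.1], by linarith [hx.2]⟩)
  have hd : ∀ r, Differentiable ℝ (stp r h) := fun r => (stp_smooth r h).differentiable (by simp)
  have ed : ∀ x, deriv (fun x => stp s h x - stp t h x) x = deriv (stp s h) x - deriv (stp t h) x := fun x =>
    deriv_fun_sub (hd s x) (hd t x)
  have ii : ∀ r, -1 < r → r + h < 1 → Integrable (fun x => f x * deriv (stp r h) x) := fun r hr hr' =>
    mul_intble hf (stp_deriv_cont r h) (stp_deriv_cs hh0) fun x hx =>
      stp_deriv_zero hh0 fun h' => hx ⟨by linarith [h'.1], by linarith [h'.2]⟩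
  simp only [ed, mul_sub] at m
  rw [integral_sub (ii s (by linarith) (by linarith)) (ii t (by linarith) (by linarith))] at m
  have hb : ∫ x, |stp s h x - stp t h x| ≤ t + h - s := by
    rw [← setIntegral_eq_integral_of_forall_compl_eq_zero (s := Icc s (t + h)) (fun x hx => by rw [hz x hx, abs_zero])]
    have : ‖∫ x in Icc s (t+h), |stp s h x - stp t h x|‖ ≤ 1 * volume.real (Icc s (t+h)) := by
      apply norm_setIntegral_le_of_norm_le_const
      · simp
      · intro x _
        rw [Real.norm_eq_abs, abs_abs, abs_le]
        constructor <;> linarith [stp_nonneg s h x, stp_nonneg t h x, stp_le s h x, stp_le t h x]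
    rw [Real.volume_real_Icc_of_le (by linarith), one_mul] at this
    exact (le_abs_self _).trans this
  have m2 := m.trans (mul_le_mul_of_nonneg_left hb hC)
  have e1 : C * (t + h - s) ≤ C * (t - s) + C * δ := by nlinarith
  have e2 : C * δ + 2 * δ = e := by rw [hδ]; field_simp
  rw [abs_le] at *
  constructor <;> linarith


lemma strip_ibp {u : V2 → V2} {a w al ar wl wr : ℝ → V2} (ha : Lims a al ar) (hw : Lims w wl wr)
    (hu : ∀ᵐ x ∂(volume.restrict Rect), u x = x 0 • a (x 1) + w (x 1))
    {gu gs : V2 → Mat2} {σ : Measure V2} (H : HasBVDerivOn Rect u gu σ gs) (hJ : σ {x | ¬ JumpPt u x} = 0)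
    {p q : ℝ} (hD : ∀ t ∈ Ioo p q, t ∉ DD al ar wl wr)
    {φ : V2 → ℝ} (h1 : ContDiff ℝ (⊤ : ℕ∞) φ) (h2 : HasCompactSupport φ) (h3 : tsupport φ ⊆ Rect)
    (h4 : ∀ x ∈ tsupport φ, x 1 ∈ Ioo p q) (i j : Fin 2) :
    ∫ x in Rect, u x i * pd j φ x = - ∫ x in Rect, φ x * gu x i j := by
  rw [H.ibp φ h1 h2 h3 i j]
  have : ∫ x, φ x * gs x i j ∂σ = 0 := by
    apply integral_eq_zero_of_ae
    have hJ' : ∀ᵐ x ∂σ, JumpPt u x := hJ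
    filter_upwards [hJ'] with x hx
    by_cases hm : x ∈ tsupport φ
    · exact absurd hx (not_jump ha hw hu (h3 hm) (hD _ (h4 x hm)))
    · simp [image_eq_zero_of_notMem_tsupport hm]
  rw [this, sub_zero]

lemma entry_le (A : Mat2) (i j : Fin 2) : |A i j| ≤ mnorm A := by
  unfold mnorm
  apply Real.abs_le_sqrt
  simp only [Fin.sum_univ_two]
  fin_cases i <;> fin_cases j <;> simp <;> nlinarith [sq_nonneg (A 0 0), sq_nonneg (A 0 1), sq_nonneg (A 1 0), sq_nonneg (A 1 1)]

def tens (α β : ℝ → ℝ) (x : V2) : ℝ := α (x 0) * β (x 1)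

lemma tens_smooth {α β : ℝ → ℝ} (hα : ContDiff ℝ (⊤ : ℕ∞) α) (hβ : ContDiff ℝ (⊤ : ℕ∞) β) : ContDiff ℝ (⊤ : ℕ∞) (tens α β) :=
  (hα.comp (contDiff_apply ℝ ℝ 0)).mul (hβ.comp (contDiff_apply ℝ ℝ 1))

lemma tens_supp (α β : ℝ → ℝ) : tsupport (tens α β) ⊆ {x | x 0 ∈ tsupport α ∧ x 1 ∈ tsupport β} := by
  apply closure_minimal
  · intro x hx
    have hx' : α (x 0) * β (x 1) ≠ 0 := hx
    exact ⟨subset_tsupport _ (left_ne_zero_of_mul hx'), subset_tsupport _ (right_ne_zero_of_mul hx')⟩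
  · have c0 : Continuous fun x : V2 => x 0 := continuous_apply 0
    have c1 : Continuous fun x : V2 => x 1 := continuous_apply 1
    exact ((isClosed_tsupport α).preimage c0).inter ((isClosed_tsupport β).preimage c1)

lemma tens_cs {α β : ℝ → ℝ} (hα : HasCompactSupport α) (hβ : HasCompactSupport β) : HasCompactSupport (tens α β) := by
  have hK : IsCompact (Set.pi univ (fun i : Fin 2 => (![tsupport α, tsupport β] : Fin 2 → Set ℝ) i)) := by
    apply isCompact_univ_pi
    intro i; fin_cases i
    · exact hα
    · exact hβ
  refine HasCompactSupport.of_support_subset_isCompact hK ?_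
  intro x hx i _
  have := tens_supp α β (subset_tsupport _ hx)
  fin_cases i
  · exact this.1
  · exact this.2

lemma tens_pd {α β : ℝ → ℝ} (hα : ContDiff ℝ (⊤ : ℕ∞) α) (hβ : ContDiff ℝ (⊤ : ℕ∞) β) (x : V2) :
    pd 1 (tens α β) x = α (x 0) * deriv β (x 1) := by
  unfold pd
  rw [← (((tens_smooth hα hβ).differentiable (by simp)) x).lineDeriv_eq_fderiv]
  have : HasLineDerivAt ℝ (tens α β) (α (x 0) * deriv β (x 1)) x (Pi.single 1 1) := by
    unfold HasLineDerivAt tens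
    simp only [Pi.add_apply, Pi.smul_apply, smul_eq_mul, Pi.single_eq_same, mul_one,
      Pi.single_eq_of_ne (zero_ne_one : (0 : Fin 2) ≠ 1), mul_zero, add_zero]
    have h := (((hβ.differentiable (by simp)) (x 1)).hasDerivAt).scomp_of_eq (0:ℝ) (((hasDerivAt_id (0:ℝ)).const_add (x 1))) (by simp)
    have := h.const_mul (α (x 0))
    simpa [Function.comp_def] using this
  exact this.lineDeriv

lemma tens_int (f g : ℝ → ℝ) : ∫ x : V2, f (x 0) * g (x 1) = (∫ s, f s) * ∫ t, g t := by
  have := integral_fintype_prod_volume_eq_prod (𝕜 := ℝ) (ι := Fin 2) (E := fun _ => ℝ) ![f, g]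
  simpa [Fin.prod_univ_two] using this

lemma tens_intble {f g : ℝ → ℝ} (hf : Integrable f) (hg : Integrable g) : Integrable (fun x : V2 => f (x 0) * g (x 1)) := by
  have := Integrable.fintype_prod (𝕜 := ℝ) (ι := Fin 2) (E := ℝ) (f := ![f, g]) (μ := fun _ => volume) (by
    intro i; fin_cases i
    · exact hf
    · exact hg)
  simp [Fin.prod_univ_two] at this
  exact this

/-- the mass-one bump -/
lemma tens_test {u : V2 → V2} {a w al ar wl wr : ℝ → V2} (hra : Reg a) (hrw : Reg w) (ha : Lims a al ar) (hw : Lims w wl wr)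
    (hu : ∀ᵐ x ∂(volume.restrict Rect), u x = x 0 • a (x 1) + w (x 1))
    {gu gs : V2 → Mat2} {σ : Measure V2} (H : HasBVDerivOn Rect u gu σ gs) (hJ : σ {x | ¬ JumpPt u x} = 0)
    {M : ℝ} (hM : ∀ᵐ x ∂(volume.restrict Rect), mnorm (gu x) ≤ M)
    {p q : ℝ} (hp : -1 ≤ p) (hq : q ≤ 1) (hD : ∀ t ∈ Ioo p q, t ∉ DD al ar wl wr)
    {α β : ℝ → ℝ} (hα : ContDiff ℝ (⊤ : ℕ∞) α) (hαc : HasCompactSupport α) (hαs : tsupport α ⊆ Ioo 0 1)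
    (hβ : ContDiff ℝ (⊤ : ℕ∞) β) (hβc : HasCompactSupport β) (hβs : tsupport β ⊆ Ioo p q) (i : Fin 2) :
    |(∫ s, s * α s) * (∫ t, a t i * deriv β t) + (∫ s, α s) * (∫ t, w t i * deriv β t)| ≤ M * ((∫ s, |α s|) * ∫ t, |β t|) := by
  have hts : tsupport (tens α β) ⊆ Rect := fun x hx => by
    have := tens_supp α β hx
    have h2 := hβs this.2
    exact ⟨hαs this.1, by linarith [h2.1], by linarith [h2.2]⟩
  have e := strip_ibp ha hw hu H hJ hD (tens_smooth hα hβ) (tens_cs hαc hβc) hts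
    (fun x hx => hβs (tens_supp α β hx).2) i 1
  have hα' := hα.continuous.integrable_of_hasCompactSupport hαc (μ := volume)
  have hβ' := hβ.continuous.integrable_of_hasCompactSupport hβc (μ := volume)
  have hdz : ∀ x, x ∉ Ioo (-1:ℝ) 1 → deriv β x = 0 := by
    intro x hx
    have : x ∉ tsupport β := fun h => hx ⟨by linarith [(hβs h).1], by linarith [(hβs h).2]⟩
    exact image_eq_zero_of_notMem_tsupport fun h => this (tsupport_deriv_subset h)
  have hdc : Continuous (deriv β) := hβ.continuous_deriv (by simp)
  have ia := mul_intble (hra.comp (continuous_apply i)) hdc hβc.deriv hdz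
  have iw := mul_intble (hrw.comp (continuous_apply i)) hdc hβc.deriv hdz
  have isα : Integrable (fun s => s * α s) :=
    (continuous_id.mul hα.continuous).integrable_of_hasCompactSupport (hαc.mul_left)
  have e1 : ∫ x in Rect, u x i * pd 1 (tens α β) x =
      (∫ s, s * α s) * (∫ t, a t i * deriv β t) + (∫ s, α s) * (∫ t, w t i * deriv β t) := by
    rw [← tens_int, ← tens_int, ← integral_add (tens_intble isα ia) (tens_intble hα' iw)]
    refine Eq.trans ?_ (setIntegral_eq_integral_of_forall_compl_eq_zero (s := Rect) ?_)
    · apply integral_congr_ae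
      filter_upwards [hu] with x hx
      rw [hx, tens_pd hα hβ]
      simp only [Pi.add_apply, Pi.smul_apply, smul_eq_mul]
      ring
    · intro x hx
      have h := pd_supp (φ := tens α β) 1 (fun h => hx (hts h))
      rw [tens_pd hα hβ] at h
      linear_combination (x 0 * a (x 1) i + w (x 1) i) * h
  rw [e1] at e
  rw [e, abs_neg, ← Real.norm_eq_abs, ← tens_int, ← integral_const_mul]
  have hIntg : Integrable (fun x : V2 => M * (|α (x 0)| * |β (x 1)|)) := (tens_intble hα'.abs hβ'.abs).const_mul M
  calc _ ≤ ∫ x in Rect, M * (|α (x 0)| * |β (x 1)|) := by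
        refine norm_integral_le_of_norm_le hIntg.integrableOn ?_
        filter_upwards [hM] with x hx
        rw [Real.norm_eq_abs, abs_mul, tens, abs_mul, mul_comm]
        exact mul_le_mul_of_nonneg_right ((entry_le _ _ _).trans hx) (by positivity)
    _ = ∫ x : V2, M * (|α (x 0)| * |β (x 1)|) := by
        apply setIntegral_eq_integral_of_forall_compl_eq_zero
        intro x hx
        have h : α (x 0) * β (x 1) = 0 := image_eq_zero_of_notMem_tsupport (f := tens α β) (fun h => hx (hts h))
        rw [← abs_mul, h, abs_zero, mul_zero]

lemma lip_strip {u : V2 → V2} {a w al ar wl wr : ℝ → V2} (hra : Reg a) (hrw : Reg w) (ha : Lims a al ar) (hw : Lims w wl wr)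
    (hu : ∀ᵐ x ∂(volume.restrict Rect), u x = x 0 • a (x 1) + w (x 1))
    {gu gs : V2 → Mat2} {σ : Measure V2} (H : HasBVDerivOn Rect u gu σ gs) (hJ : σ {x | ¬ JumpPt u x} = 0)
    {M : ℝ} (hM0 : 0 ≤ M) (hM : ∀ᵐ x ∂(volume.restrict Rect), mnorm (gu x) ≤ M)
    {p q : ℝ} (hp : -1 ≤ p) (hq : q ≤ 1) (hD : ∀ t ∈ Ioo p q, t ∉ DD al ar wl wr)
    {s t : ℝ} (hs : p < s) (hst : s ≤ t) (ht : t < q) (i : Fin 2) :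
    |ar t i - ar s i| ≤ 7 * M * (t - s) ∧ |wr t i - wr s i| ≤ 7 * M * (t - s) := by
  have bump : ∀ r : ℝ, 0 < r → r + 1/8 < 1 → ∀ β : ℝ → ℝ, ContDiff ℝ (⊤ : ℕ∞) β → HasCompactSupport β → tsupport β ⊆ Ioo p q →
      ∃ m, r ≤ m ∧ m ≤ r + 1/8 ∧ |m * (∫ t, a t i * deriv β t) + ∫ t, w t i * deriv β t| ≤ M * ∫ t, |β t| := by
    intro r hr hr1 β h1 h2 h3
    have hh : (0:ℝ) < 1/8 := by norm_num
    set α := deriv (stp r (1/8)) with hα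
    have hz : ∀ x, x ∉ Icc r (r + 1/8) → α x = 0 := fun x hx => stp_deriv_zero hh fun h' => hx ⟨h'.1.le, h'.2.le⟩
    have hsm : ContDiff ℝ (⊤ : ℕ∞) α := (contDiff_infty_iff_deriv.1 (stp_smooth r (1/8))).2
    have hcs : HasCompactSupport α := stp_deriv_cs hh
    have hts : tsupport α ⊆ Icc r (r + 1/8) := by
      apply closure_minimal _ isClosed_Icc
      intro x hx
      by_contra hc
      exact hx (hz x hc)
    have T := tens_test hra hrw ha hw hu H hJ hM hp hq hD hsm hcs (hts.trans fun x hx => ⟨by linarith [hx.1], by linarith [hx.2]⟩) h1 h2 h3 i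
    have eabs : ∀ s, |α s| = α s := fun s => abs_of_nonneg (stp_deriv_nonneg hh s)
    simp only [eabs] at T
    rw [hα, stp_deriv_int hh, ← hα, one_mul, one_mul] at T
    have iα : Integrable α := hsm.continuous.integrable_of_hasCompactSupport hcs
    have isα : Integrable (fun s => s * α s) :=
      (continuous_id.mul hsm.continuous).integrable_of_hasCompactSupport (hcs.mul_left)
    refine ⟨_, ?_, ?_, T⟩
    · have : ∫ s, r * α s ≤ ∫ s, s * α s := by
        apply integral_mono (iα.const_mul r) isα
        intro s
        by_cases hs : s ∈ Icc r (r + 1/8)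
        · exact mul_le_mul_of_nonneg_right hs.1 (stp_deriv_nonneg hh s)
        · simp [hz s hs]
      rwa [integral_const_mul, hα, stp_deriv_int hh, mul_one] at this
    · have : ∫ s, s * α s ≤ ∫ s, (r + 1/8) * α s := by
        apply integral_mono isα (iα.const_mul _)
        intro s
        by_cases hs : s ∈ Icc r (r + 1/8)
        · exact mul_le_mul_of_nonneg_right hs.2 (stp_deriv_nonneg hh s)
        · simp [hz s hs]
      rwa [integral_const_mul, hα, stp_deriv_int hh, mul_one] at this
  have both : ∀ β : ℝ → ℝ, ContDiff ℝ (⊤ : ℕ∞) β → HasCompactSupport β → tsupport β ⊆ Ioo p q →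
      |∫ t, a t i * deriv β t| ≤ 7 * M * ∫ t, |β t| ∧ |∫ t, w t i * deriv β t| ≤ 7 * M * ∫ t, |β t| := by
    intro β h1 h2 h3
    obtain ⟨m1, k1, k2, k3⟩ := bump (1/8) (by norm_num) (by norm_num) β h1 h2 h3
    obtain ⟨m2, l1, l2, l3⟩ := bump (5/8) (by norm_num) (by norm_num) β h1 h2 h3
    set A := ∫ t, a t i * deriv β t
    set W := ∫ t, w t i * deriv β t
    have hI : 0 ≤ ∫ t, |β t| := integral_nonneg fun t => abs_nonneg _
    set I := M * ∫ t, |β t| with hId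
    have hI' : 0 ≤ I := mul_nonneg hM0 hI
    have e7 : 7 * M * ∫ t, |β t| = 7 * I := by rw [hId]; ring
    rw [e7]
    have hA : |A| ≤ 6 * I := by
      have : |(m2 - m1) * A| ≤ 2 * I := by
        rw [abs_le] at *
        constructor <;> nlinarith
      rw [abs_mul, abs_of_pos (by linarith)] at this
      have : 3/8 * |A| ≤ (m2 - m1) * |A| := mul_le_mul_of_nonneg_right (by linarith) (abs_nonneg _)
      linarith
    refine ⟨by linarith, ?_⟩
    have h5 : |m1 * A| ≤ 6 * I := by
      rw [abs_mul, abs_of_pos (by linarith)]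
      have : m1 * |A| ≤ 1 * |A| := mul_le_mul_of_nonneg_right (by linarith) (abs_nonneg _)
      linarith
    have : W = (m1 * A + W) - m1 * A := by ring
    rw [this]
    exact (abs_sub _ _).trans (by linarith)
  constructor
  · exact lip1d (hra.comp (continuous_apply i)) hp hq (by positivity) (fun β h1 h2 h3 => (both β h1 h2 h3).1) hs hst ht
      (((continuous_apply i).tendsto _).comp (ha.right s ⟨by linarith, by linarith⟩))
      (((continuous_apply i).tendsto _).comp (ha.right t ⟨by linarith, by linarith⟩))
  · exact lip1d (hrw.comp (continuous_apply i)) hp hq (by positivity) (fun β h1 h2 h3 => (both β h1 h2 h3).2) hs hst ht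
      (((continuous_apply i).tendsto _).comp (hw.right s ⟨by linarith, by linarith⟩))
      (((continuous_apply i).tendsto _).comp (hw.right t ⟨by linarith, by linarith⟩))


lemma uniq_sing {U : Set V2} (hU : IsOpen U) {f g : V2 → ℝ} {σ : Measure V2} (hσ : σ ⟂ₘ (volume : Measure V2))
    (hf : IntegrableOn f Rect) (hg : Integrable g σ) (hUR : U ⊆ Rect)
    (h : ∀ φ : V2 → ℝ, ContDiff ℝ (⊤ : ℕ∞) φ → HasCompactSupport φ → tsupport φ ⊆ U →
      ∫ x in Rect, φ x * f x = ∫ x, φ x * g x ∂σ) : ∀ᵐ x : V2, x ∈ U → f x = 0 := by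
  classical
  obtain ⟨N, hN, h1, h2⟩ := hσ
  set k : V2 → ℝ := fun x => if x ∈ N then f x else - g x with hk
  have a1 : ∀ᵐ x ∂(volume.restrict Rect), f x = k x := by
    apply ae_restrict_of_ae
    have : ∀ᵐ x : V2, x ∈ N := h2
    filter_upwards [this] with x hx
    simp [hk, hx]
  have a2 : ∀ᵐ x ∂σ, - g x = k x := by
    have : ∀ᵐ x ∂σ, x ∉ N := measure_eq_zero_iff_ae_notMem.1 h1
    filter_upwards [this] with x hx
    simp [hk, hx]
  have i1 : Integrable k (volume.restrict Rect) := hf.congr a1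
  have i2 : Integrable k σ := hg.neg.congr a2
  have i3 : Integrable k (volume.restrict Rect + σ) := i1.add_measure i2
  have key := hU.ae_eq_zero_of_integral_contDiff_smul_eq_zero (f := k) (μ := volume.restrict Rect + σ)
    (i3.locallyIntegrable.locallyIntegrableOn U) (fun φ c1 c2 c3 => by
      obtain ⟨C, hC⟩ := c2.exists_bound_of_continuous c1.continuous
      have j1 : ∀ μ : Measure V2, Integrable k μ → Integrable (fun x => φ x * k x) μ := fun μ hμ =>
        hμ.bdd_mul c1.continuous.aestronglyMeasurable (Eventually.of_forall hC)
      simp only [smul_eq_mul]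
      rw [integral_add_measure (j1 _ i1) (j1 _ i2)]
      have e1 : ∫ x in Rect, φ x * k x = ∫ x in Rect, φ x * f x := by
        apply integral_congr_ae
        filter_upwards [a1] with x hx
        rw [hx]
      have e2 : ∫ x, φ x * k x ∂σ = - ∫ x, φ x * g x ∂σ := by
        rw [← integral_neg]
        apply integral_congr_ae
        filter_upwards [a2] with x hx
        rw [← hx]; ring
      rw [e1, e2, h φ c1 c2 c3]; ring)
  have key2 := (ae_add_measure_iff.1 key).1
  rw [ae_restrict_iff' rect_meas] at key2
  rw [ae_restrict_iff' rect_meas] at a1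
  filter_upwards [key2, a1] with x hx hx' hU'
  rw [hx' (hUR hU'), hx (hUR hU') hU']

lemma lip_const {f : ℝ → ℝ} {C : NNReal} (hf : LipschitzWith C f) (s t : ℝ) :
    IntervalIntegrable (deriv f) volume s t ∧ ∫ x in s..t, deriv f x = f t - f s := by
  have := (hf.lipschitzOnWith (s := uIcc s t)).absolutelyContinuousOnInterval
  exact ⟨this.intervalIntegrable_deriv, this.integral_deriv_eq_sub⟩

lemma ae_coord {P : ℝ → Prop} (h : ∀ᵐ t : ℝ, P t) (i : Fin 2) : ∀ᵐ x : V2, P (x i) :=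
  (Measure.quasiMeasurePreserving_eval (fun _ : Fin 2 => (volume : Measure ℝ)) i).ae h

lemma slice {P : ℝ → ℝ → Prop} (h : ∀ᵐ x : V2, P (x 0) (x 1)) : ∀ᵐ s : ℝ, ∀ᵐ t : ℝ, P s t := by
  have h1 := (volume_preserving_finTwoArrow ℝ).symm.quasiMeasurePreserving.ae h
  have h2 := Measure.ae_ae_of_ae_prod h1
  simpa using h2

/-- two-slice trick -/
lemma slice_two {p q : ℝ} {c d : ℝ → ℝ} (h : ∀ᵐ x : V2, x 0 ∈ Ioo (0:ℝ) 1 → x 1 ∈ Ioo p q → x 0 * c (x 1) + d (x 1) = 1) :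
    ∀ᵐ t : ℝ, t ∈ Ioo p q → c t = 0 ∧ d t = 1 := by
  have h1 := slice (P := fun s t => s ∈ Ioo (0:ℝ) 1 → t ∈ Ioo p q → s * c t + d t = 1) h
  have pick : ∀ l r : ℝ, l < r → ∃ s ∈ Ioo l r, ∀ᵐ t : ℝ, s ∈ Ioo (0:ℝ) 1 → t ∈ Ioo p q → s * c t + d t = 1 := by
    intro l r hlr
    by_contra hc
    have hz : volume (Ioo l r) = 0 := by
      refine measure_mono_null (fun s hs => ?_) (ae_iff.1 h1)
      exact fun hh => hc ⟨s, hs, hh⟩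
    rw [Real.volume_Ioo] at hz
    simp at hz
    linarith
  obtain ⟨s1, m1, t1⟩ := pick 0 (1/2) (by norm_num)
  obtain ⟨s2, m2, t2⟩ := pick (1/2) 1 (by norm_num)
  filter_upwards [t1, t2] with t e1 e2 ht
  have e1 := e1 ⟨m1.1, by linarith [m1.2]⟩ ht
  have e2 := e2 ⟨by linarith [m2.1], m2.2⟩ ht
  have hne : s2 - s1 ≠ 0 := by have := m1.2; have := m2.1; intro h; linarith
  have hc : c t = 0 := by
    have : (s2 - s1) * c t = 0 := by linarith
    exact (mul_eq_zero.1 this).resolve_left hne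
  rw [hc] at e1
  exact ⟨hc, by linarith⟩

/-- The gradient on a regular strip. -/
lemma grad_strip {u : V2 → V2} {a w : ℝ → V2}
    {gu gs : V2 → Mat2} {σ : Measure V2} (H : HasBVDerivOn Rect u gu σ gs)
    {p q : ℝ} (hp : -1 ≤ p) (hq : q ≤ 1) {A W : ℝ → ℝ} {C : NNReal} {B : ℝ} (hA : LipschitzWith C A) (hW : LipschitzWith C W) (hB : ∀ t ∈ Ioo p q, |A t| ≤ B) (i : Fin 2)
    (hu : ∀ᵐ x : V2, x ∈ Rect → x 1 ∈ Ioo p q → u x i = x 0 * A (x 1) + W (x 1)) :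
    ∀ᵐ x : V2, x ∈ Rect → x 1 ∈ Ioo p q → gu x i 0 = A (x 1) ∧ gu x i 1 = x 0 * deriv A (x 1) + deriv W (x 1) := by
  set U : Set V2 := {x | x ∈ Rect ∧ x 1 ∈ Ioo p q} with hUd
  have c1 : Continuous fun x : V2 => x 1 := continuous_apply 1
  have hU : IsOpen U := rect_open.inter (isOpen_Ioo.preimage c1)
  have hUR : U ⊆ Rect := fun x hx => hx.1
  have hLo : LipschitzOnWith (Real.toNNReal (|B| + 2 * C)) (fun x : V2 => x 0 * A (x 1) + W (x 1)) U := by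
    apply LipschitzOnWith.of_dist_le_mul
    intro x hx y hy
    have d0 : |x 0 - y 0| ≤ dist x y := dist_le_pi_dist x y 0
    have d1 : |x 1 - y 1| ≤ dist x y := dist_le_pi_dist x y 1
    have eA := hA.dist_le_mul (x 1) (y 1)
    have eW := hW.dist_le_mul (x 1) (y 1)
    rw [Real.dist_eq, Real.dist_eq] at eA eW
    rw [Real.dist_eq, Real.coe_toNNReal _ (by positivity)]
    have e : x 0 * A (x 1) + W (x 1) - (y 0 * A (y 1) + W (y 1)) = (x 0 - y 0) * A (x 1) + y 0 * (A (x 1) - A (y 1)) + (W (x 1) - W (y 1)) := by ring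
    rw [e]
    have hC : (0:ℝ) ≤ C := C.2
    have hd : 0 ≤ dist x y := dist_nonneg
    have f1 : |(x 0 - y 0) * A (x 1)| ≤ dist x y * |B| := by
      rw [abs_mul]
      exact mul_le_mul d0 ((hB _ hx.2).trans (le_abs_self _)) (abs_nonneg _) hd
    have f2 : |y 0 * (A (x 1) - A (y 1))| ≤ 1 * (C * dist x y) := by
      rw [abs_mul]
      refine mul_le_mul ?_ (eA.trans (mul_le_mul_of_nonneg_left d1 hC)) (abs_nonneg _) zero_le_one
      rw [abs_of_pos hy.1.1.1]; exact hy.1.1.2.le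
    have f3 : |W (x 1) - W (y 1)| ≤ C * dist x y := eW.trans (mul_le_mul_of_nonneg_left d1 hC)
    have := abs_add_three ((x 0 - y 0) * A (x 1)) (y 0 * (A (x 1) - A (y 1))) (W (x 1) - W (y 1))
    linarith
  obtain ⟨G, hG, hGe⟩ := hLo.extend_real
  have key : ∀ j, ∀ᵐ x : V2, x ∈ U → gu x i j - lineDeriv ℝ G x (Pi.single j 1) = 0 := by
    intro j
    have hbd : ∀ x, |lineDeriv ℝ G x (Pi.single j 1)| ≤ (Real.toNNReal (|B| + 2 * C) : ℝ) * ‖(Pi.single j 1 : V2)‖ := fun x =>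
      norm_lineDeriv_le_of_lipschitz ℝ hG
    have hme : Measurable (fun x => lineDeriv ℝ G x (Pi.single j 1)) := measurable_lineDeriv hG.continuous
    have hLint : IntegrableOn (fun x => lineDeriv ℝ G x (Pi.single j 1)) Rect :=
      Integrable.of_bound hme.aestronglyMeasurable _ (Eventually.of_forall hbd)
    refine uniq_sing hU (g := fun x => - gs x i j) H.perp ((H.int_gu i j).sub hLint) (gs_int H i j).neg hUR ?_
    intro φ k1 k2 k3
    have e1 := H.ibp φ k1 k2 (k3.trans hUR) i j
    have e2 := lip_ibp hG k1 k2 j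
    have e3 : ∫ x in Rect, u x i * pd j φ x = ∫ x, G x * pd j φ x := by
      rw [← setInt_pd (k3.trans hUR) G j]
      apply integral_congr_ae
      apply ae_restrict_of_ae
      filter_upwards [hu] with x hx
      by_cases hm : x ∈ tsupport φ
      · have hxU := k3 hm
        rw [hx hxU.1 hxU.2, ← hGe hxU]
      · rw [pd_supp j hm, mul_zero, mul_zero]
    rw [e3, e2, ← setInt_eq (k3.trans hUR)] at e1
    obtain ⟨K, hK⟩ := k2.exists_bound_of_continuous k1.continuous
    have j1 : ∀ f : V2 → ℝ, IntegrableOn f Rect → IntegrableOn (fun x => φ x * f x) Rect := fun f hf =>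
        Integrable.bdd_mul hf k1.continuous.aestronglyMeasurable (Eventually.of_forall hK)
    simp only [mul_sub, mul_neg]
    rw [integral_sub (j1 _ (H.int_gu i j)) (j1 _ hLint), integral_neg]
    linarith
  have dA := ae_coord hA.ae_differentiableAt_real 1
  have dW := ae_coord hW.ae_differentiableAt_real 1
  filter_upwards [key 0, key 1, dA, dW] with x x0 x1 hdA hdW hr hpq
  have hxU : x ∈ U := ⟨hr, hpq⟩
  have x0 := sub_eq_zero.1 (x0 hxU)
  have x1 := sub_eq_zero.1 (x1 hxU)
  have hev : G =ᶠ[𝓝 x] fun x : V2 => x 0 * A (x 1) + W (x 1) := by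
    filter_upwards [hU.mem_nhds hxU] with y hy using (hGe hy).symm
  rw [hev.lineDeriv_eq] at x0 x1
  have l0 : HasLineDerivAt ℝ (fun x : V2 => x 0 * A (x 1) + W (x 1)) (A (x 1)) x (Pi.single 0 1) := by
    unfold HasLineDerivAt
    simp only [Pi.add_apply, Pi.smul_apply, smul_eq_mul, Pi.single_eq_same, mul_one,
      Pi.single_eq_of_ne (one_ne_zero : (1 : Fin 2) ≠ 0), mul_zero, add_zero]
    have := (((hasDerivAt_id (0:ℝ)).const_add (x 0)).mul_const (A (x 1))).add_const (W (x 1))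
    simpa using this
  have l1 : HasLineDerivAt ℝ (fun x : V2 => x 0 * A (x 1) + W (x 1)) (x 0 * deriv A (x 1) + deriv W (x 1)) x (Pi.single 1 1) := by
    unfold HasLineDerivAt
    simp only [Pi.add_apply, Pi.smul_apply, smul_eq_mul, Pi.single_eq_same, mul_one,
      Pi.single_eq_of_ne (zero_ne_one : (0 : Fin 2) ≠ 1), mul_zero, add_zero]
    have hi := (hasDerivAt_id (0:ℝ)).const_add (x 1)
    have h1 := (hdA.hasDerivAt.scomp_of_eq (0:ℝ) hi (by simp)).const_mul (x 0)
    have h2 := (hdW.hasDerivAt.scomp_of_eq (0:ℝ) hi (by simp))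
    have h3 := h1.fun_add h2
    simpa [Function.comp_def] using h3
  rw [x0, x1]
  exact ⟨l0.lineDeriv, l1.lineDeriv⟩

lemma rigid_strip {u : V2 → V2} {a w ar wr : ℝ → V2}
    (hu : ∀ᵐ x ∂(volume.restrict Rect), u x = x 0 • a (x 1) + w (x 1))
    (har : ∀ᵐ t ∂(volume.restrict (Ioo (-1:ℝ) 1)), ar t = a t) (hwr : ∀ᵐ t ∂(volume.restrict (Ioo (-1:ℝ) 1)), wr t = w t)
    (hunit : ∀ t ∈ Ioo (-1:ℝ) 1, dt (ar t) (ar t) = 1)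
    {gu gs : V2 → Mat2} {σ : Measure V2} (H : HasBVDerivOn Rect u gu σ gs)
    (hdet : ∀ᵐ x ∂(volume.restrict Rect), (gu x).det = 1)
    {p q L : ℝ} (hp : -1 ≤ p) (hq : q ≤ 1) (hL : 0 ≤ L)
    (hlip : ∀ s t, p < s → s ≤ t → t < q → ∀ i, |ar t i - ar s i| ≤ L * (t - s) ∧ |wr t i - wr s i| ≤ L * (t - s))
    {s t : ℝ} (hs : p < s) (hst : s ≤ t) (ht : t < q) : ar s = ar t ∧ crs (ar s) (wr t - wr s) = t - s := by
  have hlo : ∀ i, LipschitzOnWith L.toNNReal (fun t => ar t i) (Ioo p q) ∧ LipschitzOnWith L.toNNReal (fun t => wr t i) (Ioo p q) := by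
    intro i
    constructor
    · apply LipschitzOnWith.of_le_add_mul
      intro x hx y hy
      rw [Real.coe_toNNReal _ hL, Real.dist_eq]
      rcases le_total x y with h | h
      · have := (hlip x y hx.1 h hy.2 i).1
        rw [abs_sub_comm x y, abs_of_nonneg (by linarith : 0 ≤ y - x)]
        linarith [neg_abs_le (ar y i - ar x i)]
      · have := (hlip y x hy.1 h hx.2 i).1
        rw [abs_of_nonneg (by linarith : 0 ≤ x - y)]
        linarith [le_abs_self (ar x i - ar y i)]
    · apply LipschitzOnWith.of_le_add_mul
      intro x hx y hy
      rw [Real.coe_toNNReal _ hL, Real.dist_eq]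
      rcases le_total x y with h | h
      · have := (hlip x y hx.1 h hy.2 i).2
        rw [abs_sub_comm x y, abs_of_nonneg (by linarith : 0 ≤ y - x)]
        linarith [neg_abs_le (wr y i - wr x i)]
      · have := (hlip y x hy.1 h hx.2 i).2
        rw [abs_of_nonneg (by linarith : 0 ≤ x - y)]
        linarith [le_abs_self (wr x i - wr y i)]
  choose A hA hAe using fun i => (hlo i).1.extend_real
  choose W hW hWe using fun i => (hlo i).2.extend_real
  have hin : ∀ t ∈ Ioo p q, t ∈ Ioo (-1:ℝ) 1 := fun t ht => ⟨by linarith [ht.1], by linarith [ht.2]⟩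
  rw [ae_restrict_iff' measurableSet_Ioo] at har hwr
  rw [ae_restrict_iff' rect_meas] at hu hdet
  have hun : ∀ t ∈ Ioo p q, A 0 t * A 0 t + A 1 t * A 1 t = 1 := by
    intro t ht
    have := hunit t (hin t ht)
    rw [← hAe 0 ht, ← hAe 1 ht]
    exact this
  have hg : ∀ i, ∀ᵐ x : V2, x ∈ Rect → x 1 ∈ Ioo p q → gu x i 0 = A i (x 1) ∧ gu x i 1 = x 0 * deriv (A i) (x 1) + deriv (W i) (x 1) := by
    intro i
    refine grad_strip (a := a) (w := w) H hp hq (B := 1) (hA i) (hW i) ?_ i ?_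
    · intro t ht
      have h1 := hun t ht
      fin_cases i
      · exact (sq_le_one_iff_abs_le_one _).1 (show A 0 t ^ 2 ≤ 1 by nlinarith [sq_nonneg (A 1 t)])
      · exact (sq_le_one_iff_abs_le_one _).1 (show A 1 t ^ 2 ≤ 1 by nlinarith [sq_nonneg (A 0 t)])
    · filter_upwards [hu, ae_coord har 1, ae_coord hwr 1] with x hx h1 h2 hr hpq
      rw [hx hr, ← h1 hr.2, ← h2 hr.2, ← hAe i hpq, ← hWe i hpq]
      simp
  have hsl := slice_two (p := p) (q := q) (c := fun t => A 0 t * deriv (A 1) t - A 1 t * deriv (A 0) t)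
    (d := fun t => A 0 t * deriv (W 1) t - A 1 t * deriv (W 0) t) (by
      filter_upwards [hg 0, hg 1, hdet] with x g0 g1 hd h0 h1
      have hr : x ∈ Rect := ⟨h0, hin _ h1⟩
      obtain ⟨g00, g01⟩ := g0 hr h1
      obtain ⟨g10, g11⟩ := g1 hr h1
      have := hd hr
      rw [Matrix.det_fin_two, g00, g01, g10, g11] at this
      linarith)
  have hz : ∀ᵐ t : ℝ, t ∈ Ioo p q → (∀ i, deriv (A i) t = 0) ∧ A 0 t * deriv (W 1) t - A 1 t * deriv (W 0) t = 1 := by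
    filter_upwards [hsl, (hA 0).ae_differentiableAt_real, (hA 1).ae_differentiableAt_real] with t h1 d0 d1 htm
    obtain ⟨c0, e0⟩ := h1 htm
    refine ⟨?_, e0⟩
    have hd := (d0.hasDerivAt.mul d0.hasDerivAt).add (d1.hasDerivAt.mul d1.hasDerivAt)
    have hc : HasDerivAt (fun _ : ℝ => (1:ℝ)) 0 t := hasDerivAt_const t 1
    have hc' := hc.congr_of_eventuallyEq (f₁ := A 0 * A 0 + A 1 * A 1) (by
      filter_upwards [Ioo_mem_nhds htm.1 htm.2] with y hy
      exact hun y hy)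
    have e1 := hd.unique hc'
    have e2 := hun t htm
    set X := A 0 t
    set Y := A 1 t
    set X' := deriv (A 0) t
    set Y' := deriv (A 1) t
    have r0 : X' = 0 := by linear_combination -X' * e2 + X / 2 * e1 - Y * c0
    have r1 : Y' = 0 := by linear_combination -Y' * e2 + Y / 2 * e1 + X * c0
    intro i
    fin_cases i
    · exact r0
    · exact r1
  have hmem : ∀ x ∈ uIoc s t, x ∈ Ioo p q := by
    intro x hx
    rw [uIoc_of_le hst] at hx
    exact ⟨by linarith [hx.1], by linarith [hx.2]⟩
  have hsm : s ∈ Ioo p q := ⟨hs, by linarith⟩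
  have htm : t ∈ Ioo p q := ⟨by linarith, ht⟩
  have hAc : ∀ t, p < t → t < q → s ≤ t → ∀ i, A i t = A i s := by
    intro t h1 h2 h3 i
    have e := (lip_const (hA i) s t).2
    rw [intervalIntegral.integral_zero_ae] at e
    · linarith
    · filter_upwards [hz] with x hx hm
      rw [uIoc_of_le h3] at hm
      exact (hx ⟨by linarith [hm.1], by linarith [hm.2]⟩).1 i
  have hae : ar s = ar t := by
    ext i
    rw [show ar s i = A i s from hAe i hsm, show ar t i = A i t from hAe i htm, hAc t htm.1 htm.2 hst i]
  refine ⟨hae, ?_⟩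
  obtain ⟨i0, e0⟩ := lip_const (hW 0) s t
  obtain ⟨i1, e1⟩ := lip_const (hW 1) s t
  have e : ∫ x in s..t, (A 0 s * deriv (W 1) x - A 1 s * deriv (W 0) x) = ∫ x in s..t, (1:ℝ) := by
    apply intervalIntegral.integral_congr_ae
    filter_upwards [hz] with x hx hm
    have h1 := (hx (hmem x hm)).2
    rw [uIoc_of_le hst] at hm
    have hxm : x < q := by linarith [hm.2]
    rw [hAc x (by linarith [hm.1]) hxm hm.1.le 0, hAc x (by linarith [hm.1]) hxm hm.1.le 1] at h1
    exact h1
  rw [intervalIntegral.integral_sub (i1.const_mul _) (i0.const_mul _), intervalIntegral.integral_const_mul, intervalIntegral.integral_const_mul,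
    e0, e1, intervalIntegral.integral_const] at e
  unfold crs
  simp only [Pi.sub_apply]
  rw [show ar s 0 = A 0 s from hAe 0 hsm, show ar s 1 = A 1 s from hAe 1 hsm, show wr t 0 = W 0 t from hWe 0 htm, show wr t 1 = W 1 t from hWe 1 htm,
    show wr s 0 = W 0 s from hWe 0 hsm, show wr s 1 = W 1 s from hWe 1 hsm, e]
  simp

lemma gap_ex {F : Set ℝ} (hF : F.Finite) {s t : ℝ} (hs : s ∈ Ioo (-1:ℝ) 1) (ht : t ∈ Ioo (-1:ℝ) 1)
    (h : ∀ d ∈ F, d ∉ Icc s t) (hst : s ≤ t) : ∃ p q : ℝ, -1 ≤ p ∧ q ≤ 1 ∧ p < s ∧ t < q ∧ ∀ d ∈ Ioo p q, d ∉ F := by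
  have ho : IsOpen Fᶜ := hF.isClosed.isOpen_compl
  have h1 : Fᶜ ∈ 𝓝 s := ho.mem_nhds fun hm => h s hm ⟨le_rfl, hst⟩
  have h2 : Fᶜ ∈ 𝓝 t := ho.mem_nhds fun hm => h t hm ⟨hst, le_rfl⟩
  obtain ⟨l1, r1, m1, i1⟩ := mem_nhds_iff_exists_Ioo_subset.1 h1
  obtain ⟨l2, r2, m2, i2⟩ := mem_nhds_iff_exists_Ioo_subset.1 h2
  refine ⟨max l1 (-1), min r2 1, le_max_right _ _, min_le_right _ _, max_lt m1.1 hs.1, lt_min m2.2 ht.2, ?_⟩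
  intro d hd hdF
  have a1 : l1 < d := lt_of_le_of_lt (le_max_left _ _) hd.1
  have a2 : d < r2 := lt_of_lt_of_le hd.2 (min_le_left _ _)
  rcases lt_or_ge d s with c | c
  · exact i1 ⟨a1, c.trans m1.2⟩ hdF
  · rcases le_or_gt d t with c2 | c2
    · exact h d hdF ⟨c, c2⟩
    · exact i2 ⟨m2.1.trans c2, a2⟩ hdF

/-- Counting function of a finite set. -/
def cnt (F : Finset ℝ) (t : ℝ) : ℝ := ((F.filter fun d => d ≤ t).card : ℝ) + ((F.filter fun d => d < t).card : ℝ)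

lemma cnt_mono (F : Finset ℝ) : Monotone (cnt F) := by
  intro s t hst
  unfold cnt
  have h1 : (F.filter fun d => d ≤ s).card ≤ (F.filter fun d => d ≤ t).card :=
    Finset.card_le_card fun d hd => by
      rw [Finset.mem_filter] at hd ⊢
      exact ⟨hd.1, hd.2.trans hst⟩
  have h2 : (F.filter fun d => d < s).card ≤ (F.filter fun d => d < t).card :=
    Finset.card_le_card fun d hd => by
      rw [Finset.mem_filter] at hd ⊢
      exact ⟨hd.1, hd.2.trans_le hst⟩
  exact_mod_cast add_le_add h1 h2

lemma cnt_nonneg (F : Finset ℝ) (t : ℝ) : 0 ≤ cnt F t := by unfold cnt; positivity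

lemma cnt_le (F : Finset ℝ) (t : ℝ) : cnt F t ≤ 2 * F.card := by
  unfold cnt
  have h1 : ((F.filter fun d => d ≤ t).card : ℝ) ≤ F.card := by exact_mod_cast Finset.card_filter_le _ _
  have h2 : ((F.filter fun d => d < t).card : ℝ) ≤ F.card := by exact_mod_cast Finset.card_filter_le _ _
  linarith

lemma cnt_jump (F : Finset ℝ) {s t d : ℝ} (hst : s < t) (hd : d ∈ F) (h1 : s ≤ d) (h2 : d ≤ t) : 1 ≤ cnt F t - cnt F s := by
  have g1 : (F.filter fun d => d ≤ s).card ≤ (F.filter fun d => d ≤ t).card :=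
    Finset.card_le_card fun d hd => by
      rw [Finset.mem_filter] at hd ⊢
      exact ⟨hd.1, hd.2.trans hst.le⟩
  have g2 : (F.filter fun d => d < s).card ≤ (F.filter fun d => d < t).card :=
    Finset.card_le_card fun d hd => by
      rw [Finset.mem_filter] at hd ⊢
      exact ⟨hd.1, hd.2.trans hst⟩
  have key : (F.filter fun d => d ≤ s).card + (F.filter fun d => d < s).card + 1 ≤ (F.filter fun d => d ≤ t).card + (F.filter fun d => d < t).card := by
    rcases h1.lt_or_eq with c | c
    · have : (F.filter fun d => d ≤ s).card < (F.filter fun d => d ≤ t).card := by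
        apply Finset.card_lt_card
        rw [Finset.ssubset_iff_of_subset]
        · exact ⟨d, Finset.mem_filter.2 ⟨hd, h2⟩, fun h => absurd (Finset.mem_filter.1 h).2 (not_le.2 c)⟩
        · intro d hd
          rw [Finset.mem_filter] at hd ⊢
          exact ⟨hd.1, hd.2.trans hst.le⟩
      omega
    · have : (F.filter fun d => d < s).card < (F.filter fun d => d < t).card := by
        apply Finset.card_lt_card
        rw [Finset.ssubset_iff_of_subset]
        · exact ⟨d, Finset.mem_filter.2 ⟨hd, by rw [← c]; exact hst⟩, fun h => absurd (Finset.mem_filter.1 h).2 (not_lt.2 h1)⟩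
        · intro d hd
          rw [Finset.mem_filter] at hd ⊢
          exact ⟨hd.1, hd.2.trans hst⟩
      omega
  unfold cnt
  have : (((F.filter fun d => d ≤ s).card + (F.filter fun d => d < s).card + 1 : ℕ) : ℝ) ≤ (((F.filter fun d => d ≤ t).card + (F.filter fun d => d < t).card : ℕ) : ℝ) := by exact_mod_cast key
  push_cast at this
  linarith

lemma ev_right {t : ℝ} (ht : t ∈ Ioo (-1:ℝ) 1) : ∀ᶠ s in 𝓝[>] t, s ∈ Ioo (-1:ℝ) 1 :=
  nhdsWithin_le_nhds (Ioo_mem_nhds ht.1 ht.2)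

theorem main_thm
    (lam : ℝ) (hlam : lam ∈ Ioo (0:ℝ) 1)
    (ε : ℕ → ℝ) (hεpos : ∀ n, 0 < ε n) (hε0 : Tendsto ε atTop (𝓝 0))
    (u : V2 → V2)
    (huA : memAOn Rect (-1) 1 u) (huS : memSBVinf Rect u) :
    ∃ un : ℕ → V2 → V2, ∃ Rn : ℕ → V2 → Mat2, ∃ γn : ℕ → V2 → ℝ,
      (∀ n, MemAeps Rect lam (ε n) (un n) (Rn n) (γn n)) ∧
      (∀ n, (∫ x in Rect, un n x) = ∫ x in Rect, u x) ∧
      WeakStarToBV Rect un u := by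
  obtain ⟨gu1, σ1, gs1, H1, ⟨R, ψ, hR, hBR, hBψ, hu0⟩, hdet⟩ := huA
  obtain ⟨gu, σ, gs, H, hJ0, ⟨M0, hM0⟩, hJ⟩ := huS
  obtain ⟨a, w, hra, hrw, hunit, hu⟩ := reduce hR hBR hBψ hu0
  obtain ⟨al, ar, ha⟩ := hra.lims
  obtain ⟨wl, wr, hw⟩ := hrw.lims
  have hF := dd_finite ha hw hu hJ
  set M := |M0| with hMd
  have hMn : 0 ≤ M := abs_nonneg _
  have hM : ∀ᵐ x ∂(volume.restrict Rect), mnorm (gu x) ≤ M := by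
    filter_upwards [hM0] with x hx using hx.trans (le_abs_self _)
  set L := 7 * M with hLd
  have hL : 0 ≤ L := by positivity
  have hun : ∀ t ∈ Ioo (-1:ℝ) 1, dt (ar t) (ar t) = 1 := by
    intro t ht
    have h1 : Tendsto (fun s => dt (a s) (a s)) (𝓝[>] t) (𝓝 (dt (ar t) (ar t))) :=
      (dt_cont.tendsto (ar t)).comp (ha.right t ht)
    refine tendsto_nhds_unique h1 (tendsto_const_nhds.congr' ?_)
    filter_upwards [ev_right ht] with s hs using (hunit s hs).symm
  obtain ⟨C, hC⟩ := hrw.bdd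
  have hwb : ∀ t ∈ Ioo (-1:ℝ) 1, ‖wr t‖ ≤ C := by
    intro t ht
    refine le_of_tendsto (hw.right t ht).norm ?_
    filter_upwards [ev_right ht] with s hs using hC s hs
  have har := ha.ae hra
  have hwr := hw.ae hrw
  set F := hF.toFinset with hFd
  have hpsi : ∀ t ∈ Ioo (-1:ℝ) 1, ‖wr t - t • nrm (ar t)‖ ≤ C + 1 := by
    intro t ht
    have h1 : ‖t • nrm (ar t)‖ ≤ 1 := by
      rw [norm_smul, Real.norm_eq_abs]
      have e1 : |t| ≤ 1 := abs_le.2 ⟨ht.1.le, ht.2.le⟩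
      have e2 := (nrm_norm (ar t)).trans (unit_norm (hun t ht))
      exact mul_le_one₀ e1 (norm_nonneg _) e2
    exact (norm_sub_le _ _).trans (add_le_add (hwb t ht) h1)
  have D : DatOn ar (fun t => wr t - t • nrm (ar t)) (fun t => (L + 1) * t + cnt F t) (max (C + 1) (2 * (L + 1) + 2 * F.card)) := by
    refine ⟨?_, ?_, ?_, hun, ?_⟩
    · intro s t hst
      have := cnt_mono F hst
      have : (L + 1) * s ≤ (L + 1) * t := by gcongr
      simp only
      linarith
    · intro s hs t ht
      refine le_trans ?_ (le_max_right _ _)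
      have h1 := cnt_nonneg F s
      have h2 := cnt_le F t
      have h3 : (L + 1) * (t - s) ≤ (L + 1) * 2 := by
        apply mul_le_mul_of_nonneg_left _ (by linarith)
        linarith [hs.1, ht.2]
      linarith
    · intro t ht
      exact (hpsi t ht).trans (le_max_left _ _)
    · intro s hs t ht hst
      rcases hst.eq_or_lt with e | hlt
      · subst e
        left
        simp [crs]
      by_cases hd : ∃ d ∈ DD al ar wl wr, d ∈ Icc s t
      · right
        obtain ⟨d, hdD, hdI⟩ := hd
        have := cnt_jump F hlt (hF.mem_toFinset.2 hdD) hdI.1 hdI.2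
        have : (L + 1) * s ≤ (L + 1) * t := by gcongr
        linarith
      · left
        push Not at hd
        obtain ⟨p, q, hp, hq, hps, htq, hpq⟩ := gap_ex hF hs ht hd hst
        have hlip : ∀ s t, p < s → s ≤ t → t < q → ∀ i, |ar t i - ar s i| ≤ L * (t - s) ∧ |wr t i - wr s i| ≤ L * (t - s) :=
          fun s t h1 h2 h3 i => lip_strip hra hrw ha hw hu H hJ0 hMn hM hp hq hpq h1 h2 h3 i
        obtain ⟨e1, e2⟩ := rigid_strip hu har hwr hun H1 hdet hp hq hL hlip hps hst htq
        have hl := fun i => (hlip s t hps hst htq i).2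
        have hc := hun s hs
        have e : wr t - t • nrm (ar t) - (wr s - s • nrm (ar s)) = (wr t - wr s) - (t - s) • nrm (ar s) := by
          rw [← e1, sub_smul]; abel
        refine ⟨e1, ?_, ?_⟩
        · rw [e]
          unfold crs at e2 ⊢
          unfold dt at hc
          simp only [Pi.sub_apply, Pi.smul_apply, smul_eq_mul, nrm_zero, nrm_one] at e2 ⊢
          linear_combination e2 - (t - s) * hc
        · rw [e]
          have n1 : ‖wr t - wr s‖ ≤ L * (t - s) :=
            (pi_norm_le_iff_of_nonneg (mul_nonneg hL (by linarith))).2 fun i => hl i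
          have n2 : ‖(t - s) • nrm (ar s)‖ ≤ t - s := by
            rw [norm_smul, Real.norm_eq_abs, abs_of_nonneg (by linarith)]
            exact mul_le_of_le_one_right (by linarith) ((nrm_norm (ar s)).trans (unit_norm hc))
          have n3 := cnt_mono F hst
          have n4 := norm_sub_le (wr t - wr s) ((t - s) • nrm (ar s))
          linarith
  refine final_of_dat lam hlam ε hεpos hε0 u H1 D ?_
  rw [ae_restrict_iff' measurableSet_Ioo] at har hwr
  rw [ae_restrict_iff' rect_meas] at hu ⊢
  filter_upwards [hu, ae_coord har 1, ae_coord hwr 1] with x hx h1 h2 hr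
  rw [hx hr, ← h1 hr.2, ← h2 hr.2]
  abel

/-- Proposition 4.4: approximation of maps in `A ∩ SBV_∞(Ω;ℝ²)` on
`Ω = (0,1) × (−1,1)`: for every `u ∈ A ∩ SBV_∞(Ω;ℝ²)` there is a sequence `u_ε ∈ A_ε` with
`∫_Ω u_ε = ∫_Ω u` and `u_ε ⇀* u` in `BV(Ω;ℝ²)`. -/
theorem approx_SBVinf_Rect
    (lam : ℝ) (hlam : lam ∈ Ioo (0:ℝ) 1)
    (ε : ℕ → ℝ) (hεpos : ∀ n, 0 < ε n) (hε0 : Tendsto ε atTop (𝓝 0))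
    (u : V2 → V2)
    (huA : memAOn Rect (-1) 1 u) (huS : memSBVinf Rect u) :
    ∃ un : ℕ → V2 → V2, ∃ Rn : ℕ → V2 → Mat2, ∃ γn : ℕ → V2 → ℝ,
      (∀ n, MemAeps Rect lam (ε n) (un n) (Rn n) (γn n)) ∧
      (∀ n, (∫ x in Rect, un n x) = ∫ x in Rect, u x) ∧
      WeakStarToBV Rect un u := by
  exact main_thm lam hlam ε hεpos hε0 u huA huS
end
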